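/- Let G and G' be two finitely generated virtually free groups. Then there exists a finite subset F of G \ {1} such that for every non-injective group homomorphism φ : G → G', there exists an automorphism σ of G with ker(φ ∘ σ) ∩ F ≠ ∅, i.e. there exists f ∈ F with φ(σ(f)) = 1. -/

import Mathlib

open FirstOrder Language

/-- Function symbols of the first-order language of groups:
a binary multiplication, a unary inverse and a constant for the identity. -/
inductive GroupFunc : ℕ → Type
  | mul : GroupFunc 2
  | inv : GroupFunc 1
  | one : GroupFunc 0

/-- The first-order language of groups. -/
def groupLang : FirstOrder.Language :=
  { Functions := GroupFunc
    Relations := fun _ => Empty }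

/-- Every group is a structure for the language of groups in the natural way. -/
instance groupLangStructure (G : Type*) [Group G] : groupLang.Structure G where
  funMap {n} f v :=
    match f with
    | .mul => v 0 * v 1
    | .inv => (v 0)⁻¹
    | .one => 1
  RelMap {n} r _ := r.elim

/-- Existential formulas: iterated existential quantifications of a
quantifier-free formula. -/
inductive IsExistentialQF {α : Type*} : ∀ {n : ℕ}, groupLang.BoundedFormula α n → Prop
  | of_isQF {n : ℕ} {φ : groupLang.BoundedFormula α n} (h : φ.IsQF) : IsExistentialQF φ
  | ex {n : ℕ} {φ : groupLang.BoundedFormula α (n + 1)} (h : IsExistentialQF φ) :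
      IsExistentialQF φ.ex

/-- Universal formulas: iterated universal quantifications of a
quantifier-free formula. -/
inductive IsUniversalQF {α : Type*} : ∀ {n : ℕ}, groupLang.BoundedFormula α n → Prop
  | of_isQF {n : ℕ} {φ : groupLang.BoundedFormula α n} (h : φ.IsQF) : IsUniversalQF φ
  | all {n : ℕ} {φ : groupLang.BoundedFormula α (n + 1)} (h : IsUniversalQF φ) :
      IsUniversalQF φ.all

/-- ∀∃-formulas: iterated universal quantifications of an existential formula. -/
inductive IsAE {α : Type*} : ∀ {n : ℕ}, groupLang.BoundedFormula α n → Prop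
  | of_existential {n : ℕ} {φ : groupLang.BoundedFormula α n} (h : IsExistentialQF φ) : IsAE φ
  | all {n : ℕ} {φ : groupLang.BoundedFormula α (n + 1)} (h : IsAE φ) : IsAE φ.all

/-- A group is virtually free if it has a free subgroup of finite index. -/
def VirtuallyFree (G : Type*) [Group G] : Prop :=
  ∃ H : Subgroup G, H.FiniteIndex ∧ Nonempty (IsFreeGroup H)

/-- A group is co-Hopfian if every injective endomorphism is surjective. -/
def CoHopfian (G : Type*) [Group G] : Prop :=
  ∀ φ : G →* G, Function.Injective φ → Function.Surjective φ

/-- Two homomorphisms `φ, φ' : G → G'` are equivalent if they coincide up to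
conjugation on every finite subgroup of `G`. -/
def HomEquiv {G G' : Type*} [Group G] [Group G'] (φ φ' : G →* G') : Prop :=
  ∀ H : Subgroup G, (H : Set G).Finite →
    ∃ g' : G', ∀ h ∈ H, φ' h = g' * φ h * g'⁻¹

/-- Two groups are ∀∃-equivalent if they satisfy the same ∀∃-sentences. -/
def AEEquivalent (G : Type*) (G' : Type*) [Group G] [Group G'] : Prop :=
  ∀ φ : groupLang.Sentence, IsAE φ → (G ⊨ φ ↔ G' ⊨ φ)

/-- Two groups are ∃-equivalent if they satisfy the same existential sentences. -/
def ExistentiallyEquivalent (G : Type*) (G' : Type*) [Group G] [Group G'] : Prop :=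
  ∀ φ : groupLang.Sentence, IsExistentialQF φ → (G ⊨ φ ↔ G' ⊨ φ)

/-- An endomorphism is rigid-testing: `G` is rigid if every endomorphism
equivalent to the identity is an automorphism. -/
def Rigid (G : Type*) [Group G] : Prop :=
  ∀ φ : G →* G, HomEquiv φ (MonoidHom.id G) → Function.Bijective φ

/-- `Out G` is finite, expressed as: the inner automorphisms form a finite index
subgroup of `Aut G`. -/
def OutFinite (G : Type*) [Group G] : Prop :=
  (MulAut.conj : G →* MulAut G).range.FiniteIndex

/-- Iterated composition of an endomorphism. -/
def homPow {G : Type*} [Group G] (φ : G →* G) : ℕ → (G →* G)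
  | 0 => MonoidHom.id G
  | n + 1 => φ.comp (homPow φ n)

/-- An endomorphism `φ` of `G` is class-permuting if some positive power of `φ`
is equivalent to the identity of `G`. -/
def ClassPermuting {G : Type*} [Group G] (φ : G →* G) : Prop :=
  ∃ n : ℕ, 1 ≤ n ∧ HomEquiv (homPow φ n) (MonoidHom.id G)

/-- A maximal finite subgroup: a finite subgroup maximal with respect to
inclusion among finite subgroups. -/
def MaximalFiniteSubgroup {G : Type*} [Group G] (A : Subgroup G) : Prop :=
  (A : Set G).Finite ∧ ∀ B : Subgroup G, (B : Set G).Finite → A ≤ B → A = B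

/-- Two subgroups are conjugate. -/
def SubgroupConj {G : Type*} [Group G] (A B : Subgroup G) : Prop :=
  ∃ g : G, B = A.map (MulAut.conj g).toMonoidHom

/-- A group is strongly co-Hopfian if there is a finite subset `F` of
`G \ {1}` such that every endomorphism whose kernel misses `F` is an
automorphism. -/
def StronglyCoHopfian (G : Type*) [Group G] : Prop :=
  ∃ F : Finset G, (1 : G) ∉ F ∧
    ∀ φ : G →* G, (∀ f ∈ F, φ f ≠ 1) → Function.Bijective φ

/-- A group is finitely presented. -/
def GroupFinitelyPresented (G : Type*) [Group G] : Prop :=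
  ∃ (n : ℕ) (rels : Finset (FreeGroup (Fin n))),
    Nonempty (PresentedGroup (rels : Set (FreeGroup (Fin n))) ≃* G)

namespace VF
open SimpleGraph

universe u v

section tree
variable {V : Type*} {Γ : SimpleGraph V}

theorem dist_adj_cases (hT : Γ.IsTree) (y : V) {x w : V} (h : Γ.Adj x w) :
    Γ.dist w y = Γ.dist x y + 1 ∨ Γ.dist x y = Γ.dist w y + 1 := by
  have := hT.dist_eq_dist_add_one_of_adj y h
  rw [Γ.dist_comm (u := w), Γ.dist_comm (u := x)]
  tauto

theorem exists_step (hc : Γ.Connected) {x y : V} (h : x ≠ y) :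
    ∃ t, Γ.Adj x t ∧ Γ.dist x y = Γ.dist t y + 1 := by
  obtain ⟨p, hp⟩ := hc.exists_walk_length_eq_dist x y
  cases p with
  | nil => exact absurd rfl h
  | @cons _ t _ hadj q =>
    refine ⟨t, hadj, ?_⟩
    have h1 := dist_le q
    have h2 : Γ.dist x y ≤ Γ.dist x t + Γ.dist t y := hc.dist_triangle
    rw [dist_eq_one_iff_adj.2 hadj] at h2
    simp at hp
    omega

theorem step_unique (hT : Γ.IsTree) {x y t t' : V} (h : Γ.Adj x t)
    (hd : Γ.dist x y = Γ.dist t y + 1) (h' : Γ.Adj x t')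
    (hd' : Γ.dist x y = Γ.dist t' y + 1) : t = t' := by
  obtain ⟨p, hp⟩ := hT.1.exists_walk_length_eq_dist t y
  obtain ⟨p', hp'⟩ := hT.1.exists_walk_length_eq_dist t' y
  have a1 : (Walk.cons h p).IsPath := Walk.isPath_of_length_eq_dist _ (by simp [hp, hd])
  have a2 : (Walk.cons h' p').IsPath := Walk.isPath_of_length_eq_dist _ (by simp [hp', hd'])
  have := (hT.2.subsingleton_path _ _).elim ⟨_, a1⟩ ⟨_, a2⟩
  simp at this
  exact this.1

open Classical in
/-- The neighbour of `x` in direction of `y` (and `x` itself if `x = y`). -/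
noncomputable def step (Γ : SimpleGraph V) (x y : V) : V :=
  if h : ∃ t, Γ.Adj x t ∧ Γ.dist x y = Γ.dist t y + 1 then h.choose else x

theorem step_adj (hc : Γ.Connected) {x y : V} (h : x ≠ y) : Γ.Adj x (step Γ x y) := by
  have := exists_step hc h
  unfold step; rw [dif_pos this]; exact this.choose_spec.1

theorem step_dist (hc : Γ.Connected) {x y : V} (h : x ≠ y) :
    Γ.dist x y = Γ.dist (step Γ x y) y + 1 := by
  have := exists_step hc h
  unfold step; rw [dif_pos this]; exact this.choose_spec.2

theorem eq_step (hT : Γ.IsTree) {x y t : V} (h : Γ.Adj x t)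
    (hd : Γ.dist x y = Γ.dist t y + 1) : t = step Γ x y := by
  have hne : x ≠ y := by rintro rfl; simp at hd
  exact step_unique hT h hd (step_adj hT.1 hne) (step_dist hT.1 hne)

theorem step_self (x : V) : step Γ x x = x := by
  unfold step; rw [dif_neg]; rintro ⟨t, _, h⟩; simp at h

theorem step_of_adj (hT : Γ.IsTree) {x y : V} (h : Γ.Adj x y) : step Γ x y = y := by
  refine (eq_step hT h ?_).symm
  simp [dist_eq_one_iff_adj.2 h]

theorem dist_of_ne_step (hT : Γ.IsTree) {x y w : V} (h : Γ.Adj x w) (hw : w ≠ step Γ x y) :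
    Γ.dist w y = Γ.dist x y + 1 := by
  rcases dist_adj_cases hT y h with h1 | h1
  · exact h1
  · exact absurd (eq_step hT h h1) hw

/-- moving the target along an edge away from `x` does not change the direction -/
theorem step_eq_of_adj (hT : Γ.IsTree) {x a b : V} (hab : Γ.Adj a b) (ha : a ≠ x) (hb : b ≠ x) :
    step Γ x a = step Γ x b := by
  wlog h : Γ.dist b x = Γ.dist a x + 1 generalizing a b
  · rcases dist_adj_cases hT x hab with h1 | h1
    · exact absurd h1 h
    · exact (this hab.symm hb ha h1).symm
  apply eq_step hT (step_adj hT.1 ha.symm)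
  have h1 := step_dist hT.1 ha.symm
  have h2 : Γ.dist (step Γ x a) b ≤ Γ.dist (step Γ x a) a + Γ.dist a b := hT.1.dist_triangle
  rw [dist_eq_one_iff_adj.2 hab] at h2
  rcases dist_adj_cases hT b (step_adj hT.1 ha.symm) with h3 | h3
  · rw [Γ.dist_comm (u := b), Γ.dist_comm (u := a)] at h; omega
  · exact h3

/-- The half-tree of vertices closer to `x` than to `y`. -/
def half (Γ : SimpleGraph V) (x y : V) : Set V := {z | Γ.dist z x < Γ.dist z y}

theorem left_mem_half {x y : V} (h : Γ.Adj x y) : x ∈ half Γ x y := by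
  simp [half, dist_eq_one_iff_adj.2 h]

theorem right_notMem_half {x y : V} : y ∉ half Γ x y := by
  simp [half]

theorem half_cut (hT : Γ.IsTree) {x y a b : V} (h : Γ.Adj x y) (hab : Γ.Adj a b)
    (ha : a ∈ half Γ x y) (hb : b ∉ half Γ x y) : a = x ∧ b = y := by
  simp only [half, Set.mem_ofPred_eq, not_lt] at ha hb
  have e1 := dist_adj_cases hT x hab
  have e2 := dist_adj_cases hT y hab
  have e3 := dist_adj_cases hT a h
  have e4 := dist_adj_cases hT b h
  rw [Γ.dist_comm (u := y), Γ.dist_comm (u := x)] at e3 e4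
  have f1 : Γ.dist b x = Γ.dist a x + 1 := by omega
  have f2 : Γ.dist a y = Γ.dist b y + 1 := by omega
  have f3 : Γ.dist a y = Γ.dist a x + 1 := by omega
  have hax : a = x := by
    by_contra hne
    have g1 := step_adj hT.1 hne
    have g2 := step_dist hT.1 hne
    have g3 : Γ.dist a y = Γ.dist (step Γ a x) y + 1 := by
      have := dist_adj_cases hT y g1
      have k : Γ.dist (step Γ a x) y ≤ Γ.dist (step Γ a x) x + Γ.dist x y := hT.1.dist_triangle
      rw [dist_eq_one_iff_adj.2 h] at k
      omega
    have := step_unique hT g1 g3 hab f2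
    rw [this] at g2
    omega
  subst hax
  refine ⟨rfl, ?_⟩
  rw [dist_eq_one_iff_adj.2 h] at f2
  exact hT.1.dist_eq_zero_iff.1 (by omega)

theorem isTree_of_cuts (hc : Γ.Connected)
    (h : ∀ x y, Γ.Adj x y → ∃ H : Set V, x ∈ H ∧ y ∉ H ∧
      ∀ a b, Γ.Adj a b → a ∈ H → b ∉ H → a = x ∧ b = y) : Γ.IsTree := by
  refine ⟨hc, isAcyclic_iff_forall_adj_isBridge.2 ?_⟩
  intro x y hxy
  rw [isBridge_iff_forall_walk_mem_edges]
  intro p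
  obtain ⟨H, hx, hy, hH⟩ := h x y hxy
  obtain ⟨d, hd, h1, h2⟩ := p.exists_boundary_dart H hx hy
  obtain ⟨h3, h4⟩ := hH _ _ d.adj h1 h2
  rw [Walk.edges]
  refine List.mem_map.2 ⟨d, hd, ?_⟩
  rw [← h3, ← h4]; rfl

/-- If the geodesic from `a` to `y` crosses the edge `x t`. -/
theorem dist_across (hT : Γ.IsTree) {x t a y : V} (h : Γ.Adj x t) (ha : a ∈ half Γ x t)
    (hy : y ∉ half Γ x t) : Γ.dist a y = Γ.dist a x + 1 + Γ.dist t y := by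
  classical
  obtain ⟨p, hp⟩ := hT.1.exists_walk_length_eq_dist a y
  obtain ⟨d, hd, h1, h2⟩ := p.exists_boundary_dart _ ha hy
  obtain ⟨h3, h4⟩ := half_cut hT h d.adj h1 h2
  have hx : x ∈ p.support := h3 ▸ p.dart_fst_mem_support_of_mem_darts hd
  have k := congrArg Walk.length (p.take_spec hx)
  rw [Walk.length_append] at k
  have k1 := dist_le (p.takeUntil x hx)
  have k2 := dist_le (p.dropUntil x hx)
  have k3 : Γ.dist a y ≤ Γ.dist a x + Γ.dist x y := hT.1.dist_triangle
  have k4 := dist_adj_cases hT y h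
  simp only [half, Set.mem_ofPred_eq, not_lt] at hy
  rw [Γ.dist_comm (u := y), Γ.dist_comm (u := y)] at hy
  omega

theorem dist_increase (hT : Γ.IsTree) {x t a y : V} (h : Γ.Adj x t)
    (hy : Γ.dist x y = Γ.dist t y + 1) (ha : Γ.dist t a = Γ.dist x a + 1) :
    Γ.dist a y = Γ.dist a x + Γ.dist x y := by
  have := dist_across hT h (a := a) (y := y)
    (by simp only [half, Set.mem_ofPred_eq]; rw [Γ.dist_comm (u := a), Γ.dist_comm (u := a)]; omega)
    (by simp only [half, Set.mem_ofPred_eq]; rw [Γ.dist_comm (u := y), Γ.dist_comm (u := y)]; omega)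
  omega

/-- Tree property of a contraction. -/
theorem isTree_contract {W : Type*} (hT : Γ.IsTree) (r : V → W) (hr : Function.Surjective r)
    (Δ : SimpleGraph W)
    (hΔ : ∀ a b, Δ.Adj a b ↔ a ≠ b ∧ ∃ x y, r x = a ∧ r y = b ∧ Γ.Adj x y)
    (hfib : ∀ x y, r x = r y → ∃ p : Γ.Walk x y, ∀ d ∈ p.darts, r d.fst = r d.snd) :
    Δ.IsTree ∧ (∀ x y x' y', Γ.Adj x y → Γ.Adj x' y' → r x ≠ r y → r x = r x' → r y = r y' →
      x = x' ∧ y = y') := by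
  have sat : ∀ x y, Γ.Adj x y → r x ≠ r y → ∀ a b, r a = r b → a ∈ half Γ x y →
      b ∈ half Γ x y := by
    intro x y hxy hne a b hab ha
    by_contra hb
    obtain ⟨p, hp⟩ := hfib a b hab
    obtain ⟨d, hd, h1, h2⟩ := p.exists_boundary_dart _ ha hb
    obtain ⟨h3, h4⟩ := half_cut hT hxy d.adj h1 h2
    have := hp d hd
    rw [h3, h4] at this
    exact hne this
  have uniq : ∀ x y x' y', Γ.Adj x y → Γ.Adj x' y' → r x ≠ r y → r x = r x' → r y = r y' →
      x = x' ∧ y = y' := by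
    intro x y x' y' h h' hne h1 h2
    have := half_cut hT h h' (sat x y h hne x x' h1 (left_mem_half h))
      (fun hh => right_notMem_half (sat x y h hne y' y h2.symm hh))
    exact ⟨this.1.symm, this.2.symm⟩
  refine ⟨isTree_of_cuts ?_ ?_, uniq⟩
  · have : Nonempty W := hT.1.nonempty.map r
    refine ⟨fun a b => ?_⟩
    obtain ⟨x, rfl⟩ := hr a
    obtain ⟨y, rfl⟩ := hr b
    obtain ⟨p⟩ := hT.1 x y
    induction p with
    | nil => exact Reachable.refl _
    | @cons u v w h p ih =>
      refine Reachable.trans ?_ ih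
      by_cases hh : r u = r v
      · rw [hh]
      · exact Adj.reachable ((hΔ _ _).2 ⟨hh, _, _, rfl, rfl, h⟩)
  · intro a b hab
    obtain ⟨hne, x, y, rfl, rfl, hxy⟩ := (hΔ _ _).1 hab
    refine ⟨{w | ∀ z, r z = w → z ∈ half Γ x y}, ?_, ?_, ?_⟩
    · intro z hz
      exact sat x y hxy hne x z hz.symm (left_mem_half hxy)
    · intro hh
      exact right_notMem_half (hh y rfl)
    · intro a b hab ha hb
      obtain ⟨_, x', y', rfl, rfl, hxy'⟩ := (hΔ _ _).1 hab
      have h1 : x' ∈ half Γ x y := ha _ rfl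
      have h2 : y' ∉ half Γ x y := by
        intro hy
        exact hb (fun z hz => sat x y hxy hne y' z hz.symm hy)
      have := half_cut hT hxy hxy' h1 h2
      exact ⟨congrArg r this.1, congrArg r this.2⟩

/-- Vertices of the blow-up. -/
def BV {T : Type*} (Γ : SimpleGraph V) (f : V → T) (te : V → V → T) : Set (V × T) :=
  {p | p.2 = f p.1 ∨ ∃ w, Γ.Adj p.1 w ∧ te p.1 w = p.2}

/-- The blow-up graph. -/
def BG {T : Type*} (Γ : SimpleGraph V) (f : V → T) (te : V → V → T) : SimpleGraph (BV Γ f te) where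
  Adj p q := (p.1.1 = q.1.1 ∧ p.1.2 ≠ q.1.2 ∧ (p.1.2 = f p.1.1 ∨ q.1.2 = f p.1.1)) ∨
    (Γ.Adj p.1.1 q.1.1 ∧ p.1.2 = te p.1.1 q.1.1 ∧ q.1.2 = te q.1.1 p.1.1)
  symm := ⟨by
    rintro p q (⟨h1, h2, h3⟩ | ⟨h1, h2, h3⟩)
    · left; exact ⟨h1.symm, h2.symm, by rw [← h1]; tauto⟩
    · right; exact ⟨h1.symm, h3, h2⟩⟩
  loopless := ⟨by
    rintro p (⟨h1, h2, h3⟩ | ⟨h1, h2, h3⟩)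
    · exact h2 rfl
    · exact Γ.loopless.irrefl _ h1⟩

theorem isTree_blowup {T : Type*} (hT : Γ.IsTree) (f : V → T) (te : V → V → T) :
    (BG Γ f te).IsTree := by
  set B := BG Γ f te with hB
  have star : ∀ v t (h : (v, t) ∈ BV Γ f te), B.Reachable ⟨(v, f v), Or.inl rfl⟩ ⟨(v, t), h⟩ := by
    intro v t h
    by_cases e : t = f v
    · subst e; exact Reachable.refl _
    · exact Adj.reachable (Or.inl ⟨rfl, Ne.symm e, Or.inl rfl⟩)
  have cut1 : ∀ v t (hv : (v, f v) ∈ BV Γ f te) (ht : (v, t) ∈ BV Γ f te), t ≠ f v →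
      ∃ H : Set (BV Γ f te), (⟨(v, t), ht⟩ : BV Γ f te) ∈ H ∧ (⟨(v, f v), hv⟩ : BV Γ f te) ∉ H ∧
      ∀ a b, B.Adj a b → (a ∈ H ↔ b ∉ H) →
        (a = ⟨(v, t), ht⟩ ∧ b = ⟨(v, f v), hv⟩) ∨ (b = ⟨(v, t), ht⟩ ∧ a = ⟨(v, f v), hv⟩) := by
    intro v t hv ht hne
    refine ⟨{b | b = ⟨(v, t), ht⟩ ∨ (b.1.1 ≠ v ∧ te v (step Γ v b.1.1) = t)}, Or.inl rfl, ?_, ?_⟩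
    · rintro (h | h)
      · exact hne (by simpa using congrArg (fun b => b.1.2) h.symm)
      · exact h.1 rfl
    · rintro ⟨⟨a, s⟩, hs⟩ ⟨⟨a', s'⟩, hs'⟩ hab hiff
      simp only [Set.mem_ofPred_eq, Subtype.mk.injEq, Prod.mk.injEq, ne_eq] at hiff ⊢
      rcases hab with ⟨h1, h2, h3⟩ | ⟨h1, h2, h3⟩
      · simp only at h1 h2 h3
        subst h1
        by_cases hav : a = v
        · subst hav
          simp only [true_and, not_true_eq_false, false_and, or_false] at hiff ⊢
          rcases h3 with h3 | h3
          · subst h3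
            right
            refine ⟨?_, rfl⟩
            by_contra h
            exact hne (hiff.2 h).symm
          · subst h3
            left
            refine ⟨?_, rfl⟩
            by_contra h
            exact h (hiff.2 (fun e => hne e.symm))
        · simp [hav] at hiff
      · simp only at h1 h2 h3
        exfalso
        by_cases hav : a = v
        · subst hav
          have : a' ≠ a := h1.ne.symm
          simp only [this, step_of_adj hT h1, h2] at hiff
          simp at hiff
        · by_cases hav' : a' = v
          · subst hav'
            simp only [hav, step_of_adj hT h1.symm, h3] at hiff
            simp at hiff
          · simp only [hav, hav', step_eq_of_adj hT h1 hav hav'] at hiff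
            simp at hiff
  refine isTree_of_cuts ?_ ?_
  · have : Nonempty V := hT.1.nonempty
    have : Nonempty (BV Γ f te) := ⟨⟨(Classical.arbitrary V, f (Classical.arbitrary V)), Or.inl rfl⟩⟩
    refine ⟨?_⟩
    rintro ⟨⟨a, s⟩, hs⟩ ⟨⟨b, t⟩, ht⟩
    refine ((star a s hs).symm.trans ?_).trans (star b t ht)
    obtain ⟨p⟩ := hT.1 a b
    clear hs ht s t
    induction p with
    | nil => exact Reachable.refl _
    | @cons u v w h p ih =>
      refine Reachable.trans ?_ ih
      refine ((star u (te u v) (Or.inr ⟨v, h, rfl⟩)).trans ?_).trans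
        (star v (te v u) (Or.inr ⟨u, h.symm, rfl⟩)).symm
      exact Adj.reachable (Or.inr ⟨h, rfl, rfl⟩)
  · rintro ⟨⟨v, s⟩, hs⟩ ⟨⟨v', s'⟩, hs'⟩ (⟨h1, h2, h3⟩ | ⟨h1, h2, h3⟩)
    · simp only at h1 h2 h3
      subst h1
      rcases h3 with h3 | h3
      · subst h3
        obtain ⟨H, k1, k2, k3⟩ := cut1 v s' hs hs' h2.symm
        refine ⟨Hᶜ, k2, fun h => h k1, ?_⟩
        intro a b hab ha hb
        have hb' : b ∈ H := by simpa using hb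
        rcases k3 a b hab ⟨fun h => absurd h ha, fun h => absurd hb' h⟩ with h | h
        · exact absurd (h.1 ▸ k1) ha
        · exact h.symm
      · subst h3
        obtain ⟨H, k1, k2, k3⟩ := cut1 v s hs' hs h2
        refine ⟨H, k1, k2, ?_⟩
        intro a b hab ha hb
        rcases k3 a b hab ⟨fun h => hb, fun _ => ha⟩ with h | h
        · exact h
        · exact absurd (h.1 ▸ k1) hb
    · simp only at h1 h2 h3
      subst h2 h3
      refine ⟨{b | b.1.1 ∈ half Γ v v'}, left_mem_half h1, right_notMem_half, ?_⟩
      rintro ⟨⟨a, t⟩, ht⟩ ⟨⟨a', t'⟩, ht'⟩ (⟨k1, k2, k3⟩ | ⟨k1, k2, k3⟩) ha hb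
      · simp only [Set.mem_ofPred_eq] at k1 ha hb
        exact absurd (k1 ▸ ha) hb
      · simp only [Set.mem_ofPred_eq] at k1 k2 k3 ha hb
        obtain ⟨rfl, rfl⟩ := half_cut hT h1 k1 ha hb
        subst k2 k3
        exact ⟨rfl, rfl⟩

end tree
end VF

namespace VF
open SimpleGraph

universe u v

/-- A cocompact action on a tree with finite vertex stabilizers. -/
structure GT (G : Type*) [Group G] {V : Type*} [MulAction G V] (Γ : SimpleGraph V) : Prop where
  tree : Γ.IsTree
  adj_smul : ∀ (g : G) (x y : V), Γ.Adj x y → Γ.Adj (g • x) (g • y)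
  fin_stab : ∀ v : V, {g : G | g • v = v}.Finite
  fin_dart : ∃ D : Set (V × V), D.Finite ∧ ∀ x y, Γ.Adj x y → ∃ g : G, (g • x, g • y) ∈ D

section gt
variable {G : Type*} [Group G] {V : Type*} [MulAction G V] {Γ : SimpleGraph V}

theorem adj_smul_iff (h : ∀ (g : G) (x y : V), Γ.Adj x y → Γ.Adj (g • x) (g • y)) (g : G) (x y : V) :
    Γ.Adj (g • x) (g • y) ↔ Γ.Adj x y := by
  refine ⟨fun k => ?_, h g x y⟩
  have := h g⁻¹ _ _ k
  simpa using this

theorem reach_smul (h : ∀ (g : G) (x y : V), Γ.Adj x y → Γ.Adj (g • x) (g • y)) (g : G) {x y : V}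
    (k : Γ.Reachable x y) : Γ.Reachable (g • x) (g • y) := by
  obtain ⟨p⟩ := k
  exact ⟨p.map (⟨fun x => g • x, fun k => h g _ _ k⟩ : Γ →g Γ)⟩

theorem dist_smul_le (hc : Γ.Connected)
    (h : ∀ (g : G) (x y : V), Γ.Adj x y → Γ.Adj (g • x) (g • y)) (g : G) (x y : V) :
    Γ.dist (g • x) (g • y) ≤ Γ.dist x y := by
  obtain ⟨p, hp⟩ := hc.exists_walk_length_eq_dist x y
  have := dist_le (p.map (⟨fun x => g • x, fun k => h g _ _ k⟩ : Γ →g Γ))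
  simp only [Walk.length_map, hp] at this
  exact this

theorem dist_smul (hc : Γ.Connected)
    (h : ∀ (g : G) (x y : V), Γ.Adj x y → Γ.Adj (g • x) (g • y)) (g : G) (x y : V) :
    Γ.dist (g • x) (g • y) = Γ.dist x y := by
  refine le_antisymm (dist_smul_le hc h g x y) ?_
  have := dist_smul_le hc h g⁻¹ (g • x) (g • y)
  simpa using this

theorem step_smul (hT : Γ.IsTree)
    (h : ∀ (g : G) (x y : V), Γ.Adj x y → Γ.Adj (g • x) (g • y)) (g : G) (x y : V) :
    step Γ (g • x) (g • y) = g • step Γ x y := by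
  by_cases e : x = y
  · subst e; simp [step_self]
  · refine (eq_step hT (h g _ _ (step_adj hT.1 e)) ?_).symm
    rw [dist_smul hT.1 h, dist_smul hT.1 h]
    exact step_dist hT.1 e

theorem GT.fin_vert (h : GT G Γ) : ∃ D : Set V, D.Finite ∧ ∀ x, ∃ g : G, g • x ∈ D := by
  obtain ⟨D, hD, hD'⟩ := h.fin_dart
  obtain ⟨v0⟩ := h.tree.1.nonempty
  refine ⟨insert v0 (Prod.fst '' D), (hD.image _).insert _, fun x => ?_⟩
  by_cases e : x = v0
  · exact ⟨1, by simp [e]⟩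
  · obtain ⟨g, hg⟩ := hD' _ _ (step_adj h.tree.1 e)
    exact ⟨g, Or.inr ⟨_, hg, rfl⟩⟩

/-- Contraction of a forest with finite components. -/
theorem contract {V : Type u} [MulAction G V] {Γ : SimpleGraph V} (h : GT G Γ)
    (Z : SimpleGraph V) (hZ : Z ≤ Γ)
    (hinv : ∀ (g : G) (x y : V), Z.Adj x y → Z.Adj (g • x) (g • y))
    (hfin : ∀ v, {w | Z.Reachable v w}.Finite) :
    ∃ (W : Type u) (_ : MulAction G W) (Δ : SimpleGraph W) (r : V → W), GT G Δ ∧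
      Function.Surjective r ∧ (∀ (g : G) v, r (g • v) = g • r v) ∧
      (∀ x y, r x = r y ↔ Z.Reachable x y) ∧
      (∀ a b, Δ.Adj a b ↔ a ≠ b ∧ ∃ x y, r x = a ∧ r y = b ∧ Γ.Adj x y) ∧
      (∀ x y x' y', Γ.Adj x y → Γ.Adj x' y' → r x ≠ r y → r x = r x' → r y = r y' →
        x = x' ∧ y = y') := by
  let s := Z.reachableSetoid
  let W := Quotient s
  let r : V → W := Quotient.mk s
  have hr : Function.Surjective r := Quotient.mk_surjective
  have hrr : ∀ x y, r x = r y ↔ Z.Reachable x y := fun x y => Quotient.eq (r := s)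
  let act : MulAction G W :=
    { smul := fun g => Quotient.map (fun x => g • x) (fun a b hab => reach_smul hinv g hab)
      one_smul := by
        intro b
        obtain ⟨x, rfl⟩ := hr b
        exact congrArg r (one_smul G x)
      mul_smul := by
        intro g g' b
        obtain ⟨x, rfl⟩ := hr b
        exact congrArg r (mul_smul g g' x) }
  have hsm : ∀ (g : G) v, r (g • v) = g • r v := fun g v => rfl
  let Δ : SimpleGraph W :=
    { Adj := fun a b => a ≠ b ∧ ∃ x y, r x = a ∧ r y = b ∧ Γ.Adj x y
      symm := ⟨by
        rintro a b ⟨h1, x, y, h2, h3, h4⟩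
        exact ⟨h1.symm, y, x, h3, h2, h4.symm⟩⟩
      loopless := ⟨fun a h => h.1 rfl⟩ }
  have hΔ : ∀ a b, Δ.Adj a b ↔ a ≠ b ∧ ∃ x y, r x = a ∧ r y = b ∧ Γ.Adj x y := fun a b => Iff.rfl
  have key := isTree_contract h.tree r hr Δ hΔ (by
    intro x y hxy
    obtain ⟨p⟩ := (hrr _ _).1 hxy
    refine ⟨p.mapLe hZ, ?_⟩
    intro d hd
    simp only [Walk.darts_map, Walk.mapLe, List.mem_map] at hd
    obtain ⟨d', hd', rfl⟩ := hd
    exact (hrr _ _).2 d'.adj.reachable)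
  refine ⟨W, act, Δ, r, ⟨key.1, ?_, ?_, ?_⟩, hr, hsm, hrr, hΔ, key.2⟩
  · rintro g a b ⟨h1, x, y, rfl, rfl, h4⟩
    refine ⟨?_, g • x, g • y, rfl, rfl, h.adj_smul g _ _ h4⟩
    intro hh
    apply h1
    have := congrArg (fun z => g⁻¹ • z) hh
    simpa using this
  · intro a
    obtain ⟨v, rfl⟩ := hr a
    have : {g : G | g • r v = r v} ⊆ ⋃ w ∈ {w | Z.Reachable v w}, {g : G | g • v = w} := by
      intro g hg
      simp only [Set.mem_ofPred_eq, ← hsm] at hg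
      simp only [Set.mem_iUnion]
      exact ⟨g • v, (hrr _ _).1 hg.symm, rfl⟩
    refine Set.Finite.subset ((hfin v).biUnion ?_) this
    intro w _
    by_cases hw : ∃ g : G, g • v = w
    · obtain ⟨g0, rfl⟩ := hw
      refine ((h.fin_stab v).image (fun g => g0 * g)).subset ?_
      intro g hg
      simp only [Set.mem_ofPred_eq] at hg
      refine ⟨g0⁻¹ * g, ?_, by simp⟩
      simp [mul_smul, hg]
    · convert Set.finite_empty
      ext g
      simp only [Set.mem_ofPred_eq, Set.mem_empty_iff_false, iff_false]
      exact fun hg => hw ⟨g, hg⟩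
  · obtain ⟨D, hD, hD'⟩ := h.fin_dart
    refine ⟨Prod.map r r '' D, hD.image _, ?_⟩
    rintro a b ⟨h1, x, y, rfl, rfl, h4⟩
    obtain ⟨g, hg⟩ := hD' _ _ h4
    exact ⟨g, _, hg, rfl⟩

/-- Blow-up. -/
theorem blowup {G' : Type*} [Group G'] {V : Type u} [MulAction G V] {Γ : SimpleGraph V}
    {T : Type u} [MulAction G' T] (h : GT G Γ) (φ : G →* G') (f : V → T) (te : V → V → T)
    (hf : ∀ (g : G) v, f (g • v) = φ g • f v)
    (hte : ∀ (g : G) v w, te (g • v) (g • w) = φ g • te v w) :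
    ∃ (W : Type u) (_ : MulAction G W) (Δ : SimpleGraph W) (r : W → V) (f' : W → T), GT G Δ ∧
      (∀ (g : G) a, r (g • a) = g • r a) ∧ (∀ (g : G) a, f' (g • a) = φ g • f' a) ∧
      (∀ a b, r a = r b → f' a = f' b → a = b) ∧
      (∀ a, f' a = f (r a) ∨ ∃ w, Γ.Adj (r a) w ∧ te (r a) w = f' a) ∧
      (∀ v, ∃ a, r a = v ∧ f' a = f v) ∧
      (∀ v w, Γ.Adj v w → ∃ a, r a = v ∧ f' a = te v w) ∧
      (∀ a b, Δ.Adj a b ↔ (r a = r b ∧ f' a ≠ f' b ∧ (f' a = f (r a) ∨ f' b = f (r a))) ∨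
        (Γ.Adj (r a) (r b) ∧ f' a = te (r a) (r b) ∧ f' b = te (r b) (r a))) := by
  let W := BV Γ f te
  let r : W → V := fun a => a.1.1
  let f' : W → T := fun a => a.1.2
  let act : MulAction G W :=
    { smul := fun g a => ⟨(g • a.1.1, φ g • a.1.2), by
        rcases a with ⟨⟨v, t⟩, (ht | ⟨w, hw, ht⟩)⟩
        · left; simp only at ht; simp [ht, hf]
        · right; simp only at ht hw; exact ⟨g • w, h.adj_smul g _ _ hw, by simp [hte, ht]⟩⟩
      one_smul := by
        intro a
        apply Subtype.ext
        change ((1 : G) • a.1.1, φ 1 • a.1.2) = a.1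
        simp
      mul_smul := by
        intro g g' a
        apply Subtype.ext
        change ((g * g') • a.1.1, φ (g * g') • a.1.2) = (g • g' • a.1.1, φ g • φ g' • a.1.2)
        simp [mul_smul] }
  have h1 : ∀ (g : G) a, r (g • a) = g • r a := fun g a => rfl
  have h2 : ∀ (g : G) a, f' (g • a) = φ g • f' a := fun g a => rfl
  have hinj : ∀ a b, r a = r b → f' a = f' b → a = b :=
    fun a b e1 e2 => Subtype.ext (Prod.ext e1 e2)
  have hΔ : ∀ a b, (BG Γ f te).Adj a b ↔
      (r a = r b ∧ f' a ≠ f' b ∧ (f' a = f (r a) ∨ f' b = f (r a))) ∨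
        (Γ.Adj (r a) (r b) ∧ f' a = te (r a) (r b) ∧ f' b = te (r b) (r a)) :=
    fun a b => Iff.rfl
  refine ⟨W, act, BG Γ f te, r, f', ⟨isTree_blowup h.tree f te, ?_, ?_, ?_⟩, h1, h2, hinj, ?_, ?_,
    ?_, hΔ⟩
  · intro g a b hab
    rw [hΔ] at hab ⊢
    simp only [h1, h2, hf, hte]
    rcases hab with ⟨e1, e2, e3⟩ | ⟨e1, e2, e3⟩
    · left
      refine ⟨by rw [e1], by simpa using e2, by simpa using e3⟩
    · right
      exact ⟨h.adj_smul g _ _ e1, by rw [e2], by rw [e3]⟩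
  · intro a
    refine (h.fin_stab (r a)).subset ?_
    intro g hg
    simp only [Set.mem_ofPred_eq] at hg ⊢
    rw [← h1, hg]
  · obtain ⟨D, hD, hD'⟩ := h.fin_dart
    let F1 : V × V → (V × T) × (V × T) := fun p => ((p.1, te p.1 p.2), (p.2, te p.2 p.1))
    let F2 : V × V → (V × T) × (V × T) := fun p => ((p.1, te p.1 p.2), (p.1, f p.1))
    let F3 : V × V → (V × T) × (V × T) := fun p => ((p.1, f p.1), (p.1, te p.1 p.2))
    let q : W × W → (V × T) × (V × T) := fun p => (p.1.1, p.2.1)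
    have hq : Function.Injective q := by
      rintro ⟨a, b⟩ ⟨a', b'⟩ e
      simp only [q, Prod.mk.injEq] at e
      exact Prod.ext (Subtype.ext e.1) (Subtype.ext e.2)
    refine ⟨q ⁻¹' (F1 '' D ∪ F2 '' D ∪ F3 '' D),
      (((hD.image _).union (hD.image _)).union (hD.image _)).preimage hq.injOn, ?_⟩
    rintro ⟨⟨v, t⟩, ht⟩ ⟨⟨v', t'⟩, ht'⟩ (⟨e1, e2, e3⟩ | ⟨e1, e2, e3⟩)
    · simp only at e1 e2 e3
      subst e1
      rcases e3 with e3 | e3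
      · subst e3
        rcases ht' with hh | ⟨w, hw, hh⟩
        · exact absurd hh.symm e2
        · obtain ⟨g, hg⟩ := hD' _ _ hw
          refine ⟨g, Or.inr ⟨_, hg, ?_⟩⟩
          simp only at hh
          subst hh
          simp only [F3, hf, hte]; rfl
      · subst e3
        rcases ht with hh | ⟨w, hw, hh⟩
        · exact absurd hh e2
        · obtain ⟨g, hg⟩ := hD' _ _ hw
          refine ⟨g, Or.inl (Or.inr ⟨_, hg, ?_⟩)⟩
          simp only at hh
          subst hh
          simp only [F2, hf, hte]; rfl
    · simp only at e1 e2 e3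
      subst e2 e3
      obtain ⟨g, hg⟩ := hD' _ _ e1
      refine ⟨g, Or.inl (Or.inl ⟨_, hg, ?_⟩)⟩
      simp only [F1, hte]; rfl
  · exact fun a => a.2
  · exact fun v => ⟨⟨(v, f v), Or.inl rfl⟩, rfl, rfl⟩
  · exact fun v w hw => ⟨⟨(v, te v w), Or.inr ⟨w, hw, rfl⟩⟩, rfl, rfl⟩

/-- An invariant two-colouring. -/
structure Colored (G : Type*) [Group G] {V : Type*} [MulAction G V] (Γ : SimpleGraph V)
    (c : V → Bool) : Prop where
  adj : ∀ x y, Γ.Adj x y → c x ≠ c y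
  inv : ∀ (g : G) x, c (g • x) = c x

/-- Barycentric subdivision. -/
theorem bary {V : Type u} [MulAction G V] {Γ : SimpleGraph V} (h : GT G Γ) :
    ∃ (W : Type u) (_ : MulAction G W) (Δ : SimpleGraph W) (c : W → Bool), GT G Δ ∧
      Colored G Δ c := by
  let W := V ⊕ Γ.edgeSet
  have hmem : ∀ (g : G) (e : Sym2 V), e ∈ Γ.edgeSet → Sym2.map (fun x => g • x) e ∈ Γ.edgeSet := by
    intro g e
    induction e with
    | h x y => exact fun he => h.adj_smul g x y he
  let act : MulAction G W :=
    { smul := fun g => Sum.map (fun x => g • x) (fun e => ⟨Sym2.map (fun x => g • x) e.1, hmem g _ e.2⟩)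
      one_smul := by
        rintro (x | ⟨e, he⟩)
        · exact congrArg Sum.inl (one_smul G x)
        · refine congrArg Sum.inr (Subtype.ext ?_)
          simp
      mul_smul := by
        rintro g g' (x | ⟨e, he⟩)
        · exact congrArg Sum.inl (mul_smul g g' x)
        · refine congrArg Sum.inr (Subtype.ext ?_)
          change Sym2.map _ e = Sym2.map _ (Sym2.map _ e)
          rw [Sym2.map_map]
          congr 1
          funext x
          exact mul_smul g g' x }
  let Δ : SimpleGraph W :=
    { Adj := fun a b => match a, b with
        | Sum.inl x, Sum.inr e => x ∈ e.1
        | Sum.inr e, Sum.inl x => x ∈ e.1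
        | _, _ => False
      symm := ⟨by rintro (x | e) (y | e') <;> simp⟩
      loopless := ⟨by rintro (x | e) <;> simp⟩ }
  have a1 : ∀ x e, Δ.Adj (Sum.inl x) (Sum.inr e) ↔ x ∈ e.1 := fun x e => Iff.rfl
  have a2 : ∀ x e, Δ.Adj (Sum.inr e) (Sum.inl x) ↔ x ∈ e.1 := fun x e => Iff.rfl
  have a3 : ∀ x y, ¬ Δ.Adj (Sum.inl x) (Sum.inl y) := fun x y h => h
  have a4 : ∀ x y, ¬ Δ.Adj (Sum.inr x) (Sum.inr y) := fun x y h => h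
  have s1 : ∀ (g : G) (x : V), g • (Sum.inl x : W) = Sum.inl (g • x) := fun g x => rfl
  have s2 : ∀ (g : G) (e : Γ.edgeSet), g • (Sum.inr e : W) =
    Sum.inr ⟨Sym2.map (fun x => g • x) e.1, hmem g _ e.2⟩ := fun g x => rfl
  have conn : ∀ x y, Δ.Reachable (Sum.inl x) (Sum.inl y) := by
    intro x y
    obtain ⟨p⟩ := h.tree.1 x y
    induction p with
    | nil => exact Reachable.refl _
    | @cons u v w hh p ih =>
      refine Reachable.trans ?_ ih
      have b1 : Δ.Adj (Sum.inl u) (Sum.inr ⟨s(u, v), hh⟩) := (a1 _ _).2 (by simp)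
      have b2 : Δ.Adj (Sum.inr ⟨s(u, v), hh⟩) (Sum.inl v) := (a2 _ _).2 (by simp)
      exact b1.reachable.trans b2.reachable
  have conn' : ∀ a : W, ∃ x : V, Δ.Reachable a (Sum.inl x) := by
    rintro (x | ⟨e, he⟩)
    · exact ⟨x, Reachable.refl _⟩
    · induction e with
      | h x y => exact ⟨x, Adj.reachable ((a2 _ _).2 (by simp))⟩
  have cutx : ∀ (x : V) (e : Γ.edgeSet), x ∈ e.1 → ∃ H : Set W, Sum.inl x ∈ H ∧ Sum.inr e ∉ H ∧
      ∀ a b, Δ.Adj a b → (a ∈ H ↔ b ∉ H) → (a = Sum.inl x ∧ b = Sum.inr e) ∨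
        (b = Sum.inl x ∧ a = Sum.inr e) := by
    rintro x ⟨e, he⟩ hx
    obtain ⟨y, rfl⟩ : ∃ y, e = s(x, y) := hx
    have hxy : Γ.Adj x y := he
    have main : ∀ (a : V) (e' : Γ.edgeSet), a ∈ e'.1 →
        (a ∈ half Γ x y ↔ ¬ (∀ z ∈ e'.1, z ∈ half Γ x y)) → a = x ∧ e'.1 = s(x, y) := by
      rintro a ⟨e', he'⟩ ha hiff
      obtain ⟨b, rfl⟩ : ∃ b, e' = s(a, b) := ha
      simp only [Sym2.mem_iff, forall_eq_or_imp, forall_eq] at hiff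
      by_cases k : a ∈ half Γ x y
      · have k2 : b ∉ half Γ x y := fun k2 => (hiff.1 k) ⟨k, k2⟩
        obtain ⟨rfl, rfl⟩ := half_cut h.tree hxy he' k k2
        exact ⟨rfl, rfl⟩
      · exact absurd (hiff.2 (fun k2 => k k2.1)) k
    refine ⟨{w | match w with
      | Sum.inl z => z ∈ half Γ x y
      | Sum.inr e => ∀ z ∈ e.1, z ∈ half Γ x y}, left_mem_half hxy, ?_, ?_⟩
    · intro hh
      exact right_notMem_half (hh y (by simp))
    · rintro (a | e1) (b | e2) hab hiff
      · exact absurd hab (a3 _ _)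
      · left
        have := main a e2 hab hiff
        exact ⟨congrArg Sum.inl this.1, congrArg Sum.inr (Subtype.ext this.2)⟩
      · right
        have := main b e1 hab (by
          have h1 : (∀ z ∈ e1.1, z ∈ half Γ x y) ↔ ¬ b ∈ half Γ x y := hiff
          rw [h1, not_not])
        exact ⟨congrArg Sum.inl this.1, congrArg Sum.inr (Subtype.ext this.2)⟩
      · exact absurd hab (a4 _ _)
  refine ⟨W, act, Δ, Sum.isLeft, ⟨isTree_of_cuts ?_ ?_, ?_, ?_, ?_⟩, ⟨?_, ?_⟩⟩
  · have : Nonempty W := h.tree.1.nonempty.map Sum.inl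
    refine ⟨fun a b => ?_⟩
    obtain ⟨x, hx⟩ := conn' a
    obtain ⟨y, hy⟩ := conn' b
    exact (hx.trans (conn x y)).trans hy.symm
  · rintro (x | e) (y | e') hab
    · exact absurd hab (a3 _ _)
    · obtain ⟨H, k1, k2, k3⟩ := cutx x e' hab
      refine ⟨H, k1, k2, ?_⟩
      intro a b hab ha hb
      rcases k3 a b hab (by tauto) with hh | hh
      · exact hh
      · exact absurd (hh.1 ▸ k1) hb
    · obtain ⟨H, k1, k2, k3⟩ := cutx y e hab
      refine ⟨Hᶜ, k2, fun hh => hh k1, ?_⟩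
      intro a b hab ha hb
      have hb' : b ∈ H := by simpa using hb
      rcases k3 a b hab ⟨fun hh => absurd hh ha, fun hh => absurd hb' hh⟩ with hh | hh
      · exact absurd (hh.1 ▸ k1) ha
      · exact hh.symm
    · exact absurd hab (a4 _ _)
  · have : ∀ (g : G) (x : V) (e : Γ.edgeSet), x ∈ e.1 → g • x ∈ Sym2.map (fun x => g • x) e.1 := by
      intro g x e hx
      exact Sym2.mem_map.2 ⟨x, hx, rfl⟩
    rintro g (x | e) (y | e') hab
    · exact absurd hab (a3 _ _)
    · exact this g x e' hab
    · exact this g y e hab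
    · exact absurd hab (a4 _ _)
  · rintro (x | ⟨e, he⟩)
    · refine (h.fin_stab x).subset ?_
      intro g hg
      exact Sum.inl_injective hg
    · induction e with
      | h x y =>
      have : {g : G | g • x = y}.Finite := by
        by_cases hw : ∃ g : G, g • x = y
        · obtain ⟨g0, rfl⟩ := hw
          refine ((h.fin_stab x).image (fun g => g0 * g)).subset ?_
          intro g hg
          simp only [Set.mem_ofPred_eq] at hg
          refine ⟨g0⁻¹ * g, ?_, by simp⟩
          simp [mul_smul, hg]
        · convert Set.finite_empty
          ext g
          simp only [Set.mem_ofPred_eq, Set.mem_empty_iff_false, iff_false]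
          exact fun hg => hw ⟨g, hg⟩
      refine ((h.fin_stab x).union this).subset ?_
      intro g hg
      have hg2 := congrArg Subtype.val (Sum.inr_injective hg)
      simp only [Sym2.map_mk, Sym2.eq_iff] at hg2
      replace hg := hg2
      rcases hg with hg | hg
      · exact Or.inl hg.1
      · exact Or.inr hg.1
  · obtain ⟨D, hD, hD'⟩ := h.fin_dart
    let F : V × V → W × W := fun p => by
      classical exact if hh : Γ.Adj p.1 p.2 then (Sum.inl p.1, Sum.inr ⟨s(p.1, p.2), hh⟩)
        else (Sum.inl p.1, Sum.inl p.1)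
    have hF : ∀ x y (hh : Γ.Adj x y), F (x, y) = (Sum.inl x, Sum.inr ⟨s(x, y), hh⟩) := by
      intro x y hh
      simp only [F]
      rw [dif_pos hh]
    have main : ∀ (x : V) (e : Γ.edgeSet), x ∈ e.1 → ∃ g : G, ∃ d ∈ D,
        F d = (g • Sum.inl x, g • Sum.inr e) := by
      rintro x ⟨e, he⟩ hx
      obtain ⟨y, rfl⟩ : ∃ y, e = s(x, y) := hx
      obtain ⟨g, hg⟩ := hD' x y he
      exact ⟨g, _, hg, hF _ _ (h.adj_smul g _ _ he)⟩
    refine ⟨F '' D ∪ Prod.swap '' (F '' D), (hD.image _).union ((hD.image _).image _), ?_⟩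
    rintro (x | e) (y | e') hab
    · exact absurd hab (a3 _ _)
    · obtain ⟨g, d, hd, e1⟩ := main x e' hab
      exact ⟨g, Or.inl ⟨d, hd, e1⟩⟩
    · obtain ⟨g, d, hd, e1⟩ := main y e hab
      exact ⟨g, Or.inr ⟨F d, ⟨d, hd, rfl⟩, by rw [e1]; rfl⟩⟩
    · exact absurd hab (a4 _ _)
  · rintro (x | e) (y | e') hab
    · exact absurd hab (a3 _ _)
    · simp
    · simp
    · exact absurd hab (a4 _ _)
  · rintro g (x | e)
    · rfl
    · rfl

/-- Finite groups fix a vertex. -/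
theorem exists_fixed (hT : Γ.IsTree)
    (hadj : ∀ (g : G) (x y : V), Γ.Adj x y → Γ.Adj (g • x) (g • y)) {c : V → Bool}
    (hc : Colored G Γ c) (K : Subgroup G) (hK : (K : Set G).Finite) : ∃ x : V, ∀ g ∈ K, g • x = x := by
  obtain ⟨a0⟩ := hT.1.nonempty
  let A : Finset V := by classical exact hK.toFinset.image (fun g => g • a0)
  have hA : ∀ a, a ∈ A ↔ ∃ g ∈ K, g • a0 = a := by
    intro a; simp [A]
  let ecc : V → ℕ := fun x => A.sup (fun a => Γ.dist x a)
  have hecc : ∀ x a, a ∈ A → Γ.dist x a ≤ ecc x := fun x a ha => Finset.le_sup (f := fun a => Γ.dist x a) ha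
  have hne : A.Nonempty := ⟨a0, (hA _).2 ⟨1, K.one_mem, one_smul _ _⟩⟩
  have hex : ∀ x, ∃ a ∈ A, Γ.dist x a = ecc x := by
    intro x
    obtain ⟨a, ha, h⟩ := Finset.exists_mem_eq_sup A hne (fun a => Γ.dist x a)
    exact ⟨a, ha, h.symm⟩
  obtain ⟨x, hx⟩ : ∃ x, ∀ y, ecc x ≤ ecc y := by
    let P : Set ℕ := Set.range ecc
    have : P.Nonempty := ⟨_, a0, rfl⟩
    obtain ⟨x, hx⟩ := Nat.sInf_mem this
    exact ⟨x, fun y => hx ▸ Nat.sInf_le ⟨y, rfl⟩⟩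
  refine ⟨x, fun g hg => ?_⟩
  by_contra hgx
  have hgx' : x ≠ g • x := fun h => hgx h.symm
  have hecg : ecc (g • x) ≤ ecc x := by
    apply Finset.sup_le
    intro a ha
    obtain ⟨k, hk, rfl⟩ := (hA a).1 ha
    have : Γ.dist (g • x) (k • a0) = Γ.dist x ((g⁻¹ * k) • a0) := by
      rw [← dist_smul hT.1 hadj g x, smul_smul]; simp
    rw [this]
    exact hecc _ _ ((hA _).2 ⟨_, K.mul_mem (K.inv_mem hg) hk, rfl⟩)
  have hnadj : ¬ Γ.Adj x (g • x) := fun h => hc.adj _ _ h (hc.inv g x).symm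
  have h2 := hT.1.one_lt_dist_of_ne_of_not_adj hgx' hnadj
  obtain ⟨t, ht, htd⟩ := exists_step hT.1 hgx'
  obtain ⟨a, ha, hta⟩ := hex t
  have h3 := hx t
  have h4 := hecc x a ha
  have h5 := hecc (g • x) a ha
  rcases dist_adj_cases hT a ht with h6 | h6
  · have := dist_increase hT ht htd h6
    rw [Γ.dist_comm (u := a), Γ.dist_comm (u := a)] at this
    omega
  · omega

end gt

section orbs
variable (N : Type*) [Group N]

/-- The set of orbits of the points of `P`. -/
def orbs {X : Type*} [MulAction N X] (P : Set X) : Set (Set X) := (fun p => MulAction.orbit N p) '' P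

variable {N}
variable {X Y : Type*} [MulAction N X] [MulAction N Y]

theorem orbs_finite {P : Set X} {D : Set X} (hD : D.Finite) (h : ∀ p ∈ P, ∃ n : N, n • p ∈ D) :
    (orbs N P).Finite := by
  refine (hD.image (fun p => MulAction.orbit N p)).subset ?_
  rintro _ ⟨p, hp, rfl⟩
  obtain ⟨n, hn⟩ := h p hp
  exact ⟨_, hn, MulAction.orbit_eq_iff.2 ⟨n, rfl⟩⟩

theorem image_orbit (F : X → Y) (hF : ∀ (n : N) x, F (n • x) = n • F x) (p : X) :
    F '' (MulAction.orbit N p) = MulAction.orbit N (F p) := by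
  ext y
  constructor
  · rintro ⟨_, ⟨n, rfl⟩, rfl⟩
    exact ⟨n, (hF n p).symm⟩
  · rintro ⟨n, rfl⟩
    exact ⟨n • p, ⟨n, rfl⟩, hF n p⟩

theorem orbs_image_subset (F : X → Y) (hF : ∀ (n : N) x, F (n • x) = n • F x)
    {P : Set X} {R : Set Y} (hR : R ⊆ F '' P) :
    orbs N R ⊆ (fun O => F '' O) '' orbs N P := by
  rintro _ ⟨_, hr, rfl⟩
  obtain ⟨p, hp, rfl⟩ := hR hr
  exact ⟨_, ⟨p, hp, rfl⟩, image_orbit F hF p⟩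

theorem orbs_le (F : X → Y) (hF : ∀ (n : N) x, F (n • x) = n • F x)
    {P : Set X} {R : Set Y} (hP : (orbs N P).Finite) (hR : R ⊆ F '' P) :
    (orbs N R).ncard ≤ (orbs N P).ncard :=
  (Set.ncard_le_ncard (orbs_image_subset F hF hR) (hP.image _)).trans (Set.ncard_image_le hP)

theorem orbs_lt (F : X → Y) (hF : ∀ (n : N) x, F (n • x) = n • F x)
    {P : Set X} {R : Set Y} (hP : (orbs N P).Finite) (hR : R ⊆ F '' P) {p q : X} (hp : p ∈ P)
    (hq : q ∈ P) (hpq : ∀ n : N, n • p ≠ q) (hFpq : ∃ n : N, n • F p = F q) :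
    (orbs N R).ncard < (orbs N P).ncard := by
  refine (Set.ncard_le_ncard (orbs_image_subset F hF hR) (hP.image _)).trans_lt ?_
  refine lt_of_le_of_ne (Set.ncard_image_le hP) ?_
  intro h
  have := Set.injOn_of_ncard_image_eq h hP
  obtain ⟨n, hn⟩ := hFpq
  have e : F '' (MulAction.orbit N p) = F '' (MulAction.orbit N q) := by
    rw [image_orbit F hF, image_orbit F hF, ← hn]
    simp
  have e2 : MulAction.orbit N p = MulAction.orbit N q := this ⟨p, hp, rfl⟩ ⟨q, hq, rfl⟩ e
  have : q ∈ MulAction.orbit N p := e2 ▸ MulAction.mem_orbit_self q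
  obtain ⟨m, hm⟩ := this
  exact hpq m hm

theorem orbs_mono {P R : Set X} (hP : (orbs N P).Finite) (hR : R ⊆ P) :
    (orbs N R).ncard ≤ (orbs N P).ncard :=
  Set.ncard_le_ncard (Set.image_mono hR) hP

theorem finite_reps {G : Type*} [Group G] {X : Type*} [MulAction G X] (N : Subgroup G)
    [N.FiniteIndex] {P D : Set X} (hD : D.Finite) (h : ∀ p ∈ P, ∃ g : G, g • p ∈ D) :
    ∃ D' : Set X, D'.Finite ∧ ∀ p ∈ P, ∃ n : N, n • p ∈ D' := by
  let t : G ⧸ N → G := Quotient.out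
  refine ⟨⋃ q : G ⧸ N, (fun d => (t q)⁻¹ • d) '' D, Set.finite_iUnion (fun q => hD.image _), ?_⟩
  intro p hp
  obtain ⟨g, hg⟩ := h p hp
  have hn : (t (g : G ⧸ N))⁻¹ * g ∈ N := by
    rw [← QuotientGroup.eq]
    exact Quotient.out_eq _
  refine ⟨⟨_, hn⟩, Set.mem_iUnion.2 ⟨(g : G ⧸ N), g • p, hg, ?_⟩⟩
  simp [Subgroup.smul_def, mul_smul]

end orbs
end VF

namespace VF
open SimpleGraph

section cuts

theorem ncard_submod {X : Type*} {A B P Q : Set X} (hP : P.Finite) (hQ : Q.Finite)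
    (h1 : A ∪ B ⊆ P ∪ Q) (h2 : A ∩ B ⊆ P ∩ Q) : A.ncard + B.ncard ≤ P.ncard + Q.ncard := by
  have hA : A.Finite := (hP.union hQ).subset (Set.subset_union_left.trans h1)
  have hB : B.Finite := (hP.union hQ).subset (Set.subset_union_right.trans h1)
  rw [← Set.ncard_union_add_ncard_inter A B hA hB, ← Set.ncard_union_add_ncard_inter P Q hP hQ]
  exact add_le_add (Set.ncard_le_ncard h1 (hP.union hQ))
    (Set.ncard_le_ncard h2 (hP.subset Set.inter_subset_left))

theorem ncard_submod_lt {X : Type*} {A B P Q : Set X} (hP : P.Finite) (hQ : Q.Finite)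
    (h1 : A ∪ B ⊆ P ∪ Q) (h2 : A ∩ B ⊆ P ∩ Q) {c : X} (hc : c ∈ P ∪ Q) (hc' : c ∉ A ∪ B) :
    A.ncard + B.ncard < P.ncard + Q.ncard := by
  have hA : A.Finite := (hP.union hQ).subset (Set.subset_union_left.trans h1)
  have hB : B.Finite := (hP.union hQ).subset (Set.subset_union_right.trans h1)
  rw [← Set.ncard_union_add_ncard_inter A B hA hB, ← Set.ncard_union_add_ncard_inter P Q hP hQ]
  exact add_lt_add_of_lt_of_le (Set.ncard_lt_ncard ⟨h1, fun h => hc' (h hc)⟩ (hP.union hQ))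
    (Set.ncard_le_ncard h2 (hP.subset Set.inter_subset_left))

variable {X : Type*}

/-- The oriented edge boundary of a set. -/
def bd (Γ : SimpleGraph X) (C : Set X) : Set (X × X) := {p | p.1 ∈ C ∧ p.2 ∉ C ∧ Γ.Adj p.1 p.2}

/-- The set `C` is connected. -/
def Conn (Γ : SimpleGraph X) (C : Set X) : Prop :=
  ∀ A ⊆ C, A.Nonempty → (∀ a ∈ A, ∀ b ∈ C, Γ.Adj a b → b ∈ A) → A = C

theorem Conn.reach {Γ : SimpleGraph X} {C : Set X} (h : Conn Γ C) {x y : X} (hx : x ∈ C)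
    (hy : y ∈ C) : Γ.Reachable x y := by
  have := h {z | z ∈ C ∧ Γ.Reachable x z} (fun z hz => hz.1) ⟨x, hx, Reachable.refl _⟩
    (fun a ha b hb hab => ⟨hb, ha.2.trans hab.reachable⟩)
  have hy' : y ∈ {z | z ∈ C ∧ Γ.Reachable x z} := by rw [this]; exact hy
  exact hy'.2

theorem finite_cuts (k : ℕ) : ∀ (Γ : SimpleGraph X) (x y : X), Γ.Adj x y →
    {D : Set X | Conn Γ D ∧ Conn Γ Dᶜ ∧ (bd Γ D).Finite ∧ (bd Γ D).ncard ≤ k ∧ x ∈ D ∧ y ∉ D}.Finite := by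
  induction k with
  | zero =>
    intro Γ x y hxy
    convert Set.finite_empty
    ext D
    simp only [Set.mem_ofPred_eq, Set.mem_empty_iff_false, iff_false]
    rintro ⟨-, -, h1, h2, h3, h4⟩
    have : bd Γ D = ∅ := by
      rw [← Set.ncard_eq_zero h1]; omega
    have h : (x, y) ∈ bd Γ D := ⟨h3, h4, hxy⟩
    rw [this] at h
    exact h
  | succ k ih =>
    intro Γ x y hxy
    let Γ' := Γ.deleteEdges {s(x, y)}
    have hΓ' : ∀ a b, Γ'.Adj a b ↔ Γ.Adj a b ∧ s(a, b) ≠ s(x, y) := by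
      intro a b
      simp [Γ', deleteEdges_adj]
    have conn' : ∀ D : Set X, (¬ (x ∈ D ∧ y ∈ D)) → Conn Γ D → Conn Γ' D := by
      intro D hD hc A hA hne hcl
      refine hc A hA hne ?_
      intro a ha b hb hab
      refine hcl a ha b hb ((hΓ' _ _).2 ⟨hab, ?_⟩)
      intro e
      rw [Sym2.eq_iff] at e
      rcases e with ⟨rfl, rfl⟩ | ⟨rfl, rfl⟩
      · exact hD ⟨hA ha, hb⟩
      · exact hD ⟨hb, hA ha⟩
    have hbd : ∀ D, x ∈ D → y ∉ D → (bd Γ D).Finite →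
        (bd Γ' D).Finite ∧ (bd Γ' D).ncard + 1 ≤ (bd Γ D).ncard := by
      intro D hx hy hf
      have hs : bd Γ' D ⊆ bd Γ D := fun p hp => ⟨hp.1, hp.2.1, ((hΓ' _ _).1 hp.2.2).1⟩
      refine ⟨hf.subset hs, Set.ncard_lt_ncard ⟨hs, ?_⟩ hf⟩
      intro h
      have h2 : (x, y) ∈ bd Γ' D := h ⟨hx, hy, hxy⟩
      exact ((hΓ' _ _).1 h2.2.2).2 rfl
    by_cases hr : Γ'.Reachable x y
    · obtain ⟨p⟩ := hr
      have hfin : (⋃ d ∈ {d | d ∈ p.darts}, {D : Set X | Conn Γ' D ∧ Conn Γ' Dᶜ ∧ (bd Γ' D).Finite ∧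
          (bd Γ' D).ncard ≤ k ∧ d.fst ∈ D ∧ d.snd ∉ D}).Finite :=
        (List.finite_toSet p.darts).biUnion (fun d _ => ih Γ' d.fst d.snd d.adj)
      refine hfin.subset ?_
      rintro D ⟨h1, h2, h3, h4, h5, h6⟩
      obtain ⟨d, hd, k1, k2⟩ := p.exists_boundary_dart D h5 h6
      have := hbd D h5 h6 h3
      simp only [Set.mem_iUnion]
      exact ⟨d, hd, conn' D (fun h => h6 h.2) h1, conn' Dᶜ (fun h => h.1 h5) h2, this.1, by omega,
        k1, k2⟩
    · refine (Set.finite_singleton {z | Γ'.Reachable x z}).subset ?_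
      rintro D ⟨h1, h2, h3, h4, h5, h6⟩
      have c1 := conn' D (fun h => h6 h.2) h1
      have c2 := conn' Dᶜ (fun h => h.1 h5) h2
      simp only [Set.mem_singleton_iff]
      ext z
      constructor
      · exact fun hz => c1.reach h5 hz
      · intro hz
        by_contra hzD
        exact hr (Reachable.trans hz (c2.reach hzD h6))

variable (Γ : SimpleGraph X)

/-- boundary size -/
noncomputable def mu (C : Set X) : ℕ := (bd Γ C).ncard

/-- `C` separates the pair of ultrafilters. -/
def Sep (α : Ultrafilter X × Ultrafilter X) (C : Set X) : Prop := C ∈ α.1 ↔ C ∉ α.2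

/-- crossing sets -/
def Cross (C D : Set X) : Prop :=
  (C ∩ D).Nonempty ∧ (C ∩ Dᶜ).Nonempty ∧ (Cᶜ ∩ D).Nonempty ∧ (Cᶜ ∩ Dᶜ).Nonempty

/-- minimal cuts for `α`. -/
def IsMin (K : ℕ) (α : Ultrafilter X × Ultrafilter X) (C : Set X) : Prop :=
  (bd Γ C).Finite ∧ Sep α C ∧ mu Γ C ≤ K ∧ ∀ D, (bd Γ D).Finite → Sep α D → mu Γ C ≤ mu Γ D

/-- minimal cuts crossing `C` -/
def XS (K : ℕ) (C : Set X) : Set (Set X) := {F | (∃ α, IsMin Γ K α F) ∧ Cross F C}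

/-- optimal cuts for `α`. -/
def IsOpt (K : ℕ) (α : Ultrafilter X × Ultrafilter X) (C : Set X) : Prop :=
  IsMin Γ K α C ∧ ∀ D, IsMin Γ K α D → (XS Γ K C).ncard ≤ (XS Γ K D).ncard

theorem bd_compl (C : Set X) : bd Γ Cᶜ = Prod.swap '' bd Γ C := by
  ext ⟨a, b⟩
  simp only [bd, Set.mem_ofPred_eq, Set.mem_compl_iff, not_not, Set.mem_image, Prod.exists,
    Prod.swap_prod_mk, Prod.mk.injEq]
  constructor
  · rintro ⟨h1, h2, h3⟩
    exact ⟨b, a, ⟨h2, h1, h3.symm⟩, rfl, rfl⟩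
  · rintro ⟨b', a', ⟨h2, h1, h3⟩, rfl, rfl⟩
    exact ⟨h1, h2, h3.symm⟩

variable {Γ}

theorem bd_compl_finite {C : Set X} (h : (bd Γ C).Finite) : (bd Γ Cᶜ).Finite := by
  rw [bd_compl]; exact h.image _

theorem mu_compl (C : Set X) : mu Γ Cᶜ = mu Γ C := by
  unfold mu; rw [bd_compl]; exact Set.ncard_image_of_injective _ Prod.swap_injective

theorem Sep.compl {α : Ultrafilter X × Ultrafilter X} {C : Set X} (h : Sep α C) : Sep α Cᶜ := by
  unfold Sep at *
  rw [Ultrafilter.compl_mem_iff_notMem, Ultrafilter.compl_mem_iff_notMem]; tauto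

theorem Cross.symm {C D : Set X} (h : Cross C D) : Cross D C := by
  obtain ⟨h1, h2, h3, h4⟩ := h
  refine ⟨?_, ?_, ?_, ?_⟩ <;> rw [Set.inter_comm] <;> assumption

theorem Cross.compl_right {C D : Set X} (h : Cross C D) : Cross C Dᶜ := by
  obtain ⟨h1, h2, h3, h4⟩ := h
  refine ⟨h2, ?_, h4, ?_⟩ <;> rw [_root_.compl_compl] <;> assumption

theorem Cross.compl_left {C D : Set X} (h : Cross C D) : Cross Cᶜ D := h.symm.compl_right.symm

theorem cross_compl_iff {C D : Set X} : Cross C Dᶜ ↔ Cross C D :=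
  ⟨fun h => by simpa using h.compl_right, fun h => h.compl_right⟩

theorem bd_inter_union (C D : Set X) : bd Γ (C ∩ D) ∪ bd Γ (C ∪ D) ⊆ bd Γ C ∪ bd Γ D ∧
    bd Γ (C ∩ D) ∩ bd Γ (C ∪ D) ⊆ bd Γ C ∩ bd Γ D := by
  constructor
  · rintro ⟨a, b⟩ (⟨h1, h2, h3⟩ | ⟨h1, h2, h3⟩)
    · by_cases hb : b ∈ C
      · exact Or.inr ⟨h1.2, fun h => h2 ⟨hb, h⟩, h3⟩
      · exact Or.inl ⟨h1.1, hb, h3⟩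
    · rcases h1 with h1 | h1
      · exact Or.inl ⟨h1, fun h => h2 (Or.inl h), h3⟩
      · exact Or.inr ⟨h1, fun h => h2 (Or.inr h), h3⟩
  · rintro ⟨a, b⟩ ⟨⟨h1, h2, h3⟩, ⟨h4, h5, h6⟩⟩
    exact ⟨⟨h1.1, fun h => h5 (Or.inl h), h3⟩, ⟨h1.2, fun h => h5 (Or.inr h), h3⟩⟩

theorem mu_submod {C D : Set X} (hC : (bd Γ C).Finite) (hD : (bd Γ D).Finite) :
    mu Γ (C ∩ D) + mu Γ (Cᶜ ∩ Dᶜ) ≤ mu Γ C + mu Γ D := by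
  rw [← Set.compl_union, mu_compl]
  exact ncard_submod hC hD (bd_inter_union C D).1 (bd_inter_union C D).2

theorem bd_inter_finite {C D : Set X} (hC : (bd Γ C).Finite) (hD : (bd Γ D).Finite) :
    (bd Γ (C ∩ D)).Finite :=
  (hC.union hD).subset (Set.subset_union_left.trans (bd_inter_union C D).1)

variable {K : ℕ}

theorem IsMin.compl {α : Ultrafilter X × Ultrafilter X} {C : Set X} (h : IsMin Γ K α C) :
    IsMin Γ K α Cᶜ := by
  obtain ⟨h1, h2, h3, h4⟩ := h
  refine ⟨bd_compl_finite h1, h2.compl, ?_, ?_⟩ <;> rw [mu_compl] <;> assumption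

theorem XS_compl (C : Set X) : XS Γ K Cᶜ = XS Γ K C := by
  ext F; simp [XS, cross_compl_iff]

theorem IsOpt.compl {α : Ultrafilter X × Ultrafilter X} {C : Set X} (h : IsOpt Γ K α C) :
    IsOpt Γ K α Cᶜ := by
  refine ⟨h.1.compl, ?_⟩
  rw [XS_compl]; exact h.2

theorem eq_univ_of_bd (hc : Γ.Connected) {C : Set X} (hne : C.Nonempty) (h : bd Γ C = ∅) :
    C = Set.univ := by
  obtain ⟨x, hx⟩ := hne
  rw [Set.eq_univ_iff_forall]
  intro y
  by_contra hy
  obtain ⟨p⟩ := hc x y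
  obtain ⟨d, hd, k1, k2⟩ := p.exists_boundary_dart C hx hy
  have : (d.fst, d.snd) ∈ bd Γ C := ⟨k1, k2, d.adj⟩
  rw [h] at this
  exact this

theorem IsMin.conn (hc : Γ.Connected) {α : Ultrafilter X × Ultrafilter X} {C : Set X}
    (h : IsMin Γ K α C) : Conn Γ C := by
  obtain ⟨h1, h2, h3, h4⟩ := h
  intro A hA hne hcl
  have hun : bd Γ C = bd Γ A ∪ bd Γ (C \ A) := by
    ext ⟨a, b⟩
    constructor
    · rintro ⟨k1, k2, k3⟩
      by_cases ha : a ∈ A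
      · exact Or.inl ⟨ha, fun hb => k2 (hA hb), k3⟩
      · exact Or.inr ⟨⟨k1, ha⟩, fun hb => k2 hb.1, k3⟩
    · rintro (⟨k1, k2, k3⟩ | ⟨k1, k2, k3⟩)
      · exact ⟨hA k1, fun hb => k2 (hcl a k1 b hb k3), k3⟩
      · exact ⟨k1.1, fun hb => k2 ⟨hb, fun hbA => k1.2 (hcl b hbA a k1.1 k3.symm)⟩, k3⟩
  have hdis : Disjoint (bd Γ A) (bd Γ (C \ A)) := by
    rw [Set.disjoint_left]
    rintro ⟨a, b⟩ k1 k2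
    exact k2.1.2 k1.1
  have f1 : (bd Γ A).Finite := h1.subset (by rw [hun]; exact Set.subset_union_left)
  have f2 : (bd Γ (C \ A)).Finite := h1.subset (by rw [hun]; exact Set.subset_union_right)
  have hcard : mu Γ C = mu Γ A + mu Γ (C \ A) := by
    unfold mu; rw [hun, Set.ncard_union_eq hdis f1 f2]
  have hunion : C = A ∪ (C \ A) := (Set.union_sdiff_cancel hA).symm
  have hsep : Sep α A ∨ Sep α (C \ A) := by
    have hm : ∀ p : Ultrafilter X, C ∈ p ↔ A ∈ p ∨ C \ A ∈ p := by
      intro p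
      conv_lhs => rw [hunion]
      exact Ultrafilter.union_mem_iff
    have hx : ∀ p : Ultrafilter X, ¬ (A ∈ p ∧ C \ A ∈ p) := by
      rintro p ⟨e1, e2⟩
      have := Filter.inter_mem e1 e2
      rw [Set.inter_sdiff_self] at this
      exact p.empty_notMem this
    unfold Sep at *
    have := hm α.1; have := hm α.2; have := hx α.1; have := hx α.2
    tauto
  rcases hsep with hs | hs
  · have := h4 _ f1 hs
    have h0 : mu Γ (C \ A) = 0 := by omega
    have h00 : bd Γ (C \ A) = ∅ := (Set.ncard_eq_zero f2).1 h0
    by_contra hne2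
    have hne3 : (C \ A).Nonempty := by
      rw [Set.nonempty_iff_ne_empty]
      intro he
      rw [he, Set.union_empty] at hunion
      exact hne2 hunion.symm
    have := eq_univ_of_bd hc hne3 h00
    obtain ⟨x, hx⟩ := hne
    have hx' : x ∈ C \ A := this ▸ Set.mem_univ x
    exact hx'.2 hx
  · have := h4 _ f2 hs
    have h0 : mu Γ A = 0 := by omega
    have h00 : bd Γ A = ∅ := (Set.ncard_eq_zero f1).1 h0
    have := eq_univ_of_bd hc hne h00
    exact Set.Subset.antisymm hA (by rw [this]; exact Set.subset_univ _)

theorem XS_finite (hc : Γ.Connected) {C : Set X} (hC : (bd Γ C).Finite) :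
    (XS Γ K C).Finite := by
  classical
  have hw : ∀ x y, ∃ p : Γ.Walk x y, True := fun x y => by
    obtain ⟨p⟩ := hc x y; exact ⟨p, trivial⟩
  choose w _ using hw
  have hfin : (⋃ e ∈ bd Γ C, ⋃ e' ∈ bd Γ C, ⋃ d ∈ {d | d ∈ (w e.1 e'.1).darts},
      {D : Set X | Conn Γ D ∧ Conn Γ Dᶜ ∧ (bd Γ D).Finite ∧ (bd Γ D).ncard ≤ K ∧
        d.fst ∈ D ∧ d.snd ∉ D}).Finite :=
    hC.biUnion fun e _ => hC.biUnion fun e' _ => (List.finite_toSet _).biUnion fun d _ =>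
      finite_cuts K Γ d.fst d.snd d.adj
  refine hfin.subset ?_
  rintro F ⟨⟨α, hF⟩, hcr⟩
  have key : ∀ F : Set X, Conn Γ F → (F ∩ C).Nonempty → (F ∩ Cᶜ).Nonempty →
      ∃ e ∈ bd Γ C, e.1 ∈ F := by
    intro F hF h1 h2
    by_contra hcon
    have := hF (F ∩ C) Set.inter_subset_left h1 (by
      intro a ha b hb hab
      refine ⟨hb, ?_⟩
      by_contra hbC
      exact hcon ⟨(a, b), ⟨ha.2, hbC, hab⟩, ha.1⟩)
    obtain ⟨y, hy⟩ := h2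
    have hy' : y ∈ F ∩ C := by rw [this]; exact hy.1
    exact hy.2 hy'.2
  have c1 := hF.conn hc
  have c2 := hF.compl.conn hc
  obtain ⟨e, he, h1⟩ := key F c1 hcr.1 hcr.2.1
  obtain ⟨e', he', h2⟩ := key Fᶜ c2 hcr.2.2.1 hcr.2.2.2
  obtain ⟨d, hd, k1, k2⟩ := (w e.1 e'.1).exists_boundary_dart F h1 h2
  simp only [Set.mem_iUnion]
  exact ⟨e, he, e', he', d, hd, c1, c2, hF.1, hF.2.2.1, k1, k2⟩

theorem XS_lt (hc : Γ.Connected) {C D : Set X} {α : Ultrafilter X × Ultrafilter X}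
    (hC : IsMin Γ K α C) (hD : (bd Γ D).Finite) (hcr : Cross C D) :
    (XS Γ K (C ∩ D)).ncard + (XS Γ K (Cᶜ ∩ Dᶜ)).ncard < (XS Γ K C).ncard + (XS Γ K D).ncard := by
  have l1 : ∀ F, Cross F (C ∩ D) → ¬ (C ∪ D = Set.univ) → Cross F C ∨ Cross F D := by
    intro F hF hun
    by_contra hcon
    push Not at hcon
    obtain ⟨n1, n2⟩ := hcon
    obtain ⟨⟨x1, hx1⟩, ⟨x2, hx2⟩, ⟨x3, hx3⟩, ⟨x4, hx4⟩⟩ := hF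
    obtain ⟨z, hz⟩ := (Set.ne_univ_iff_exists_notMem _).1 hun
    have e1 : (F ∩ Cᶜ).Nonempty → (Fᶜ ∩ Cᶜ).Nonempty → False := fun a b =>
      n1 ⟨⟨x1, hx1.1, hx1.2.1⟩, a, ⟨x3, hx3.1, hx3.2.1⟩, b⟩
    have e2 : (F ∩ Dᶜ).Nonempty → (Fᶜ ∩ Dᶜ).Nonempty → False := fun a b =>
      n2 ⟨⟨x1, hx1.1, hx1.2.2⟩, a, ⟨x3, hx3.1, hx3.2.2⟩, b⟩
    have hzC : z ∉ C := fun h => hz (Or.inl h)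
    have hzD : z ∉ D := fun h => hz (Or.inr h)
    by_cases hzF : z ∈ F
    · have g1 : x4 ∈ C := by_contra fun h => e1 ⟨z, hzF, hzC⟩ ⟨x4, hx4.1, h⟩
      have g2 : x4 ∈ D := by_contra fun h => e2 ⟨z, hzF, hzD⟩ ⟨x4, hx4.1, h⟩
      exact hx4.2 ⟨g1, g2⟩
    · have g1 : x2 ∈ C := by_contra fun h => e1 ⟨x2, hx2.1, h⟩ ⟨z, hzF, hzC⟩
      have g2 : x2 ∈ D := by_contra fun h => e2 ⟨x2, hx2.1, h⟩ ⟨z, hzF, hzD⟩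
      exact hx2.2 ⟨g1, g2⟩
  obtain ⟨⟨x1, hx1⟩, ⟨x2, hx2⟩, ⟨x3, hx3⟩, ⟨x4, hx4⟩⟩ := id hcr
  refine ncard_submod_lt (XS_finite hc hC.1) (XS_finite hc hD) (c := C) ?_ ?_ ?_ ?_
  · rintro F (⟨hF, hF'⟩ | ⟨hF, hF'⟩)
    · rcases l1 F hF' (fun h => by
        have : x4 ∈ C ∪ D := h ▸ Set.mem_univ _
        rcases this with h | h
        · exact hx4.1 h
        · exact hx4.2 h) with h | h
      · exact Or.inl ⟨hF, h⟩
      · exact Or.inr ⟨hF, h⟩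
    · rw [← Set.compl_union, cross_compl_iff] at hF'
      have hF'' : Cross F (Cᶜ ∩ Dᶜ) := by rw [← Set.compl_union, cross_compl_iff]; exact hF'
      by_contra hcon
      have n1 : ¬ Cross F C := fun h => hcon (Or.inl ⟨hF, h⟩)
      have n2 : ¬ Cross F D := fun h => hcon (Or.inr ⟨hF, h⟩)
      obtain ⟨⟨y1, hy1⟩, ⟨y2, hy2⟩, ⟨y3, hy3⟩, ⟨y4, hy4⟩⟩ := hF''
      have e1 : (F ∩ C).Nonempty → (Fᶜ ∩ C).Nonempty → False := fun a b =>
        n1 ⟨a, ⟨y1, hy1.1, hy1.2.1⟩, b, ⟨y3, hy3.1, hy3.2.1⟩⟩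
      have e2 : (F ∩ D).Nonempty → (Fᶜ ∩ D).Nonempty → False := fun a b =>
        n2 ⟨a, ⟨y1, hy1.1, hy1.2.2⟩, b, ⟨y3, hy3.1, hy3.2.2⟩⟩
      by_cases hzF : x1 ∈ F
      · have g1 : y4 ∈ Cᶜ := fun h => e1 ⟨x1, hzF, hx1.1⟩ ⟨y4, hy4.1, h⟩
        have g2 : y4 ∈ Dᶜ := fun h => e2 ⟨x1, hzF, hx1.2⟩ ⟨y4, hy4.1, h⟩
        exact hy4.2 ⟨g1, g2⟩
      · have g1 : y2 ∈ Cᶜ := fun h => e1 ⟨y2, hy2.1, h⟩ ⟨x1, hzF, hx1.1⟩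
        have g2 : y2 ∈ Dᶜ := fun h => e2 ⟨y2, hy2.1, h⟩ ⟨x1, hzF, hx1.2⟩
        exact hy2.2 ⟨g1, g2⟩
  · rintro F ⟨⟨hF, h1⟩, ⟨_, h2⟩⟩
    obtain ⟨⟨y1, hy1⟩, -, ⟨y3, hy3⟩, -⟩ := h1
    obtain ⟨⟨z1, hz1⟩, -, ⟨z3, hz3⟩, -⟩ := h2
    exact ⟨⟨hF, ⟨y1, hy1.1, hy1.2.1⟩, ⟨z1, hz1.1, hz1.2.1⟩, ⟨y3, hy3.1, hy3.2.1⟩,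
      ⟨z3, hz3.1, hz3.2.1⟩⟩, ⟨hF, ⟨y1, hy1.1, hy1.2.2⟩, ⟨z1, hz1.1, hz1.2.2⟩,
      ⟨y3, hy3.1, hy3.2.2⟩, ⟨z3, hz3.1, hz3.2.2⟩⟩⟩
  · exact Or.inr ⟨⟨α, hC⟩, hcr⟩
  · rintro (⟨-, h⟩ | ⟨-, h⟩)
    · obtain ⟨-, -, ⟨y, hy⟩, -⟩ := h
      exact hy.1 hy.2.1
    · obtain ⟨⟨y, hy⟩, -⟩ := h
      exact hy.2.1 hy.1

theorem nested_aux (hc : Γ.Connected) {C D : Set X} {α β : Ultrafilter X × Ultrafilter X}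
    (hC : IsOpt Γ K α C) (hD : IsOpt Γ K β D) (hcr : Cross C D) (h1 : Sep α (C ∩ D))
    (h2 : Sep β (Cᶜ ∩ Dᶜ)) : False := by
  have s := mu_submod hC.1.1 hD.1.1
  have fa := bd_inter_finite hC.1.1 hD.1.1
  have fd := bd_inter_finite (bd_compl_finite hC.1.1) (bd_compl_finite hD.1.1)
  have e1 := hC.1.2.2.2 _ fa h1
  have e2 := hD.1.2.2.2 _ fd h2
  have hC3 := hC.1.2.2.1
  have hD3 := hD.1.2.2.1
  have m1 : IsMin Γ K α (C ∩ D) :=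
    ⟨fa, h1, by omega, fun E hE hE' => by have := hC.1.2.2.2 E hE hE'; omega⟩
  have m2 : IsMin Γ K β (Cᶜ ∩ Dᶜ) :=
    ⟨fd, h2, by omega, fun E hE hE' => by have := hD.1.2.2.2 E hE hE'; omega⟩
  have l := XS_lt hc hC.1 hD.1.1 hcr
  have l1 := hC.2 _ m1
  have l2 := hD.2 _ m2
  omega

theorem nested_aux2 (hc : Γ.Connected) {C D : Set X} {α β : Ultrafilter X × Ultrafilter X}
    (hC : IsOpt Γ K α C) (hD : IsOpt Γ K β D) (hcr : Cross C D) (h1 : Sep α (C ∩ D))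
    (h2 : Sep α (Cᶜ ∩ Dᶜ)) (h3 : Sep α D) (h4 : Sep β C) : False := by
  have s := mu_submod hC.1.1 hD.1.1
  have fa := bd_inter_finite hC.1.1 hD.1.1
  have fd := bd_inter_finite (bd_compl_finite hC.1.1) (bd_compl_finite hD.1.1)
  have e0 := hC.1.2.2.2 _ hD.1.1 h3
  have e0' := hD.1.2.2.2 _ hC.1.1 h4
  have e1 := hC.1.2.2.2 _ fa h1
  have e2 := hC.1.2.2.2 _ fd h2
  have hC3 := hC.1.2.2.1
  have hD3 := hD.1.2.2.1
  have m0 : IsMin Γ K α D :=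
    ⟨hD.1.1, h3, by omega, fun E hE hE' => by have := hC.1.2.2.2 E hE hE'; omega⟩
  have m0' : IsMin Γ K β C :=
    ⟨hC.1.1, h4, by omega, fun E hE hE' => by have := hD.1.2.2.2 E hE hE'; omega⟩
  have m1 : IsMin Γ K α (C ∩ D) :=
    ⟨fa, h1, by omega, fun E hE hE' => by have := hC.1.2.2.2 E hE hE'; omega⟩
  have m2 : IsMin Γ K α (Cᶜ ∩ Dᶜ) :=
    ⟨fd, h2, by omega, fun E hE hE' => by have := hC.1.2.2.2 E hE hE'; omega⟩
  have l := XS_lt hc hC.1 hD.1.1 hcr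
  have l0 := hC.2 _ m0
  have l0' := hD.2 _ m0'
  have l1 := hC.2 _ m1
  have l2 := hC.2 _ m2
  omega

theorem nested (hc : Γ.Connected) {C D : Set X} {α β : Ultrafilter X × Ultrafilter X}
    (hC : IsOpt Γ K α C) (hD : IsOpt Γ K β D) : ¬ Cross C D := by
  intro hcr
  have k1 := nested_aux hc hC hD hcr
  have k2 := nested_aux hc hC.compl hD.compl hcr.compl_left.compl_right
  have k3 := nested_aux hc hC hD.compl hcr.compl_right
  have k4 := nested_aux hc hC.compl hD hcr.compl_left
  have j1 := nested_aux2 hc hC hD hcr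
  have j2 := nested_aux2 hc hC hD.compl hcr.compl_right
  have hCs := hC.1.2.1
  have hDs := hD.1.2.1
  have I : ∀ (p : Ultrafilter X) (A B : Set X), A ∩ B ∈ p ↔ A ∈ p ∧ B ∈ p :=
    fun p A B => Filter.inter_mem_iff
  simp only [Sep, I, Ultrafilter.compl_mem_iff_notMem, not_not] at k1 k2 k3 k4 j1 j2 hCs hDs
  clear hC hD hcr I
  by_cases a1 : C ∈ α.1 <;> by_cases a2 : D ∈ α.1 <;> by_cases a3 : D ∈ α.2 <;>
  by_cases b1 : C ∈ β.1 <;> by_cases b2 : D ∈ β.1 <;> by_cases b3 : C ∈ β.2 <;>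
  by_cases a4 : C ∈ α.2 <;> by_cases b4 : D ∈ β.2 <;>
  simp [a1, a2, a3, a4, b1, b2, b3, b4] at *

theorem exists_opt {α : Ultrafilter X × Ultrafilter X} {C : Set X} (hf : (bd Γ C).Finite)
    (hs : Sep α C) (hK : mu Γ C ≤ K) : ∃ D, IsOpt Γ K α D := by
  have h1 : ∃ D, IsMin Γ K α D := by
    let P : Set ℕ := {n | ∃ D, (bd Γ D).Finite ∧ Sep α D ∧ mu Γ D = n}
    have hP : P.Nonempty := ⟨mu Γ C, C, hf, hs, rfl⟩
    obtain ⟨D, d1, d2, d3⟩ := Nat.sInf_mem hP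
    refine ⟨D, d1, d2, ?_, fun E e1 e2 => ?_⟩
    · rw [d3]; exact (Nat.sInf_le (show mu Γ C ∈ P from ⟨C, hf, hs, rfl⟩)).trans hK
    · rw [d3]; exact Nat.sInf_le ⟨E, e1, e2, rfl⟩
  let P : Set ℕ := {n | ∃ D, IsMin Γ K α D ∧ (XS Γ K D).ncard = n}
  have hP : P.Nonempty := by obtain ⟨D, hD⟩ := h1; exact ⟨(XS Γ K D).ncard, D, hD, rfl⟩
  obtain ⟨D, d1, d2⟩ := Nat.sInf_mem hP
  exact ⟨D, d1, fun E hE => by rw [d2]; exact Nat.sInf_le ⟨E, hE, rfl⟩⟩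

/-- transport along an automorphism -/
theorem IsMin.map (e : X ≃ X) (he : ∀ x y, Γ.Adj (e x) (e y) ↔ Γ.Adj x y) :
    (∀ C, bd Γ (e ⁻¹' C) = (Prod.map e e) ⁻¹' bd Γ C) ∧
    (∀ C, mu Γ (e ⁻¹' C) = mu Γ C) ∧
    (∀ C, (bd Γ C).Finite → (bd Γ (e ⁻¹' C)).Finite) := by
  have h1 : ∀ C, bd Γ (e ⁻¹' C) = (Prod.map e e) ⁻¹' bd Γ C := by
    intro C
    ext ⟨a, b⟩
    simp [bd, he]
  have hb : Function.Bijective (Prod.map e e) := (Equiv.prodCongr e e).bijective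
  refine ⟨h1, ?_, ?_⟩
  · intro C
    unfold mu; rw [h1]
    exact Set.ncard_preimage_of_injective_subset_range hb.1 (fun x _ => hb.2 x)
  · intro C hC
    rw [h1]; exact hC.preimage hb.1.injOn

theorem sep_map (e : X ≃ X) (α : Ultrafilter X × Ultrafilter X) (C : Set X) :
    Sep (α.1.map e.symm, α.2.map e.symm) (e ⁻¹' C) ↔ Sep α C := by
  unfold Sep
  simp only [Ultrafilter.mem_map]
  have : e.symm ⁻¹' (e ⁻¹' C) = C := by ext x; simp
  rw [this]

theorem IsMin.map' (e : X ≃ X) (he : ∀ x y, Γ.Adj (e x) (e y) ↔ Γ.Adj x y)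
    {α : Ultrafilter X × Ultrafilter X} {C : Set X} (h : IsMin Γ K α C) :
    IsMin Γ K (α.1.map e.symm, α.2.map e.symm) (e ⁻¹' C) := by
  obtain ⟨h1, h2, h3, h4⟩ := h
  have M := IsMin.map e he
  have he' : ∀ x y, Γ.Adj (e.symm x) (e.symm y) ↔ Γ.Adj x y := fun x y => by
    rw [← he]; simp
  have M' := IsMin.map e.symm he'
  refine ⟨M.2.2 C h1, (sep_map e α C).2 h2, by rw [M.2.1]; exact h3, ?_⟩
  intro D hD hs
  rw [M.2.1, ← M'.2.1 D]
  refine h4 _ (M'.2.2 D hD) ?_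
  rw [← sep_map e]
  have : e ⁻¹' (e.symm ⁻¹' D) = D := by ext x; simp
  rw [this]; exact hs

theorem cross_map (e : X ≃ X) (C D : Set X) : Cross (e ⁻¹' C) (e ⁻¹' D) ↔ Cross C D := by
  unfold Cross
  simp only [← Set.preimage_compl, ← Set.preimage_inter]
  have : ∀ A : Set X, (e ⁻¹' A).Nonempty ↔ A.Nonempty := by
    intro A
    constructor
    · rintro ⟨x, hx⟩; exact ⟨e x, hx⟩
    · rintro ⟨x, hx⟩; exact ⟨e.symm x, by simpa using hx⟩
  simp only [this]

theorem XS_map (e : X ≃ X) (he : ∀ x y, Γ.Adj (e x) (e y) ↔ Γ.Adj x y) (C : Set X) :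
    (XS Γ K (e ⁻¹' C)).ncard = (XS Γ K C).ncard := by
  have he' : ∀ x y, Γ.Adj (e.symm x) (e.symm y) ↔ Γ.Adj x y := fun x y => by
    rw [← he]; simp
  have hinj : Function.Injective (fun F : Set X => e ⁻¹' F) :=
    Set.preimage_injective.2 e.surjective
  rw [← Set.ncard_image_of_injective (XS Γ K C) hinj]
  congr 1
  ext F
  constructor
  · rintro ⟨⟨α, hα⟩, hF⟩
    have e1 : e ⁻¹' (e.symm ⁻¹' F) = F := by ext x; simp
    refine ⟨e.symm ⁻¹' F, ⟨⟨_, hα.map' e.symm he'⟩, ?_⟩, e1⟩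
    rw [← cross_map e, e1]; exact hF
  · rintro ⟨F, ⟨⟨α, hα⟩, hF⟩, rfl⟩
    exact ⟨⟨_, hα.map' e he⟩, (cross_map e F C).2 hF⟩

theorem IsOpt.map (e : X ≃ X) (he : ∀ x y, Γ.Adj (e x) (e y) ↔ Γ.Adj x y)
    {α : Ultrafilter X × Ultrafilter X} {C : Set X} (h : IsOpt Γ K α C) :
    IsOpt Γ K (α.1.map e.symm, α.2.map e.symm) (e ⁻¹' C) := by
  refine ⟨h.1.map' e he, ?_⟩
  intro D hD
  have he' : ∀ x y, Γ.Adj (e.symm x) (e.symm y) ↔ Γ.Adj x y := fun x y => by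
    rw [← he]; simp
  have := hD.map' e.symm he'
  have e2 : ∀ p : Ultrafilter X, (p.map e.symm).map e = p := by
    intro p
    rw [Ultrafilter.map_map]
    simp
  simp only [Equiv.symm_symm, e2] at this
  rw [XS_map e he, ← XS_map e.symm he' D]
  exact h.2 _ this

end cuts
end VF

namespace VF
open SimpleGraph

universe u
section pocset
variable {G : Type u} [Group G]

/-- Left translation (by the inverse) of a set. -/
def ltr (g : G) (C : Set G) : Set G := (fun x => g * x) ⁻¹' C

theorem mem_ltr {g x : G} {C : Set G} : x ∈ ltr g C ↔ g * x ∈ C := Iff.rfl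

theorem ltr_ltr (g h : G) (C : Set G) : ltr h (ltr g C) = ltr (g * h) C := by
  ext x; simp [mem_ltr, mul_assoc]

theorem ltr_one (C : Set G) : ltr 1 C = C := by
  ext x; simp [mem_ltr]

theorem ltr_compl (g : G) (C : Set G) : ltr g Cᶜ = (ltr g C)ᶜ := rfl

theorem ltr_inj (g : G) : Function.Injective (ltr g) := by
  intro C D h
  have := congrArg (ltr g⁻¹) h
  simpa [ltr_ltr, ltr_one] using this

theorem ltr_mono (g : G) {C D : Set G} (h : C ⊆ D) : ltr g C ⊆ ltr g D := fun _ hx => h hx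

/-- vertices of the dual tree -/
structure IsVert (O : Set (Set G)) (x : Set (Set G)) : Prop where
  sub : x ⊆ O
  alt : ∀ C ∈ O, (C ∈ x ↔ Cᶜ ∉ x)
  up : ∀ C ∈ x, ∀ D ∈ O, C ⊆ D → D ∈ x
  fin : {C | C ∈ O ∧ (1 : G) ∈ C ∧ C ∉ x}.Finite

/-- nested translation-invariant families of cuts -/
structure Cuts (O : Set (Set G)) : Prop where
  compl : ∀ C ∈ O, Cᶜ ∈ O
  inv : ∀ (g : G), ∀ C ∈ O, ltr g C ∈ O
  nest : ∀ C ∈ O, ∀ D ∈ O, ¬ Cross C D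
  ne : ∀ C ∈ O, C.Nonempty
  fin : ∀ g h : G, {C | C ∈ O ∧ g ∈ C ∧ h ∉ C}.Finite
  rep : ∃ R : Set (Set G), R.Finite ∧ ∀ C ∈ O, ∃ g : G, ltr g C ∈ R

variable {O : Set (Set G)}

/-- adjacency through `C` -/
def AdjVia (C : Set G) (x y : Set (Set G)) : Prop := C ∈ x ∧ C ∉ y ∧ ∀ D ∈ x, D ≠ C → D ∈ y

theorem IsVert.eq_of_subset {x y : Set (Set G)} (hx : IsVert O x) (hy : IsVert O y)
    (h : x ⊆ y) : x = y := by
  refine h.antisymm ?_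
  intro D hD
  by_contra hD'
  have h1 : Dᶜ ∈ x := by
    by_contra h2
    exact hD' ((hx.alt D (hy.sub hD)).2 h2)
  exact (hy.alt D (hy.sub hD)).1 hD (h h1)

theorem IsVert.mem_compl (hO : Cuts O) {x : Set (Set G)} (hx : IsVert O x) {C : Set G} (hC : C ∈ O) (h : C ∉ x) : Cᶜ ∈ x := by
  by_contra h2
  exact h ((hx.alt C hC).2 h2)

theorem AdjVia.symm (hO : Cuts O) {C : Set G} {x y : Set (Set G)} (hx : IsVert O x)
    (hy : IsVert O y) (h : AdjVia C x y) : AdjVia Cᶜ y x := by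
  obtain ⟨h1, h2, h3⟩ := h
  refine ⟨hy.mem_compl hO (hx.sub h1) h2, (hx.alt C (hx.sub h1)).1 h1, ?_⟩
  intro D hD hne
  by_contra hDx
  have h4 := hx.mem_compl hO (hy.sub hD) hDx
  have h5 := h3 _ h4 (by rintro rfl; simp at hne)
  exact (hy.alt D (hy.sub hD)).1 hD h5

theorem AdjVia.uniq (hO : Cuts O) {C : Set G} {x y a b : Set (Set G)} (hx : IsVert O x)
    (hy : IsVert O y) (ha : IsVert O a) (hb : IsVert O b) (h : AdjVia C x y) (h' : AdjVia C a b) :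
    a = x ∧ b = y := by
  obtain ⟨h1, h2, h3⟩ := h
  obtain ⟨k1, k2, k3⟩ := h'
  have hC := hx.sub h1
  have e : a = x := by
    refine ha.eq_of_subset hx ?_
    intro D hD
    have hn := hO.nest C hC D (ha.sub hD)
    by_cases c1 : (C ∩ D).Nonempty
    · by_cases c2 : (C ∩ Dᶜ).Nonempty
      · by_cases c3 : (Cᶜ ∩ D).Nonempty
        · have c4 : ¬ (Cᶜ ∩ Dᶜ).Nonempty := fun c4 => hn ⟨c1, c2, c3, c4⟩
          by_contra hDx
          have h4 := hx.mem_compl hO (ha.sub hD) hDx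
          have h5 : Dᶜ ≠ C := by
            rintro rfl
            exact (ha.alt D (ha.sub hD)).1 hD k1
          refine h2 (hy.up _ (h3 _ h4 h5) C hC ?_)
          intro z hz
          by_contra hzC
          exact c4 ⟨z, hzC, hz⟩
        · have hDC : D ⊆ C := by
            intro z hz
            by_contra hzC
            exact c3 ⟨z, hzC, hz⟩
          by_cases e : D = C
          · rw [e]; exact h1
          · exact absurd (hb.up _ (k3 D hD e) C hC hDC) k2
      · refine hx.up C h1 D (ha.sub hD) ?_
        intro z hz
        by_contra hzD
        exact c2 ⟨z, hz, hzD⟩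
    · exfalso
      refine (ha.alt C hC).1 k1 (ha.up D hD _ (hO.compl C hC) ?_)
      intro z hz hzC
      exact c1 ⟨z, hzC, hz⟩
  refine ⟨e, hb.eq_of_subset hy ?_⟩
  subst e
  intro D hD
  by_cases e : D = Cᶜ
  · rw [e]; exact hy.mem_compl hO hC h2
  · refine h3 D ?_ (by rintro rfl; exact k2 hD)
    exact (AdjVia.symm hO ha hb ⟨k1, k2, k3⟩).2.2 D hD e

theorem IsVert.diff_finite (hO : Cuts O) {x y : Set (Set G)} (hx : IsVert O x) (hy : IsVert O y) :
    (x \ y).Finite := by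
  refine (hy.fin.union (hx.fin.image compl)).subset ?_
  rintro C ⟨h1, h2⟩
  have hC := hx.sub h1
  by_cases e : (1 : G) ∈ C
  · exact Or.inl ⟨hC, e, h2⟩
  · exact Or.inr ⟨Cᶜ, ⟨hO.compl C hC, e, (hx.alt C hC).1 h1⟩, _root_.compl_compl C⟩

theorem IsVert.flip (hO : Cuts O) {x : Set (Set G)} (hx : IsVert O x) {C : Set G} (hC : C ∈ x)
    (hmin : ∀ D ∈ x, D ⊆ C → D = C) : IsVert O (insert Cᶜ (x \ {C})) := by
  have hCO := hx.sub hC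
  have hCn : C ≠ Cᶜ := by
    intro e
    obtain ⟨z, hz⟩ := hO.ne C hCO
    have : z ∈ Cᶜ := by rw [← e]; exact hz
    exact this hz
  refine ⟨?_, ?_, ?_, ?_⟩
  · rintro D (rfl | ⟨h, -⟩)
    · exact hO.compl C hCO
    · exact hx.sub h
  · intro D hD
    have := hx.alt D hD
    have h2 := hx.alt C hCO
    by_cases e1 : D = C
    · subst e1; simp [hCn]
    · by_cases e2 : D = Cᶜ
      · subst e2; simp [hCn]
      · have e3 : Dᶜ ≠ C := by rintro rfl; simp at e2
        have e4 : Dᶜ ≠ Cᶜ := by simpa using e1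
        simp only [Set.mem_insert_iff, Set.mem_diff, Set.mem_singleton_iff, e1, e2, e3, e4]
        tauto
  · rintro A hA B hB hAB
    by_cases e : B = Cᶜ
    · exact Or.inl e
    refine Or.inr ?_
    rcases hA with rfl | ⟨hA, hAC⟩
    · have hBx : B ∈ x := by
        by_contra h
        have := hmin _ (hx.mem_compl hO hB h) (by
          intro z hz; by_contra hzC; exact hz (hAB hzC))
        exact e (by rw [← this, _root_.compl_compl])
      refine ⟨hBx, ?_⟩
      rintro rfl
      obtain ⟨z, hz⟩ := hO.ne _ (hO.compl _ hCO)
      exact hz (hAB hz)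
    · refine ⟨hx.up A hA B hB hAB, ?_⟩
      rintro rfl
      exact hAC (hmin A hA hAB)
  · refine (hx.fin.insert C).subset ?_
    rintro D ⟨h1, h2, h3⟩
    by_cases e : D = C
    · exact Or.inl e
    · refine Or.inr ⟨h1, h2, fun h => h3 (Or.inr ⟨h, e⟩)⟩

/-- the dual tree -/
def PV (O : Set (Set G)) : Type u := {x : Set (Set G) // IsVert O x}

/-- translation of a vertex -/
def vtr (g : G) (x : Set (Set G)) : Set (Set G) := {C | ltr g C ∈ x}

theorem IsVert.vtr (hO : Cuts O) {x : Set (Set G)} (hx : IsVert O x) (g : G) :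
    IsVert O (vtr g x) := by
  have key : ∀ C, ltr g C ∈ O → C ∈ O := by
    intro C hC
    have := hO.inv g⁻¹ _ hC
    simpa [ltr_ltr, ltr_one] using this
  refine ⟨fun C hC => key C (hx.sub hC), ?_, ?_, ?_⟩
  · intro C hC
    exact hx.alt _ (hO.inv g C hC)
  · intro C hC D hD hCD
    exact hx.up _ hC _ (hO.inv g D hD) (ltr_mono g hCD)
  · refine ((hx.fin.union (hO.fin g⁻¹ 1)).preimage (f := ltr g) (ltr_inj g).injOn).subset ?_
    rintro C ⟨h1, h2, h3⟩
    by_cases e : (1 : G) ∈ ltr g C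
    · exact Or.inl ⟨hO.inv g C h1, e, h3⟩
    · exact Or.inr ⟨hO.inv g C h1, by simpa [mem_ltr] using h2, e⟩

/-- action on vertices -/
@[reducible] def pvAction (hO : Cuts O) : MulAction G (PV O) where
  smul g x := ⟨vtr g x.1, x.2.vtr hO g⟩
  one_smul x := Subtype.ext (by
    change vtr 1 x.1 = x.1
    ext C; simp [vtr, ltr_one])
  mul_smul g h x := Subtype.ext (by
    change vtr (g * h) x.1 = vtr g (vtr h x.1)
    ext C; simp [vtr, ltr_ltr])

theorem pocset_tree (hO : Cuts O)
    (hst : ∀ x, IsVert O x → {g : G | vtr g x = x}.Finite) :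
    ∃ (V : Type u) (_ : MulAction G V) (Γ : SimpleGraph V), GT G Γ := by
  letI := pvAction hO
  have smul_def : ∀ (g : G) (x : PV O), (g • x).1 = vtr g x.1 := fun _ _ => rfl
  let Γ : SimpleGraph (PV O) :=
    { Adj := fun x y => ∃ C, AdjVia C x.1 y.1
      symm := ⟨fun x y ⟨C, h⟩ => ⟨Cᶜ, h.symm hO x.2 y.2⟩⟩
      loopless := ⟨fun x ⟨C, h⟩ => h.2.1 h.1⟩ }
  have hconn : Γ.Connected := by
    have hv : IsVert O {C | C ∈ O ∧ (1 : G) ∈ C} := by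
      refine ⟨fun C h => h.1, ?_, ?_, ?_⟩
      · intro C hC
        simp [hC, hO.compl C hC]
      · intro C hC D hD h
        exact ⟨hD, h hC.2⟩
      · convert Set.finite_empty
        ext C
        simp only [Set.mem_ofPred_eq, Set.mem_empty_iff_false, iff_false]
        tauto
    haveI : Nonempty (PV O) := ⟨⟨_, hv⟩⟩
    refine ⟨?_⟩
    have : ∀ n, ∀ x y : PV O, (x.1 \ y.1).ncard = n → Γ.Reachable x y := by
      intro n
      induction n with
      | zero =>
        intro x y h
        rw [Set.ncard_eq_zero (x.2.diff_finite hO y.2), Set.diff_eq_empty] at h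
        have : x = y := Subtype.ext (x.2.eq_of_subset y.2 h)
        rw [this]
      | succ n ih =>
        intro x y h
        have hf := x.2.diff_finite hO y.2
        have hne : (x.1 \ y.1).Nonempty := by
          rw [← Set.ncard_pos hf]; omega
        obtain ⟨C, hC, hCm⟩ := hf.exists_minimal hne
        have hmin : ∀ D ∈ x.1, D ⊆ C → D = C := by
          intro D hD hDC
          have hDy : D ∉ y.1 := fun hDy => hC.2 (y.2.up D hDy C (x.2.sub hC.1) hDC)
          exact hDC.antisymm (hCm ⟨hD, hDy⟩ hDC)
        let z : PV O := ⟨_, x.2.flip hO hC.1 hmin⟩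
        have hCc : Cᶜ ∈ y.1 := y.2.mem_compl hO (x.2.sub hC.1) hC.2
        have hxz : Γ.Adj x z := by
          refine ⟨C, hC.1, ?_, fun D hD hne => Or.inr ⟨hD, hne⟩⟩
          rintro (e | ⟨-, e⟩)
          · exact hC.2 (e ▸ hCc)
          · exact e rfl
        refine hxz.reachable.trans (ih z y ?_)
        have : z.1 \ y.1 = (x.1 \ y.1) \ {C} := by
          ext D
          constructor
          · rintro ⟨rfl | ⟨h1, h2⟩, h3⟩
            · exact absurd hCc h3
            · exact ⟨⟨h1, h3⟩, h2⟩
          · rintro ⟨⟨h1, h2⟩, h3⟩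
            exact ⟨Or.inr ⟨h1, h3⟩, h2⟩
        rw [this, Set.ncard_diff_singleton_of_mem hC, h]; rfl
    exact fun x y => this _ x y rfl
  refine ⟨PV O, inferInstance, Γ, ?_, ?_, ?_, ?_⟩
  · refine isTree_of_cuts hconn ?_
    rintro x y ⟨C, hC⟩
    refine ⟨{z | C ∈ z.1}, hC.1, hC.2.1, ?_⟩
    rintro a b ⟨E, h1, h2, h3⟩ ha hb
    have : C = E := by
      by_contra e
      exact hb (h3 C ha e)
    subst this
    obtain ⟨e1, e2⟩ := AdjVia.uniq hO x.2 y.2 a.2 b.2 hC ⟨h1, h2, h3⟩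
    exact ⟨Subtype.ext e1, Subtype.ext e2⟩
  · rintro g x y ⟨C, h1, h2, h3⟩
    have e : ltr g (ltr g⁻¹ C) = C := by simp [ltr_ltr, ltr_one]
    refine ⟨ltr g⁻¹ C, ?_, ?_, ?_⟩
    · change ltr g (ltr g⁻¹ C) ∈ x.1; rw [e]; exact h1
    · change ltr g (ltr g⁻¹ C) ∉ y.1; rw [e]; exact h2
    · intro D hD hne
      refine h3 _ hD ?_
      rintro rfl
      exact hne (by simp [ltr_ltr, ltr_one])
  · intro v
    refine (hst v.1 v.2).subset ?_
    intro g hg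
    exact congrArg Subtype.val hg
  · obtain ⟨R, hR, hR'⟩ := hO.rep
    refine ⟨⋃ C ∈ R, {p : PV O × PV O | AdjVia C p.1.1 p.2.1}, hR.biUnion ?_, ?_⟩
    · intro C hC
      refine Set.Subsingleton.finite ?_
      rintro ⟨a, b⟩ h ⟨x, y⟩ h'
      obtain ⟨e1, e2⟩ := AdjVia.uniq hO x.2 y.2 a.2 b.2 h' h
      exact Prod.ext (Subtype.ext e1) (Subtype.ext e2)
    · rintro x y ⟨C, h1, h2, h3⟩
      obtain ⟨g, hg⟩ := hR' C (x.2.sub h1)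
      refine ⟨g⁻¹, Set.mem_biUnion hg ?_⟩
      have e : ltr g⁻¹ (ltr g C) = C := by simp [ltr_ltr, ltr_one]
      refine ⟨?_, ?_, ?_⟩
      · change ltr g⁻¹ (ltr g C) ∈ x.1; rw [e]; exact h1
      · change ltr g⁻¹ (ltr g C) ∉ y.1; rw [e]; exact h2
      · intro D hD hne
        refine h3 _ hD ?_
        rintro rfl
        exact hne (by simp [ltr_ltr, ltr_one])

end pocset
end VF

namespace VF
open SimpleGraph

universe u

section almost
variable {H : Type*} [Group H]

/-- `D` is almost invariant under right multiplication by `c`. -/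
def AI (D : Set H) (c : H) : Prop := {g | g ∈ D ∧ g * c ∉ D}.Finite ∧ {g | g ∉ D ∧ g * c ∈ D}.Finite

theorem AI.closure {S : Set H} {D : Set H} (h : ∀ s ∈ S, AI D s) {c : H}
    (hc : c ∈ Subgroup.closure S) : AI D c := by
  induction hc using Subgroup.closure_induction with
  | mem x hx => exact h x hx
  | one => constructor <;> (convert Set.finite_empty; ext g; simp)
  | mul a b _ _ ha hb =>
    constructor
    · refine (ha.1.union (hb.1.preimage (f := fun g => g * a) (mul_left_injective a).injOn)).subset ?_
      rintro g ⟨h1, h2⟩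
      by_cases e : g * a ∈ D
      · exact Or.inr ⟨e, by simpa [mul_assoc] using h2⟩
      · exact Or.inl ⟨h1, e⟩
    · refine (ha.2.union (hb.2.preimage (f := fun g => g * a) (mul_left_injective a).injOn)).subset ?_
      rintro g ⟨h1, h2⟩
      by_cases e : g * a ∈ D
      · exact Or.inl ⟨h1, e⟩
      · exact Or.inr ⟨e, by simpa [mul_assoc] using h2⟩
  | inv a _ ha =>
    constructor
    · refine (ha.2.preimage (f := fun g => g * a⁻¹) (mul_left_injective a⁻¹).injOn).subset ?_
      rintro g ⟨h1, h2⟩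
      exact ⟨h2, by simpa using h1⟩
    · refine (ha.1.preimage (f := fun g => g * a⁻¹) (mul_left_injective a⁻¹).injOn).subset ?_
      rintro g ⟨h1, h2⟩
      exact ⟨h2, by simpa using h1⟩

theorem AI.periodic {C : Set H} {c : H} (hC : AI C c) (hinf : ∀ j : ℤ, j ≠ 0 → c ^ j ≠ 1) {j : ℤ}
    (hj : j ≠ 0) (hper : ltr (c ^ j) C = C) (n : ℤ) : c ^ n ∈ C ↔ (1 : H) ∈ C := by
  have hper' : ∀ k : ℕ, ∀ m : ℤ, c ^ (m + k * j) ∈ C ↔ c ^ m ∈ C := by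
    intro k
    induction k with
    | zero => intro m; simp
    | succ k ih =>
      intro m
      rw [← ih m]
      conv_rhs => rw [← hper]
      rw [mem_ltr, ← zpow_add]
      have : m + ((k + 1 : ℕ) : ℤ) * j = j + (m + k * j) := by push_cast; ring
      rw [this]
  have hinj : ∀ m : ℤ, Function.Injective (fun k : ℕ => c ^ (m + k * j)) := by
    intro m k k' h
    simp only at h
    by_contra hne
    refine hinf ((m + k * j) - (m + k' * j)) ?_ ?_
    · have : (m + k * j) - (m + k' * j) = ((k : ℤ) - k') * j := by ring
      rw [this]
      refine mul_ne_zero ?_ hj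
      intro h; apply hne; omega
    · rw [zpow_sub, h, mul_inv_cancel]
  have hs : ∀ m : ℤ, c ^ (m + 1) ∈ C ↔ c ^ m ∈ C := by
    intro m
    constructor
    · intro h1
      by_contra h2
      refine Set.infinite_of_injective_forall_mem (hinj m) (fun k => ?_) hC.2
      refine ⟨fun h => h2 ((hper' k m).1 h), ?_⟩
      have := (hper' k (m + 1)).2 h1
      have e : m + 1 + k * j = (m + k * j) + 1 := by ring
      rw [e, zpow_add_one] at this
      exact this
    · intro h1
      by_contra h2
      refine Set.infinite_of_injective_forall_mem (hinj m) (fun k => ?_) hC.1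
      refine ⟨(hper' k m).2 h1, ?_⟩
      intro h
      rw [← zpow_add_one] at h
      have e : (m + k * j) + 1 = m + 1 + k * j := by ring
      rw [e] at h
      exact h2 ((hper' k (m + 1)).1 h)
  induction n with
  | zero => simp
  | succ n ih => exact (hs _).trans ih
  | pred n ih => refine (hs _).symm.trans ?_; rw [sub_add_cancel]; exact ih

end almost

section freegp
variable {ι : Type*} [DecidableEq ι]

/-- elements whose inverse ends with the letter `l`. -/
def endset (l : ι × Bool) : Set (FreeGroup ι) := {v | (v⁻¹).toWord.getLast? = some l}

theorem endset_ai (l : ι × Bool) (c : FreeGroup ι) : AI (endset l) c := by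
  have hcl : c ∈ Subgroup.closure (Set.range (FreeGroup.of : ι → FreeGroup ι)) := by
    rw [FreeGroup.closure_range_of]; trivial
  refine AI.closure ?_ hcl
  rintro _ ⟨a, rfl⟩
  have key : ∀ g : FreeGroup ι, g ∉ ({1, (FreeGroup.of a)⁻¹} : Set (FreeGroup ι)) →
      (g * FreeGroup.of a ∈ endset l ↔ g ∈ endset l) := by
    intro g hg
    simp only [Set.mem_insert_iff, Set.mem_singleton_iff, not_or] at hg
    have e : ((g * FreeGroup.of a)⁻¹).toWord = FreeGroup.reduce ((a, false) :: (g⁻¹).toWord) := by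
      have : (g * FreeGroup.of a)⁻¹ = FreeGroup.mk ((a, false) :: (g⁻¹).toWord) := by
        rw [mul_inv_rev]
        conv_lhs => rw [← FreeGroup.mk_toWord (x := g⁻¹)]
        rfl
      rw [this, FreeGroup.toWord_mk]
    unfold endset
    simp only [Set.mem_ofPred_eq]
    rw [e, FreeGroup.reduce.cons, FreeGroup.reduce_toWord]
    cases hw : (g⁻¹).toWord with
    | nil =>
      rw [FreeGroup.toWord_eq_nil_iff, inv_eq_one] at hw
      exact absurd hw hg.1
    | cons x t =>
      simp only
      split_ifs with h
      · cases t with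
        | nil =>
          exfalso
          apply hg.2
          have hx : x = (a, true) := by
            obtain ⟨h1, h2⟩ := h
            ext
            · exact h1.symm
            · simpa using h2
          rw [hx, ← FreeGroup.toWord_of, FreeGroup.toWord_inj] at hw
          rw [← hw, inv_inv]
        | cons y t => simp [List.getLast?_cons_cons]
      · simp [List.getLast?_cons_cons]
  have hf : ({1, (FreeGroup.of a)⁻¹} : Set (FreeGroup ι)).Finite := by simp
  constructor
  · refine hf.subset ?_
    rintro g ⟨h1, h2⟩
    by_contra h
    exact h2 ((key g h).2 h1)
  · refine hf.subset ?_
    rintro g ⟨h1, h2⟩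
    by_contra h
    exact h1 ((key g h).1 h2)

theorem getLast?_flatten_replicate {α : Type*} (w : List α) (n : ℕ) :
    (List.replicate (n + 1) w).flatten.getLast? = w.getLast? := by
  induction n with
  | zero => simp
  | succ n ih =>
    rw [List.replicate_succ, List.flatten_cons, List.getLast?_append, ih]
    simp

theorem head?_flatten_replicate {α : Type*} (w : List α) (n : ℕ) :
    (List.replicate (n + 1) w).flatten.head? = w.head? := by
  rw [List.replicate_succ, List.flatten_cons]
  cases w <;> simp

theorem exists_dir (c : FreeGroup ι) (hc : c ≠ 1) : ∃ (u d : FreeGroup ι) (l : ι × Bool),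
    u * c * u⁻¹ = d ∧ ∀ n : ℕ, (d ^ (n + 1))⁻¹ ∈ endset l ∧ d ^ (n + 1) ∉ endset l := by
  let w := FreeGroup.reduceCyclically c.toWord
  have hw : FreeGroup.IsCyclicallyReduced w :=
    FreeGroup.reduceCyclically.isCyclicallyReduced FreeGroup.isReduced_toWord
  let u := FreeGroup.mk (FreeGroup.reduceCyclically.conjugator c.toWord)
  have hcu : c = u * FreeGroup.mk w * u⁻¹ := by
    conv_lhs => rw [← FreeGroup.mk_toWord (x := c),
      ← FreeGroup.reduceCyclically.conj_conjugator_reduceCyclically c.toWord]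
    simp only [u, w, FreeGroup.inv_mk, FreeGroup.mul_mk]
  have hwn : w ≠ [] := by
    intro h
    rw [h] at hcu
    apply hc
    rw [hcu]
    change u * 1 * u⁻¹ = 1
    simp
  have hpow : ∀ n : ℕ, ((FreeGroup.mk w) ^ (n + 1)).toWord = (List.replicate (n + 1) w).flatten := by
    intro n
    rw [FreeGroup.toWord_pow, FreeGroup.toWord_mk, hw.isReduced.reduce_eq]
    exact (hw.flatten_replicate (n + 1)).isReduced.reduce_eq
  refine ⟨u⁻¹, FreeGroup.mk w, w.getLast hwn, ?_, ?_⟩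
  · rw [hcu]; group
  · intro n
    constructor
    · simp only [endset, Set.mem_ofPred_eq, inv_inv, hpow, getLast?_flatten_replicate]
      exact List.getLast?_eq_some_getLast hwn
    · simp only [endset, Set.mem_ofPred_eq, FreeGroup.toWord_inv, hpow]
      intro h
      rw [FreeGroup.invRev, List.getLast?_reverse, List.head?_map, head?_flatten_replicate] at h
      have h2 := hw.2 (w.getLast hwn) (by simp [List.getLast?_eq_some_getLast hwn])
      cases hh : w.head? with
      | none => rw [hh] at h; simp at h
      | some b =>
        rw [hh] at h
        simp only [Option.map_some, Option.some.injEq] at h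
        have h3 := h2 b (by rw [hh]; simp)
        rw [← h] at h3
        simp at h3

theorem finite_of_fg {ι : Type*} (h : Group.FG (FreeGroup ι)) : Finite ι := by
  obtain ⟨S, hS⟩ := h.1
  let M := Multiplicative (ZMod 2)
  have : Finite (FreeGroup ι →* M) := by
    refine Finite.of_injective (fun (f : FreeGroup ι →* M) (s : S) => f s) ?_
    intro f g hfg
    refine MonoidHom.eq_of_eqOn_dense hS ?_
    intro s hs
    exact congrFun hfg ⟨s, hs⟩
  have h2 : Finite (ι → M) := Finite.of_equiv _ (FreeGroup.lift (α := ι) (β := M)).symm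
  classical
  refine Finite.of_injective (fun (i : ι) (j : ι) => (if i = j then Multiplicative.ofAdd 1 else 1 : M)) ?_
  intro i j hij
  have := congrFun hij i
  by_contra hne
  simp [Ne.symm hne] at this
  exact absurd this (by decide)

end freegp
end VF

namespace VF
open SimpleGraph

universe u
section cayley
variable {G : Type u} [Group G]

/-- Cayley graph -/
def cay (S : Set G) : SimpleGraph G where
  Adj a b := a ≠ b ∧ (a⁻¹ * b ∈ S ∨ b⁻¹ * a ∈ S)
  symm := ⟨fun a b h => ⟨h.1.symm, h.2.symm⟩⟩
  loopless := ⟨fun a h => h.1 rfl⟩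

theorem cay_smul (S : Set G) (g x y : G) : (cay S).Adj (g * x) (g * y) ↔ (cay S).Adj x y := by
  simp [cay, mul_assoc]

theorem cay_conn {S : Set G} (hS : Subgroup.closure S = ⊤) : (cay S).Connected := by
  have key : ∀ g ∈ Subgroup.closure S, ∀ x, (cay S).Reachable x (x * g) := by
    intro g hg
    induction hg using Subgroup.closure_induction with
    | mem s hs =>
      intro x
      by_cases e : x = x * s
      · rw [← e]
      · exact Adj.reachable (show (cay S).Adj x (x * s) from ⟨e, Or.inl (by simpa using hs)⟩)
    | one => intro x; simp
    | mul a b _ _ ha hb => intro x; rw [← mul_assoc]; exact (ha x).trans (hb _)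
    | inv a _ ha =>
      intro x
      have := (ha (x * a⁻¹)).symm
      simpa using this
  haveI : Nonempty G := ⟨1⟩
  refine ⟨fun x y => ?_⟩
  have := key (x⁻¹ * y) (by rw [hS]; trivial) x
  simpa using this

theorem bd_ai {S : Set G} {C : Set G} (hC : (bd (cay S) C).Finite) {s : G} (hs : s ∈ S) :
    AI C s := by
  constructor
  · refine (hC.preimage (f := fun g => (g, g * s)) (fun a _ b _ h => (Prod.ext_iff.1 h).1)).subset ?_
    rintro g ⟨h1, h2⟩
    refine ⟨h1, h2, ?_, Or.inl (by simpa using hs)⟩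
    intro e; exact h2 (by rw [← show g = g * s from e]; exact h1)
  · refine (hC.preimage (f := fun g => (g * s, g)) (fun a _ b _ h => (Prod.ext_iff.1 h).2)).subset ?_
    rintro g ⟨h1, h2⟩
    refine ⟨h2, h1, ?_, Or.inr (by simpa using hs)⟩
    intro e; exact h1 (by rw [← show g * s = g from e]; exact h2)

/-- optimal cuts -/
def Opts (S : Set G) (K : ℕ) : Set (Set G) := {C | ∃ α, IsOpt (cay S) K α C}

theorem opts_cuts {S : Set G} (hf : S.Finite) (hS : Subgroup.closure S = ⊤) (K : ℕ) :
    Cuts (Opts S K) := by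
  have hc := cay_conn hS
  have hcompl : ∀ C ∈ Opts S K, Cᶜ ∈ Opts S K := by
    rintro C ⟨α, h⟩
    exact ⟨α, h.compl⟩
  have hinv : ∀ (g : G), ∀ C ∈ Opts S K, ltr g C ∈ Opts S K := by
    rintro g C ⟨α, h⟩
    exact ⟨_, h.map (Equiv.mulLeft g) (fun x y => cay_smul S g x y)⟩
  have hne : ∀ C ∈ Opts S K, C.Nonempty := by
    rintro C ⟨α, h⟩
    rw [Set.nonempty_iff_ne_empty]
    rintro rfl
    have := h.1.2.1
    simp [Sep] at this
  have hfin : ∀ g h : G, {C | C ∈ Opts S K ∧ g ∈ C ∧ h ∉ C}.Finite := by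
    intro g h
    obtain ⟨p⟩ := hc g h
    have hfin : (⋃ d ∈ {d | d ∈ p.darts}, {D : Set G | Conn (cay S) D ∧ Conn (cay S) Dᶜ ∧
        (bd (cay S) D).Finite ∧ (bd (cay S) D).ncard ≤ K ∧ d.fst ∈ D ∧ d.snd ∉ D}).Finite :=
      (List.finite_toSet p.darts).biUnion (fun d _ => finite_cuts K _ d.fst d.snd d.adj)
    refine hfin.subset ?_
    rintro D ⟨⟨α, hα⟩, h1, h2⟩
    obtain ⟨d, hd, k1, k2⟩ := p.exists_boundary_dart D h1 h2
    exact Set.mem_biUnion hd ⟨hα.1.conn hc, hα.1.compl.conn hc, hα.1.1, hα.1.2.2.1, k1, k2⟩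
  refine ⟨hcompl, hinv, ?_, hne, hfin, ?_⟩
  · rintro C ⟨α, hα⟩ D ⟨β, hβ⟩
    exact nested hc hα hβ
  · refine ⟨⋃ s ∈ S ∪ S⁻¹, {C | C ∈ Opts S K ∧ 1 ∈ C ∧ s ∉ C},
      (hf.union hf.inv).biUnion (fun s _ => hfin 1 s), ?_⟩
    intro C hC
    have hb : (bd (cay S) C).Nonempty := by
      rw [Set.nonempty_iff_ne_empty]
      intro e
      have h1 := eq_univ_of_bd hc (hne C hC) e
      obtain ⟨z, hz⟩ := hne _ (hcompl C hC)
      rw [h1] at hz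
      exact hz trivial
    obtain ⟨⟨a, b⟩, h1, h2, h3, h4⟩ := hb
    refine ⟨a, Set.mem_biUnion (x := a⁻¹ * b) ?_ ⟨hinv a C hC, ?_, ?_⟩⟩
    · rcases h4 with h4 | h4
      · exact Or.inl h4
      · exact Or.inr (by rw [Set.mem_inv]; simpa using h4)
    · simpa [mem_ltr] using h1
    · simpa [mem_ltr] using h2

theorem vtr_zpow {c : G} {x : Set (Set G)} (h : vtr c x = x) (n : ℤ) : vtr (c ^ n) x = x := by
  have hmul : ∀ a b : G, vtr (a * b) x = vtr a (vtr b x) := by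
    intro a b; ext C; simp [vtr, ltr_ltr]
  have hone : vtr 1 x = x := by ext C; simp [vtr, ltr_one]
  have hinv : vtr c⁻¹ x = x := by
    have := hmul c⁻¹ c
    rw [h, inv_mul_cancel, hone] at this
    exact this.symm
  induction n with
  | zero => simpa using hone
  | succ n ih => rw [zpow_add_one, hmul, h, ih]
  | pred n ih => rw [zpow_sub_one, hmul, hinv, ih]

theorem no_fix {S : Set G} (hf : S.Finite) (hS : Subgroup.closure S = ⊤) {K : ℕ} {x : Set (Set G)}
    (hx : IsVert (Opts S K) x) {c : G} (hinf : ∀ j : ℤ, j ≠ 0 → c ^ j ≠ 1) (hcx : vtr c x = x)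
    {A : Set G} (hA : (bd (cay S) A).Finite) (hK : mu (cay S) A ≤ K)
    (h1 : ∀ n : ℕ, (c ^ (n + 1))⁻¹ ∈ A) (h2 : ∀ n : ℕ, c ^ (n + 1) ∉ A) : False := by
  have hO := opts_cuts hf hS K
  let p : Ultrafilter G := Ultrafilter.of (Filter.map (fun n : ℕ => c ^ (n + 1)) Filter.atTop)
  let q : Ultrafilter G := Ultrafilter.of (Filter.map (fun n : ℕ => (c ^ (n + 1))⁻¹) Filter.atTop)
  have hp : ∀ B : Set G, (∀ᶠ n in Filter.atTop, c ^ (n + 1) ∈ B) → B ∈ p := fun B hB =>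
    Ultrafilter.of_le _ hB
  have hq : ∀ B : Set G, (∀ᶠ n in Filter.atTop, (c ^ (n + 1))⁻¹ ∈ B) → B ∈ q := fun B hB =>
    Ultrafilter.of_le _ hB
  have hsep : Sep (p, q) A := by
    have e1 : Aᶜ ∈ p := hp _ (Filter.Eventually.of_forall h2)
    have e2 : A ∈ q := hq _ (Filter.Eventually.of_forall h1)
    rw [Ultrafilter.compl_mem_iff_notMem] at e1
    simp [Sep, e1, e2]
  obtain ⟨C, hC⟩ : ∃ C, IsOpt (cay S) K (p, q) C ∧ C ∈ x := by
    obtain ⟨C, hC⟩ := exists_opt hA hsep hK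
    by_cases e : C ∈ x
    · exact ⟨C, hC, e⟩
    · exact ⟨Cᶜ, hC.compl, hx.mem_compl hO ⟨_, hC⟩ e⟩
  obtain ⟨hC, hCx⟩ := hC
  have hinfset : {m : ℤ | c ^ m ∉ C}.Infinite := by
    by_cases e : C ∈ p
    · have e2 : C ∉ q := hC.1.2.1.1 e
      intro hfin
      apply e2
      apply hq
      have hfin2 : {n : ℕ | c ^ (-(n + 1 : ℤ)) ∉ C}.Finite :=
        hfin.preimage (f := fun n : ℕ => -(n + 1 : ℤ)) (fun a _ b _ h => by simpa using h)
      rw [← Nat.cofinite_eq_atTop, Filter.eventually_cofinite]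
      refine hfin2.subset ?_
      intro n hn
      simp only [Set.mem_ofPred_eq] at hn ⊢
      rw [zpow_neg]
      exact_mod_cast hn
    · intro hfin
      apply e
      apply hp
      have hfin2 : {n : ℕ | c ^ (n + 1 : ℤ) ∉ C}.Finite :=
        hfin.preimage (f := fun n : ℕ => (n + 1 : ℤ)) (fun a _ b _ h => by simpa using h)
      rw [← Nat.cofinite_eq_atTop, Filter.eventually_cofinite]
      refine hfin2.subset ?_
      intro n hn
      simp only [Set.mem_ofPred_eq] at hn ⊢
      exact_mod_cast hn
  have hCO : C ∈ Opts S K := ⟨_, hC⟩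
  obtain ⟨m, hm, m', hm', hne, he⟩ := hinfset.exists_ne_map_eq_of_mapsTo
    (f := fun m : ℤ => (ltr (c ^ m) C)ᶜ) (t := {C | C ∈ Opts S K ∧ (1 : G) ∈ C ∧ C ∉ x}) (by
      intro m hm
      refine ⟨hO.compl _ (hO.inv _ C hCO), ?_, ?_⟩
      · simpa [mem_ltr] using hm
      · refine (hx.alt _ (hO.inv _ C hCO)).1 ?_
        have : C ∈ vtr (c ^ m) x := by rw [vtr_zpow hcx]; exact hCx
        exact this) hx.fin
  simp only [compl_inj_iff] at he
  have hper : ltr (c ^ (m' - m)) C = C := by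
    have := congrArg (ltr (c ^ (-m))) he
    rw [ltr_ltr, ltr_ltr, ← zpow_add, ← zpow_add] at this
    simp only [add_neg_cancel, zpow_zero, ltr_one] at this
    rw [sub_eq_add_neg, ← this]
  have hai : AI C c := AI.closure (fun s hs => bd_ai hC.1.1 hs) (by rw [hS]; trivial)
  have hconst := hai.periodic hinf (sub_ne_zero.2 hne.symm) hper
  have hs := hC.1.2.1
  have hc1 : ∀ n : ℕ, c ^ (n + 1) ∈ C ↔ (1 : G) ∈ C := fun n => by
    rw [← hconst ((n + 1 : ℕ) : ℤ), zpow_natCast]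
  have hc2 : ∀ n : ℕ, (c ^ (n + 1))⁻¹ ∈ C ↔ (1 : G) ∈ C := fun n => by
    rw [← hconst (-((n + 1 : ℕ) : ℤ)), zpow_neg, zpow_natCast]
  by_cases e : (1 : G) ∈ C
  · have i1 : C ∈ p := hp _ (Filter.Eventually.of_forall fun n => (hc1 n).2 e)
    have i2 : C ∈ q := hq _ (Filter.Eventually.of_forall fun n => (hc2 n).2 e)
    exact hs.1 i1 i2
  · have i1 : Cᶜ ∈ p := hp _ (Filter.Eventually.of_forall fun n h => e ((hc1 n).1 h))
    have i2 : Cᶜ ∈ q := hq _ (Filter.Eventually.of_forall fun n h => e ((hc2 n).1 h))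
    rw [Ultrafilter.compl_mem_iff_notMem] at i1 i2
    exact i1 (hs.2 i2)

theorem exists_retract (N : Subgroup G) [N.FiniteIndex] : ∃ (r : G → N) (T : Set G), T.Finite ∧
    (∀ (n : N) g, r (n * g) = n * r g) ∧ (∀ n : N, r n = n) ∧ ∀ g, ∃ t ∈ T, ∃ n : N, g = n * t := by
  let o : G ⧸ N → G := Quotient.out
  have ho : ∀ g : G, g * o ((g⁻¹ : G) : G ⧸ N) ∈ N := by
    intro g
    have : ((o ((g⁻¹ : G) : G ⧸ N) : G) : G ⧸ N) = ((g⁻¹ : G) : G ⧸ N) := Quotient.out_eq _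
    have := QuotientGroup.eq.1 this.symm
    simpa using this
  have ho1 : o ((1 : G) : G ⧸ N) ∈ N := by simpa using ho 1
  have hq : ∀ (n : N) (g : G), (((n * g : G)⁻¹ : G) : G ⧸ N) = ((g⁻¹ : G) : G ⧸ N) := by
    intro n g
    rw [QuotientGroup.eq]
    simp [mul_assoc]
  refine ⟨fun g => ⟨g * o ((g⁻¹ : G) : G ⧸ N), ho g⟩ * ⟨_, ho1⟩⁻¹,
    Set.range (fun q => (o q)⁻¹), Set.finite_range _, ?_, ?_, ?_⟩
  · intro n g
    ext
    simp only [Subgroup.coe_mul, hq]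
    simp only [mul_assoc]
  · intro n
    ext
    have := hq n 1
    simp only [mul_one, inv_one] at this
    simp [this]
  · intro g
    exact ⟨_, ⟨((g⁻¹ : G) : G ⧸ N), rfl⟩, ⟨_, ho g⟩, by simp⟩

theorem exists_tree (hfg : Group.FG G) (N : Subgroup G) [N.FiniteIndex] [IsFreeGroup N] :
    ∃ (V : Type u) (_ : MulAction G V) (Γ : SimpleGraph V), GT G Γ := by
  classical
  obtain ⟨S, hS⟩ := hfg.1
  haveI := hfg
  haveI : Group.FG N := N.fg_of_index_ne_zero
  let ι := IsFreeGroup.Generators N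
  let ψ : N ≃* FreeGroup ι := IsFreeGroup.toFreeGroup N
  haveI : Finite ι := finite_of_fg (Group.fg_of_surjective (f := ψ.toMonoidHom) ψ.surjective)
  haveI := Fintype.ofFinite ι
  obtain ⟨r, T, hT, hr1, hr2, hr3⟩ := exists_retract N
  let A : ι × Bool → Set G := fun l => {g | ψ (r g) ∈ endset l}
  have hAf : ∀ l, (bd (cay (S : Set G)) (A l)).Finite := by
    intro l
    have hfin : ∀ (t s : G), {n : N | ψ (r (n * t)) ∈ endset l ∧ ψ (r (n * t * s)) ∉ endset l}.Finite := by
      intro t s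
      have h0 := (endset_ai l (ψ (r t)⁻¹ * ψ (r (t * s)))).1
      refine (h0.preimage (f := fun n : N => ψ (n * r t))
        (fun a _ b _ h => by simpa using h)).subset ?_
      rintro n ⟨h1, h2⟩
      refine ⟨by rw [hr1] at h1; exact h1, ?_⟩
      rw [mul_assoc, hr1] at h2
      have : ψ (n * r t) * (ψ (r t)⁻¹ * ψ (r (t * s))) = ψ (n * r (t * s)) := by
        rw [← map_mul, ← map_mul]; congr 1; group
      rw [this]; exact h2
    refine Set.Finite.subset (s := ⋃ t ∈ T, ⋃ s ∈ (S : Set G) ∪ (S : Set G)⁻¹,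
      (fun n : N => ((n * t : G), (n * t * s : G))) ''
        {n : N | ψ (r (n * t)) ∈ endset l ∧ ψ (r (n * t * s)) ∉ endset l}) ?_ ?_
    · exact hT.biUnion fun t _ => (S.finite_toSet.union S.finite_toSet.inv).biUnion
        fun s _ => (hfin t s).image _
    · rintro ⟨a, b⟩ ⟨h1, h2, h3, h4⟩
      obtain ⟨t, ht, n, rfl⟩ := hr3 a
      refine Set.mem_biUnion ht (Set.mem_biUnion (x := (n * t : G)⁻¹ * b) ?_ ⟨n, ⟨h1, ?_⟩, ?_⟩)
      · rcases h4 with h4 | h4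
        · exact Or.inl h4
        · exact Or.inr (by rw [Set.mem_inv]; simpa using h4)
      · rw [mul_inv_cancel_left]; exact h2
      · simp only [mul_inv_cancel_left]
  let K : ℕ := Finset.univ.sup fun l => mu (cay (S : Set G)) (A l)
  have hK : ∀ l, mu (cay (S : Set G)) (A l) ≤ K := fun l =>
    Finset.le_sup (f := fun l => mu (cay (S : Set G)) (A l)) (Finset.mem_univ l)
  have hO := opts_cuts S.finite_toSet hS K
  refine pocset_tree hO ?_
  intro x hx
  by_contra hinf
  have hmul : ∀ (a b : G) x, vtr (a * b) x = vtr a (vtr b x) := by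
    intro a b x; ext C; simp [vtr, ltr_ltr]
  have hone : ∀ x, vtr (1 : G) x = x := by intro x; ext C; simp [vtr, ltr_one]
  obtain ⟨a, ha, b, hb, hne, he⟩ := Set.Infinite.exists_ne_map_eq_of_mapsTo (s := {g | vtr g x = x})
    (f := fun g => (g : G ⧸ N)) hinf (t := Set.univ) (fun _ _ => trivial) Set.finite_univ
  have hN : a⁻¹ * b ∈ N := QuotientGroup.eq.1 he
  have hne1 : a⁻¹ * b ≠ 1 := by
    intro h; exact hne (inv_mul_eq_one.1 h)
  have hfix : vtr (a⁻¹ * b) x = x := by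
    rw [hmul, show vtr b x = x from hb]
    have := hmul a⁻¹ a x
    rw [inv_mul_cancel, hone, show vtr a x = x from ha] at this
    exact this.symm
  let h : N := ⟨a⁻¹ * b, hN⟩
  have hh : ψ h ≠ 1 := by
    intro e
    rw [map_eq_one_iff _ ψ.injective] at e
    exact hne1 (congrArg Subtype.val e)
  obtain ⟨u, d, l, hd, hdl⟩ := exists_dir (ψ h) hh
  let u' : N := ψ.symm u
  let c : N := u' * h * u'⁻¹
  have hc : ψ c = d := by simp [c, u', hd]
  have hd1 : d ≠ 1 := by
    rintro rfl
    apply hh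
    exact (conj_eq_one_iff).1 hd
  refine no_fix S.finite_toSet hS (hx.vtr hO (u' : G)) (c := (c : G)) ?_ ?_ (hAf l) (hK l) ?_ ?_
  · intro j hj e
    have e1 : c ^ j = 1 := Subtype.ext (by simpa using e)
    have e2 : d ^ j = 1 := by rw [← hc, ← map_zpow, e1, map_one]
    exact hd1 ((IsMulTorsionFree.zpow_eq_one_iff_left hj).1 e2)
  · rw [← hmul]
    have : (c : G) * (u' : G) = u' * h := by simp [c]
    rw [this, hmul]
    exact congrArg _ hfix
  · intro n
    have e : (((c : G) ^ (n + 1))⁻¹) = ((c ^ (n + 1))⁻¹ : N) := by simp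
    simp only [A, Set.mem_ofPred_eq]
    rw [e, hr2]
    simp only [map_inv, map_pow, hc]
    exact (hdl n).1
  · intro n
    have e : ((c : G) ^ (n + 1)) = ((c ^ (n + 1)) : N) := by simp
    simp only [A, Set.mem_ofPred_eq]
    rw [e, hr2]
    simp only [map_pow, hc]
    exact (hdl n).2

end cayley
end VF

namespace VF
open SimpleGraph

universe u
section maps
variable {G G' : Type u} [Group G'] [Group G]

/-- An equivariant map from a `G`-tree to a `G'`-tree. -/
structure EM (φ : G →* G') {V T : Type u} [MulAction G V] [MulAction G' T] (Γ : SimpleGraph V)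
    (f : V → T) : Prop where
  gt : GT G Γ
  eqv : ∀ (g : G) v, f (g • v) = φ g • f v

theorem exists_EM (φ : G →* G') {V T : Type u} [MulAction G V] [MulAction G' T] {Γ : SimpleGraph V}
    {Θ : SimpleGraph T} (hΓ : GT G Γ) (hΘ : GT G' Θ) {c : T → Bool} (hc : Colored G' Θ c) :
    ∃ f : V → T, EM φ Γ f := by
  have hfix : ∀ v : V, ∃ t : T, ∀ g ∈ MulAction.stabilizer G v, φ g • t = t := by
    intro v
    obtain ⟨t, ht⟩ := exists_fixed hΘ.tree hΘ.adj_smul hc ((MulAction.stabilizer G v).map φ) (by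
      rw [Subgroup.coe_map]
      refine Set.Finite.image _ ((hΓ.fin_stab v).subset ?_)
      intro g hg
      exact hg)
    exact ⟨t, fun g hg => ht _ ⟨g, hg, rfl⟩⟩
  choose t ht using hfix
  let o : V → V := fun v => (Quotient.out (Quotient.mk (MulAction.orbitRel G V) v))
  have ho : ∀ v, ∃ g : G, g • o v = v := by
    intro v
    have : (MulAction.orbitRel G V).r (o v) v := Quotient.exact (Quotient.out_eq _)
    rw [show (MulAction.orbitRel G V).r (o v) v ↔ o v ∈ MulAction.orbit G v from Iff.rfl] at this
    obtain ⟨g, hg⟩ := this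
    exact ⟨g⁻¹, by rw [← hg]; simp⟩
  have ho2 : ∀ (g : G) v, o (g • v) = o v := by
    intro g v
    have : Quotient.mk (MulAction.orbitRel G V) (g • v) = Quotient.mk (MulAction.orbitRel G V) v :=
      Quotient.sound ⟨g, rfl⟩
    simp only [o, this]
  choose a ha using ho
  refine ⟨fun v => φ (a v) • t (o v), hΓ, ?_⟩
  intro g v
  simp only [ho2]
  have h1 : (a (g • v))⁻¹ * (g * a v) ∈ MulAction.stabilizer G (o v) := by
    rw [MulAction.mem_stabilizer_iff, mul_smul, mul_smul, ha, inv_smul_eq_iff, ← ho2 g v, ha]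
  have h2 := ht _ _ h1
  rw [map_mul, map_inv, mul_smul, inv_smul_eq_iff, map_mul, mul_smul] at h2
  exact h2.symm

theorem step_step_dist {T : Type*} {Θ : SimpleGraph T} (hT : Θ.IsTree) {a b : T}
    (h : 2 ≤ Θ.dist a b) : Θ.dist (step Θ a b) (step Θ b a) + 2 = Θ.dist a b := by
  have hab : a ≠ b := by rintro rfl; simp at h
  have h1 := step_dist hT.1 hab
  have h2 := step_adj hT.1 hab
  set s := step Θ a b with hs
  have hsb : s ≠ b := by
    intro e
    rw [e, SimpleGraph.dist_self] at h1
    omega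
  rw [step_eq_of_adj hT h2 hab hsb]
  have h3 := step_dist hT.1 hsb.symm
  have e1 := Θ.dist_comm (u := s) (v := step Θ b s)
  have e2 := Θ.dist_comm (u := s) (v := b)
  omega

theorem EM.shorten {φ : G →* G'} {T : Type u} [MulAction G' T]
    {Θ : SimpleGraph T} (hΘ : GT G' Θ) (L : ℕ) : ∀ {V : Type u} [MulAction G V] {Γ : SimpleGraph V}
    {f : V → T}, EM φ Γ f → (∀ x y, Γ.Adj x y → Θ.dist (f x) (f y) ≤ L + 1) →
    ∃ (W : Type u) (_ : MulAction G W) (Δ : SimpleGraph W) (f' : W → T), EM φ Δ f' ∧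
      ∀ x y, Δ.Adj x y → Θ.dist (f' x) (f' y) ≤ 1 := by
  classical
  induction L with
  | zero => intro V _ Γ f hf h; exact ⟨V, inferInstance, Γ, f, hf, by simpa using h⟩
  | succ L ih =>
    intro V _ Γ f hf h
    let te : V → V → T := fun v w => if 2 ≤ Θ.dist (f v) (f w) then step Θ (f v) (f w) else f v
    obtain ⟨W, iW, Δ, r, f', h1, h2, h3, h4, h5, h6, h7, h8⟩ := blowup hf.gt φ f te hf.eqv (by
      intro g v w
      simp only [te, hf.eqv, dist_smul hΘ.tree.1 hΘ.adj_smul, step_smul hΘ.tree hΘ.adj_smul]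
      split_ifs <;> rfl)
    have hst : ∀ v w, Θ.dist (f v) (te v w) ≤ 1 := by
      intro v w
      simp only [te]
      split_ifs with hd
      · have : f v ≠ f w := by intro e; rw [e] at hd; simp at hd
        exact le_of_eq (dist_eq_one_iff_adj.2 (step_adj hΘ.tree.1 this))
      · simp
    have hst2 : ∀ a, Θ.dist (f (r a)) (f' a) ≤ 1 := by
      intro a
      rcases h5 a with e | ⟨w, -, e⟩
      · rw [e]; simp
      · rw [← e]; exact hst _ _
    refine ih (V := W) (Γ := Δ) (f := f') ⟨h1, h3⟩ ?_
    intro x y hxy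
    rcases (h8 x y).1 hxy with ⟨e1, e2, e3⟩ | ⟨e1, e2, e3⟩
    · rcases e3 with e3 | e3
      · rw [e3, e1]; exact (hst2 y).trans (by omega)
      · rw [e3, Θ.dist_comm]; exact (hst2 x).trans (by omega)
    · rw [e2, e3]
      have hd := h _ _ e1
      simp only [te]
      rw [Θ.dist_comm (u := f (r y)) (v := f (r x))]
      split_ifs with hd2
      · have := step_step_dist hΘ.tree hd2; omega
      · omega

theorem EM.exists_bound {φ : G →* G'} {T : Type u} [MulAction G' T]
    {Θ : SimpleGraph T} (hΘ : GT G' Θ) {V : Type u} [MulAction G V] {Γ : SimpleGraph V}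
    {f : V → T} (hf : EM φ Γ f) : ∃ L, ∀ x y, Γ.Adj x y → Θ.dist (f x) (f y) ≤ L + 1 := by
  classical
  obtain ⟨D, hD, hD'⟩ := hf.gt.fin_dart
  refine ⟨hD.toFinset.sup fun p => Θ.dist (f p.1) (f p.2), fun x y hxy => ?_⟩
  obtain ⟨g, hg⟩ := hD' x y hxy
  have := Finset.le_sup (f := fun p : V × V => Θ.dist (f p.1) (f p.2)) (hD.mem_toFinset.2 hg)
  simp only [hf.eqv, dist_smul hΘ.tree.1 hΘ.adj_smul] at this
  omega

/-- positive darts -/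
def pos {V T : Type*} (Γ : SimpleGraph V) (f : V → T) : Set (V × V) :=
  {p | Γ.Adj p.1 p.2 ∧ f p.1 ≠ f p.2}

theorem darts_finite {V : Type u} [MulAction G V] {Γ : SimpleGraph V} (h : GT G Γ) (N : Subgroup G)
    [N.FiniteIndex] {P : Set (V × V)} (hP : ∀ p ∈ P, Γ.Adj p.1 p.2) : (orbs N P).Finite := by
  obtain ⟨D, hD, hD'⟩ := h.fin_dart
  obtain ⟨D2, hD2, hD2'⟩ := finite_reps N (P := P) hD (fun p hp => hD' p.1 p.2 (hP p hp))
  exact orbs_finite hD2 hD2'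

theorem free_act {V : Type u} [MulAction G V] {Γ : SimpleGraph V} (h : GT G Γ) {N : Subgroup G}
    (htf : ∀ n ∈ N, n ≠ 1 → ¬ IsOfFinOrder n) {n : G} (hn : n ∈ N) {v : V} (hv : n • v = v) :
    n = 1 := by
  by_contra hne
  refine htf n hn hne ?_
  have h1 : Set.Finite (Set.range fun k : ℕ => n ^ k) := by
    refine (h.fin_stab v).subset ?_
    rintro _ ⟨k, rfl⟩
    induction k with
    | zero => simp
    | succ k ih =>
      simp only [Set.mem_ofPred_eq] at ih ⊢
      rw [pow_succ, mul_smul, hv, ih]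
  rw [← not_not (a := IsOfFinOrder n), ← injective_pow_iff_not_isOfFinOrder]
  intro hinj
  exact Set.infinite_range_of_injective hinj h1

theorem isom_of_locinj {V T : Type*} {Γ : SimpleGraph V} {Θ : SimpleGraph T} (hΓ : Γ.IsTree)
    (hΘ : Θ.IsTree) {f : V → T} (hadj : ∀ x y, Γ.Adj x y → Θ.Adj (f x) (f y))
    (hinj : ∀ v w w', Γ.Adj v w → Γ.Adj v w' → f w = f w' → w = w') :
    Function.Injective f := by
  have key : ∀ n : ℕ, ∀ x y, Γ.dist x y = n → Θ.dist (f x) (f y) = n := by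
    intro n
    induction n using Nat.strong_induction_on with
    | _ n ih =>
      intro x y hn
      by_cases hxy : x = y
      · subst hxy; simp at hn ⊢; exact hn
      have h1 := step_adj hΓ.1 hxy
      have h2 := step_dist hΓ.1 hxy
      set t := step Γ x y with ht
      by_cases hty : t = y
      · rw [hty, SimpleGraph.dist_self] at h2
        rw [← hn, h2]
        rw [hty] at h1
        exact dist_eq_one_iff_adj.2 (hadj _ _ h1)
      have h3 := step_adj hΓ.1 hty
      have h4 := step_dist hΓ.1 hty
      set s := step Γ t y with hs
      have i1 := ih (Γ.dist t y) (by omega) t y rfl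
      have i2 := ih (Γ.dist s y) (by omega) s y rfl
      have e : f s = step Θ (f t) (f y) := eq_step hΘ (hadj _ _ h3) (by omega)
      have hne : f x ≠ step Θ (f t) (f y) := by
        rw [← e]
        intro e2
        have := hinj t x s h1.symm h3 e2
        rw [← this] at h4
        omega
      have := dist_of_ne_step hΘ (hadj _ _ h1.symm) hne
      omega
  intro x y h
  have := key _ x y rfl
  rw [h] at this
  rw [SimpleGraph.dist_self] at this
  exact hΓ.1.dist_eq_zero_iff.1 this.symm

end maps
end VF

namespace VF
open SimpleGraph

universe u
section folds
variable {G G' : Type u} [Group G'] [Group G]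

/-- a chain from `x` to `n • x` traversing dart orbits at most once -/
def Win (N : Subgroup G) {V : Type u} [MulAction G V] (Γ : SimpleGraph V) (n : G) : Prop :=
  ∃ (k : ℕ) (x : ℕ → V), x k = n • x 0 ∧ (∀ i < k, x i = x (i + 1) ∨ Γ.Adj (x i) (x (i + 1))) ∧
    ∀ i j, i < j → j < k → x i ≠ x (i + 1) → ∀ m ∈ N, ¬ (m • x i = x j ∧ m • x (i + 1) = x (j + 1))

/-- zero edges -/
def zeroG {V T : Type*} (Γ : SimpleGraph V) (f : V → T) : SimpleGraph V where
  Adj x y := Γ.Adj x y ∧ f x = f y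
  symm := ⟨fun _ _ h => ⟨h.1.symm, h.2.symm⟩⟩
  loopless := ⟨fun _ h => h.1.ne rfl⟩

theorem zeroG_reach {V T : Type*} {Γ : SimpleGraph V} {f : V → T} {x y : V}
    (h : (zeroG Γ f).Reachable x y) : f x = f y := by
  obtain ⟨p⟩ := h
  induction p with
  | nil => rfl
  | cons h _ ih => exact h.2.trans ih

theorem win_of_infinite {N : Subgroup G} [N.FiniteIndex] {V : Type u} [MulAction G V]
    {Γ Z : SimpleGraph V} (h : GT G Γ) (hZ : Z ≤ Γ) {v : V}
    (hv : {w | Z.Reachable v w}.Infinite) :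
    ∃ n ∈ N, n ≠ 1 ∧ Win N Γ n ∧ ∃ w, Z.Reachable w (n • w) := by
  classical
  have h0 : ∃ k, ∃ n ∈ N, n ≠ 1 ∧ ∃ w, ∃ p : Z.Walk w (n • w), p.length = k := by
    obtain ⟨D, hD, hD'⟩ := h.fin_vert
    obtain ⟨D2, hD2, hD2'⟩ := finite_reps N (P := Set.univ) hD (fun x _ => hD' x)
    choose a ha using fun x => hD2' x trivial
    obtain ⟨x, hx, y, hy, hne, he⟩ := hv.exists_ne_map_eq_of_mapsTo (f := fun x => a x • x)
      (t := D2) (fun x _ => ha x) hD2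
    have hx' : Z.Reachable v x := hx
    have hy' : Z.Reachable v y := hy
    have e : ((a y)⁻¹ * a x) • x = y := by rw [mul_smul, he, inv_smul_smul]
    obtain ⟨p⟩ := hx'.symm.trans hy'
    refine ⟨p.length, ((a y)⁻¹ * a x : N), Subtype.prop _, ?_, x, p.copy rfl e.symm, by simp⟩
    intro h1
    apply hne
    rw [← e]
    have : (a y)⁻¹ * a x = 1 := Subtype.ext h1
    rw [this, one_smul]
  obtain ⟨n, hn, hn1, w, p, hp⟩ := Nat.find_spec h0
  have hmin : ∀ n ∈ N, n ≠ 1 → ∀ w, ∀ p : Z.Walk w (n • w), Nat.find h0 ≤ p.length :=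
    fun n hn hn1 w p => Nat.find_min' h0 ⟨n, hn, hn1, w, p, rfl⟩
  refine ⟨n, hn, hn1, ⟨p.length, p.getVert, by simp, ?_, ?_⟩, w, p.reachable⟩
  · intro i hi
    exact Or.inr (hZ (p.adj_getVert_succ hi))
  · rintro i j hij hj - m hm ⟨e, -⟩
    by_cases hm1 : m = 1
    · rw [hm1, one_smul] at e
      have := hmin n hn hn1 w (((p.take i).copy rfl e).append (p.drop j))
      rw [Walk.length_append, Walk.length_copy, Walk.take_length, Walk.drop_length] at this
      omega
    · have e2 : (p.drop i).getVert (j - i) = m • p.getVert i := by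
        rw [Walk.drop_getVert, e]; congr 1; omega
      have := hmin m hm hm1 _ (((p.drop i).take (j - i)).copy rfl e2)
      rw [Walk.length_copy, Walk.take_length, Walk.drop_length] at this
      omega

variable {φ : G →* G'} {T : Type u} [MulAction G' T] {Θ : SimpleGraph T}

theorem EM.contractZero {N : Subgroup G} [N.FiniteIndex] {V : Type u} [MulAction G V]
    {Γ : SimpleGraph V} {f : V → T} (hf : EM φ Γ f) (hd : ∀ x y, Γ.Adj x y → f x = f y ∨ Θ.Adj (f x) (f y))
    (hfin : ∀ v, {w | (zeroG Γ f).Reachable v w}.Finite) :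
    ∃ (W : Type u) (_ : MulAction G W) (Δ : SimpleGraph W) (f' : W → T), EM φ Δ f' ∧
      (∀ x y, Δ.Adj x y → Θ.Adj (f' x) (f' y)) ∧
      (orbs N (pos Δ f')).ncard ≤ (orbs N (pos Γ f)).ncard := by
  obtain ⟨W, iW, Δ, r, h1, h2, h3, h4, h5, h6⟩ := contract hf.gt (zeroG Γ f) (fun x y h => h.1)
    (fun g x y h => ⟨hf.gt.adj_smul g x y h.1, by rw [hf.eqv, hf.eqv, h.2]⟩) hfin
  let f' : W → T := fun w => f (Function.surjInv h2 w)
  have hf' : ∀ x, f' (r x) = f x := by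
    intro x
    exact zeroG_reach ((h4 _ _).1 (Function.surjInv_eq h2 (r x)))
  have hlift : ∀ a b, Δ.Adj a b → ∃ x y, r x = a ∧ r y = b ∧ Γ.Adj x y ∧ f x ≠ f y := by
    intro a b hab
    obtain ⟨hne, x, y, rfl, rfl, hxy⟩ := (h5 a b).1 hab
    refine ⟨x, y, rfl, rfl, hxy, fun e => hne ((h4 x y).2 (Adj.reachable ?_))⟩
    exact ⟨hxy, e⟩
  refine ⟨W, iW, Δ, f', ⟨h1, ?_⟩, ?_, ?_⟩
  · intro g w
    obtain ⟨x, rfl⟩ := h2 w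
    rw [← h3, hf', hf', hf.eqv]
  · intro a b hab
    obtain ⟨x, y, rfl, rfl, hxy, hne⟩ := hlift a b hab
    rw [hf', hf']
    exact (hd x y hxy).resolve_left hne
  · refine orbs_le (fun p : V × V => (r p.1, r p.2)) ?_ (darts_finite hf.gt N (fun p hp => hp.1)) ?_
    · intro n p
      exact Prod.ext (h3 n p.1) (h3 n p.2)
    · rintro ⟨a, b⟩ ⟨hab, -⟩
      obtain ⟨x, y, rfl, rfl, hxy, hne⟩ := hlift a b hab
      exact ⟨(x, y), ⟨hxy, hne⟩, rfl⟩

theorem EM.fold {N : Subgroup G} [N.FiniteIndex] (htf : ∀ n ∈ N, n ≠ 1 → ¬ IsOfFinOrder n)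
    {c : T → Bool} (hc : Colored G' Θ c) {V : Type u} [MulAction G V]
    {Γ : SimpleGraph V} {f : V → T} (hf : EM φ Γ f) (hd : ∀ x y, Γ.Adj x y → Θ.Adj (f x) (f y))
    {v w w' : V} (hw : Γ.Adj v w) (hw' : Γ.Adj v w') (hne : w ≠ w') (hfw : f w = f w') :
    ∃ (W : Type u) (_ : MulAction G W) (Δ : SimpleGraph W) (f' : W → T), EM φ Δ f' ∧
      (∀ x y, Δ.Adj x y → f' x = f' y ∨ Θ.Adj (f' x) (f' y)) ∧
      (orbs N (pos Δ f')).ncard < (orbs N (pos Γ f)).ncard := by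
  classical
  let te : V → V → T := fun x y => if c (f x) = c (f v) then f y else f x
  obtain ⟨W, iW, Δ, r, f', h1, h2, h3, h4, h5, h6, h7, h8⟩ := blowup hf.gt φ f te hf.eqv (by
      intro g v w
      simp only [te, hf.eqv, hc.inv]
      split_ifs <;> rfl)
  have hpc : ∀ a b, Δ.Adj a b → f' a ≠ f' b → ∃ x y, Γ.Adj x y ∧ c (f x) = c (f v) ∧
      ((r a = x ∧ f' a = f x ∧ r b = x ∧ f' b = te x y) ∨
       (r b = x ∧ f' b = f x ∧ r a = x ∧ f' a = te x y)) := by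
    intro a b hab hne
    have tip : ∀ b, f' b ≠ f (r b) → ∃ y, Γ.Adj (r b) y ∧ c (f (r b)) = c (f v) ∧ f' b = te (r b) y := by
      intro b hb
      rcases h5 b with e | ⟨y, hy, e⟩
      · exact absurd e hb
      · refine ⟨y, hy, ?_, e.symm⟩
        by_contra hcc
        simp only [te, hcc, if_false] at e
        exact hb e.symm
    rcases (h8 a b).1 hab with ⟨e1, e2, e3⟩ | ⟨e1, e2, e3⟩
    · rcases e3 with e3 | e3
      · obtain ⟨y, y1, y2, y3⟩ := tip b (by rw [← e1, ← e3]; exact hne.symm)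
        rw [← e1] at y1 y2 y3
        exact ⟨r a, y, y1, y2, Or.inl ⟨rfl, e3, e1.symm, y3⟩⟩
      · obtain ⟨y, y1, y2, y3⟩ := tip a (by rw [← e3]; exact hne)
        exact ⟨r a, y, y1, y2, Or.inr ⟨e1.symm, e3, rfl, y3⟩⟩
    · exfalso
      apply hne
      rw [e2, e3]
      have := hc.adj _ _ (hd _ _ e1)
      simp only [te]
      split_ifs with i1 i2 i2
      · exact absurd (i1.trans i2.symm) this
      · rfl
      · rfl
      · exfalso
        revert this i1 i2
        cases c (f (r a)) <;> cases c (f (r b)) <;> cases c (f v) <;> simp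
  choose base hb1 hb2 using h6
  have htip : ∀ x y, ∃ a, r a = x ∧ ((Γ.Adj x y → f' a = te x y) ∧ (¬ Γ.Adj x y → f' a = f x)) := by
    intro x y
    by_cases hxy : Γ.Adj x y
    · obtain ⟨a, ha1, ha2⟩ := h7 x y hxy
      exact ⟨a, ha1, fun _ => ha2, fun h => absurd hxy h⟩
    · exact ⟨base x, hb1 x, fun h => absurd h hxy, fun _ => hb2 x⟩
  choose tip ht1 ht2 using htip
  have base_eqv : ∀ (g : G) x, base (g • x) = g • base x := by
    intro g x
    refine h4 _ _ ?_ ?_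
    · rw [hb1, h2, hb1]
    · rw [hb2, h3, hb2, hf.eqv]
  have te_eqv : ∀ (g : G) x y, te (g • x) (g • y) = φ g • te x y := by
    intro g v w
    simp only [te, hf.eqv, hc.inv]
    split_ifs <;> rfl
  have tip_eqv : ∀ (g : G) x y, tip (g • x) (g • y) = g • tip x y := by
    intro g x y
    refine h4 _ _ ?_ ?_
    · rw [ht1, h2, ht1]
    · by_cases hxy : Γ.Adj x y
      · rw [(ht2 _ _).1 (hf.gt.adj_smul g _ _ hxy), h3, (ht2 _ _).1 hxy, te_eqv]
      · rw [(ht2 _ _).2 (fun h => hxy ((adj_smul_iff hf.gt.adj_smul g x y).1 h)), h3,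
          (ht2 _ _).2 hxy, hf.eqv]
  refine ⟨W, iW, Δ, f', ⟨h1, h3⟩, ?_, ?_⟩
  · intro a b hab
    by_cases e : f' a = f' b
    · exact Or.inl e
    refine Or.inr ?_
    obtain ⟨x, y, hxy, hcx, ⟨k1, k2, k3, k4⟩ | ⟨k1, k2, k3, k4⟩⟩ := hpc a b hab e
    · rw [k2, k4]
      simp only [te, hcx, if_true]
      exact hd x y hxy
    · rw [k2, k4]
      simp only [te, hcx, if_true]
      exact (hd x y hxy).symm
  · let F : V × V → W × W := fun p => if c (f p.1) = c (f v) then (base p.1, tip p.1 p.2)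
      else (tip p.2 p.1, base p.2)
    refine orbs_lt F ?_ (darts_finite hf.gt N (fun p hp => hp.1)) ?_ (p := (v, w)) (q := (v, w'))
      ⟨hw, (hd _ _ hw).ne⟩ ⟨hw', (hd _ _ hw').ne⟩ ?_ ⟨1, ?_⟩
    · rintro n ⟨x, y⟩
      have e1 : ∀ z : V, n • z = (n : G) • z := fun z => rfl
      simp only [F, Prod.smul_mk, e1, hf.eqv, hc.inv]
      split_ifs
      · exact Prod.ext (base_eqv _ _) (tip_eqv _ _ _)
      · exact Prod.ext (tip_eqv _ _ _) (base_eqv _ _)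
    · rintro ⟨a, b⟩ ⟨hab, hne2⟩
      obtain ⟨x, y, hxy, hcx, ⟨k1, k2, k3, k4⟩ | ⟨k1, k2, k3, k4⟩⟩ := hpc a b hab hne2
      · refine ⟨(x, y), ⟨hxy, (hd _ _ hxy).ne⟩, ?_⟩
        simp only [F, hcx, if_true]
        refine Prod.ext (h4 _ _ ?_ ?_) (h4 _ _ ?_ ?_)
        · rw [hb1, k1]
        · rw [hb2, k2]
        · rw [ht1, k3]
        · rw [(ht2 _ _).1 hxy, k4]
      · refine ⟨(y, x), ⟨hxy.symm, (hd _ _ hxy).ne.symm⟩, ?_⟩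
        have hcy : ¬ c (f y) = c (f v) := by
          rw [← hcx]; exact (hc.adj _ _ (hd _ _ hxy)).symm
        simp only [F, hcy, if_false]
        refine Prod.ext (h4 _ _ ?_ ?_) (h4 _ _ ?_ ?_)
        · rw [ht1, k3]
        · rw [(ht2 _ _).1 hxy, k4]
        · rw [hb1, k1]
        · rw [hb2, k2]
    · intro n hn
      have e1 : (n : G) • v = v := congrArg Prod.fst hn
      have e2 : (n : G) • w = w' := congrArg Prod.snd hn
      rw [free_act hf.gt htf n.2 e1, one_smul] at e2
      exact hne e2
    · rw [one_smul]
      simp only [F, if_true]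
      refine Prod.ext rfl (h4 _ _ ?_ ?_)
      · rw [ht1, ht1]
      · rw [(ht2 _ _).1 hw, (ht2 _ _).1 hw']
        simp [te, hfw]

theorem minimize {N : Subgroup G} [N.FiniteIndex] (htf : ∀ n ∈ N, n ≠ 1 → ¬ IsOfFinOrder n)
    (hΘ : GT G' Θ) {c : T → Bool} (hc : Colored G' Θ c) {V : Type u} [MulAction G V]
    {Γ : SimpleGraph V} (hΓ : GT G Γ) :
    (∀ n ∈ N, φ n = 1 → n = 1) ∨
    ∃ (W : Type u) (_ : MulAction G W) (Δ : SimpleGraph W), GT G Δ ∧ ∃ n ∈ N, n ≠ 1 ∧ Win N Δ n ∧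
      ∃ t : T, φ n • t = t := by
  classical
  by_contra hcon
  push Not at hcon
  obtain ⟨hcon1, hcon2⟩ := hcon
  have hex : ∃ m : ℕ, ∃ (W : Type u) (_ : MulAction G W) (Δ : SimpleGraph W) (f : W → T), EM φ Δ f ∧
      (∀ x y, Δ.Adj x y → f x = f y ∨ Θ.Adj (f x) (f y)) ∧ (orbs N (pos Δ f)).ncard = m := by
    obtain ⟨f, hf⟩ := exists_EM φ hΓ hΘ hc
    obtain ⟨L, hL⟩ := hf.exists_bound hΘ
    obtain ⟨W, iW, Δ, f', h1, h2⟩ := EM.shorten hΘ L hf hL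
    refine ⟨_, W, iW, Δ, f', h1, fun x y hxy => ?_, rfl⟩
    have := h2 x y hxy
    rcases Nat.le_one_iff_eq_zero_or_eq_one.1 this with e | e
    · exact Or.inl (hΘ.tree.1.dist_eq_zero_iff.1 e)
    · exact Or.inr (dist_eq_one_iff_adj.1 e)
  obtain ⟨W, iW, Δ, f, hf, hd, hm⟩ := Nat.find_spec hex
  have hmin := fun m => Nat.find_min' hex (m := m)
  have hfin : ∀ v, {w | (zeroG Δ f).Reachable v w}.Finite := by
    intro v
    by_contra hinf
    obtain ⟨n, hn, hn1, hwin, w, hw⟩ := win_of_infinite (N := N) hf.gt (Z := zeroG Δ f)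
      (fun x y h => h.1) hinf
    refine hcon2 W iW Δ hf.gt n hn hn1 hwin (f w) ?_
    rw [← hf.eqv, zeroG_reach hw]
  obtain ⟨W2, iW2, Δ2, f2, hf2, hd2, hm2⟩ := hf.contractZero (N := N) hd hfin
  have hli : ∀ v w w', Δ2.Adj v w → Δ2.Adj v w' → f2 w = f2 w' → w = w' := by
    intro v w w' hw hw' he
    by_contra hne
    obtain ⟨W3, iW3, Δ3, f3, hf3, hd3, hm3⟩ := hf2.fold htf hc hd2 hw hw' hne he
    have := hmin _ ⟨W3, iW3, Δ3, f3, hf3, hd3, rfl⟩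
    omega
  have hinj := isom_of_locinj hf2.gt.tree hΘ.tree hd2 hli
  obtain ⟨n, hn, hφ, hn1⟩ := hcon1
  obtain ⟨v⟩ := hf2.gt.tree.1.nonempty
  refine hn1 (free_act hf2.gt htf hn (v := v) (hinj ?_))
  rw [hf2.eqv, hφ, one_smul]

end folds
end VF

namespace VF
open SimpleGraph

universe u
section reduction
variable {G : Type u} [Group G]

theorem GT.fin_nbr {V : Type u} [MulAction G V] {Γ : SimpleGraph V} (h : GT G Γ) (v : V) :
    {w | Γ.Adj v w}.Finite := by
  classical
  obtain ⟨D, hD, hD'⟩ := h.fin_dart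
  have hco : ∀ d : V × V, {g : G | g • v = d.1}.Finite := by
    intro d
    by_cases hne : ∃ g0 : G, g0 • v = d.1
    · obtain ⟨g0, hg0⟩ := hne
      refine ((h.fin_stab v).image (fun g => g0 * g)).subset ?_
      intro g hg
      refine ⟨g0⁻¹ * g, ?_, by simp⟩
      have hg' : g • v = d.1 := hg
      change (g0⁻¹ * g) • v = v
      rw [mul_smul, hg', ← hg0, inv_smul_smul]
    · convert Set.finite_empty
      ext g
      simp only [Set.mem_empty_iff_false, iff_false]
      exact fun hg => hne ⟨g, hg⟩
  refine (hD.biUnion (fun d _ => (hco d).image (fun g => g⁻¹ • d.2))).subset ?_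
  intro w hw
  obtain ⟨g, hg⟩ := hD' v w hw
  refine Set.mem_biUnion hg ⟨g, rfl, ?_⟩
  simp

/-- no edge can be collapsed -/
def Reduced (G : Type u) [Group G] {V : Type u} [MulAction G V] (Γ : SimpleGraph V) : Prop :=
  ∀ v a : V, Γ.Adj v a → (∀ g : G, g • v ≠ a) → ∃ g : G, g • v = v ∧ g • a ≠ a

theorem Win.contract {N : Subgroup G} {V W : Type u} [MulAction G V] [MulAction G W]
    {Γ : SimpleGraph V} {Δ : SimpleGraph W} {n : G} (hw : Win N Γ n) (r : V → W)
    (h : GT G Γ)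
    (heq : ∀ (g : G) v, r (g • v) = g • r v)
    (hadj : ∀ a b, Δ.Adj a b ↔ a ≠ b ∧ ∃ x y, r x = a ∧ r y = b ∧ Γ.Adj x y)
    (hu : ∀ x y x' y', Γ.Adj x y → Γ.Adj x' y' → r x ≠ r y → r x = r x' → r y = r y' →
        x = x' ∧ y = y') : Win N Δ n := by
  obtain ⟨k, x, h1, h2, h3⟩ := hw
  refine ⟨k, fun i => r (x i), by simp only [h1, heq], ?_, ?_⟩
  · intro i hi
    by_cases e : r (x i) = r (x (i + 1))
    · exact Or.inl e
    · right
      rcases h2 i hi with h4 | h4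
      · exact absurd (congrArg r h4) e
      · exact (hadj _ _).2 ⟨e, _, _, rfl, rfl, h4⟩
  · intro i j hij hj hne m hm ⟨e1, e2⟩
    have hne' : x i ≠ x (i + 1) := fun e => hne (congrArg r e)
    have hai : Γ.Adj (x i) (x (i + 1)) := (h2 i (hij.trans hj)).resolve_left hne'
    have e1 : m • r (x i) = r (x j) := e1
    have e2 : m • r (x (i + 1)) = r (x (j + 1)) := e2
    have hrj : r (x j) ≠ r (x (j + 1)) := by
      rw [← e1, ← e2]
      intro e
      exact hne ((smul_left_cancel_iff m).1 e)
    have haj : Γ.Adj (x j) (x (j + 1)) :=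
      (h2 j hj).resolve_left (fun e => hrj (congrArg r e))
    have hu' := hu (x j) (x (j + 1)) (m • x i) (m • x (i + 1)) haj (h.adj_smul m _ _ hai) hrj
      (by rw [heq]; exact e1.symm) (by rw [heq]; exact e2.symm)
    exact h3 i j hij hj hne' m hm ⟨hu'.1.symm, hu'.2.symm⟩

theorem orbs_vert_finite {V : Type u} [MulAction G V] {Γ : SimpleGraph V} (h : GT G Γ) :
    (orbs G (Set.univ : Set V)).Finite := by
  obtain ⟨D, hD, hD'⟩ := h.fin_vert
  exact orbs_finite hD (fun x _ => hD' x)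

theorem collapse {V : Type u} [MulAction G V] {Γ : SimpleGraph V} (h : GT G Γ) {v a : V}
    (hva : Γ.Adj v a) (hne : ∀ g : G, g • v ≠ a) (hfix : ∀ g : G, g • v = v → g • a = a)
    {N : Subgroup G} {n : G} (hw : Win N Γ n) :
    ∃ (W : Type u) (_ : MulAction G W) (Δ : SimpleGraph W), GT G Δ ∧ Win N Δ n ∧
      (orbs G (Set.univ : Set W)).ncard < (orbs G (Set.univ : Set V)).ncard := by
  let Z : SimpleGraph V :=
    { Adj := fun x y => ∃ g : G, (g • v = x ∧ g • a = y) ∨ (g • v = y ∧ g • a = x)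
      symm := ⟨fun x y ⟨g, hg⟩ => ⟨g, hg.symm⟩⟩
      loopless := ⟨fun x ⟨g, hg⟩ => by
        have : g • v = g • a := by
          rcases hg with ⟨h1, h2⟩ | ⟨h1, h2⟩ <;> rw [h1, h2]
        exact hva.ne (smul_left_cancel g this)⟩ }
  have hZ : Z ≤ Γ := by
    rintro x y ⟨g, ⟨rfl, rfl⟩ | ⟨rfl, rfl⟩⟩
    · exact h.adj_smul g _ _ hva
    · exact (h.adj_smul g _ _ hva).symm
  have hinv : ∀ (g : G) (x y : V), Z.Adj x y → Z.Adj (g • x) (g • y) := by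
    rintro g x y ⟨k, ⟨rfl, rfl⟩ | ⟨rfl, rfl⟩⟩
    · exact ⟨g * k, Or.inl ⟨mul_smul _ _ _, mul_smul _ _ _⟩⟩
    · exact ⟨g * k, Or.inr ⟨mul_smul _ _ _, mul_smul _ _ _⟩⟩
  -- everything reachable from `k • a` is in the star
  have hstar : ∀ (k : G) (y z : V), Z.Adj y z → (y = k • a ∨ ∃ g : G, g • v = y ∧ g • a = k • a) →
      (z = k • a ∨ ∃ g : G, g • v = z ∧ g • a = k • a) := by
    rintro k y z ⟨g, ⟨rfl, rfl⟩ | ⟨rfl, rfl⟩⟩ hy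
    · left
      rcases hy with hy | ⟨g', h1, h2⟩
      · exfalso
        refine hne (k⁻¹ * g) ?_
        rw [mul_smul, hy, inv_smul_smul]
      · have := hfix (g⁻¹ * g') (by rw [mul_smul, h1, inv_smul_smul])
        rw [mul_smul, inv_smul_eq_iff, h2] at this
        exact this.symm
    · right
      rcases hy with hy | ⟨g', h1, h2⟩
      · exact ⟨g, rfl, hy⟩
      · exfalso
        refine hne (g⁻¹ * g') ?_
        rw [mul_smul, h1, inv_smul_smul]
  have hfin : ∀ x, {w | Z.Reachable x w}.Finite := by
    intro x
    by_cases hx : ∃ k : G, x = k • a ∨ ∃ g : G, g • v = x ∧ g • a = k • a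
    · obtain ⟨k, hk⟩ := hx
      refine ((h.fin_nbr (k • a)).insert (k • a)).subset ?_
      rintro w ⟨p⟩
      have : ∀ {x w : V} (p : Z.Walk x w), (x = k • a ∨ ∃ g : G, g • v = x ∧ g • a = k • a) →
          (w = k • a ∨ ∃ g : G, g • v = w ∧ g • a = k • a) := by
        intro x w p
        induction p with
        | nil => exact id
        | cons hxy _ ih => exact fun hx => ih (hstar k _ _ hxy hx)
      rcases this p hk with rfl | ⟨g, rfl, h2⟩
      · exact Set.mem_insert _ _
      · right
        change Γ.Adj _ _
        rw [← h2]
        exact (h.adj_smul g _ _ hva).symm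
    · refine (Set.finite_singleton x).subset ?_
      rintro w ⟨p⟩
      cases p with
      | nil => rfl
      | cons hxy _ =>
        exfalso
        obtain ⟨g, ⟨h1, h2⟩ | ⟨h1, h2⟩⟩ := hxy
        · exact hx ⟨g, Or.inr ⟨g, h1, rfl⟩⟩
        · exact hx ⟨g, Or.inl h2.symm⟩
  obtain ⟨W, act, Δ, r, hΔ, hsurj, heq, hrr, hadj, hu⟩ := VF.contract h Z hZ hinv hfin
  refine ⟨W, act, Δ, hΔ, hw.contract r h heq hadj hu, ?_⟩
  refine orbs_lt r heq (orbs_vert_finite h) ?_ (p := v) (q := a) trivial trivial hne ?_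
  · rw [Set.image_univ, hsurj.range_eq]
  · refine ⟨1, ?_⟩
    rw [one_smul, hrr]
    exact Adj.reachable ⟨1, Or.inl ⟨one_smul _ _, one_smul _ _⟩⟩

theorem reduce {N : Subgroup G} {n : G} {V : Type u} [MulAction G V] {Γ : SimpleGraph V}
    (h : GT G Γ) (hw : Win N Γ n) :
    ∃ (W : Type u) (_ : MulAction G W) (Δ : SimpleGraph W), GT G Δ ∧ Win N Δ n ∧ Reduced G Δ := by
  classical
  have hex : ∃ m : ℕ, ∃ (W : Type u) (_ : MulAction G W) (Δ : SimpleGraph W), GT G Δ ∧ Win N Δ n ∧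
      (orbs G (Set.univ : Set W)).ncard = m := ⟨_, V, _, Γ, h, hw, rfl⟩
  obtain ⟨W, act, Δ, hΔ, hwΔ, hm⟩ := Nat.find_spec hex
  refine ⟨W, act, Δ, hΔ, hwΔ, ?_⟩
  intro v a hva hne
  by_contra hcon
  push Not at hcon
  obtain ⟨W', act', Δ', h1, h2, h3⟩ := collapse hΔ hva hne hcon hwΔ
  rw [hm] at h3
  exact Nat.find_min hex h3 ⟨W', act', Δ', h1, h2, rfl⟩

end reduction

/-- integration of a cocycle over a tree -/
theorem integrate {V M : Type*} [Group M] {Γ : SimpleGraph V} (hT : Γ.IsTree) (v0 : V)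
    (m : V → V → M) (hm : ∀ v w, Γ.Adj v w → m v w * m w v = 1) :
    ∃ p : V → M, p v0 = 1 ∧ ∀ v w, Γ.Adj v w → p w = p v * m v w := by
  classical
  let F : ℕ → V → M := fun n => Nat.rec (fun _ => 1)
    (fun _ f v => f (step Γ v v0) * m (step Γ v v0) v) n
  have key : ∀ v w, Γ.Adj v w → Γ.dist w v0 = Γ.dist v v0 + 1 →
      F (Γ.dist w v0) w = F (Γ.dist v v0) v * m v w := by
    intro v w hvw hd
    rw [hd]
    have : v = step Γ w v0 := eq_step hT hvw.symm hd
    change F (Γ.dist v v0) (step Γ w v0) * m (step Γ w v0) w = _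
    rw [← this]
  refine ⟨fun v => F (Γ.dist v v0) v, ?_, ?_⟩
  · simp only [SimpleGraph.dist_self]
    rfl
  · intro v w hvw
    rcases dist_adj_cases hT v0 hvw with h1 | h1
    · exact key v w hvw h1
    · have := key w v hvw.symm h1
      simp only
      rw [this, mul_assoc, hm w v hvw.symm, mul_one]

end VF

namespace VF
open SimpleGraph

universe u
section euler
variable {G : Type u} [Group G] {V : Type u} [MulAction G V] {Γ : SimpleGraph V}

theorem const_of_adj {V X : Type*} {Γ : SimpleGraph V} (hc : Γ.Connected) (F : V → X)
    (h : ∀ v w, Γ.Adj v w → F v = F w) (v w : V) : F v = F w := by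
  obtain ⟨p⟩ := hc.preconnected v w
  induction p with
  | nil => rfl
  | cons hxy _ ih => exact (h _ _ hxy).trans ih

theorem closed_of_adj {V : Type*} {Γ : SimpleGraph V} (hc : Γ.Connected) (F : V → Prop)
    (h : ∀ v w, Γ.Adj v w → F v → F w) (v : V) (hv : F v) (w : V) : F w := by
  have := const_of_adj hc F (fun a b hab => propext ⟨h a b hab, h b a hab.symm⟩) v w
  exact this ▸ hv

theorem transversal (h : GT G Γ) (N : Subgroup G) [N.FiniteIndex] :
    ∃ V0 : Finset V, (∀ v, ∃ n ∈ N, n • v ∈ V0) ∧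
      ∀ v ∈ V0, ∀ w ∈ V0, ∀ n ∈ N, n • v = w → v = w := by
  classical
  obtain ⟨D, hD, hD'⟩ := h.fin_vert
  obtain ⟨D2, hD2, hD2'⟩ := finite_reps N (P := Set.univ) hD (fun x _ => hD' x)
  let q : V → MulAction.orbitRel.Quotient N V := Quotient.mk _
  have hq : ∀ v w, q v = q w ↔ ∃ n : N, n • w = v := by
    intro v w
    refine Quotient.eq.trans ?_
    rw [MulAction.orbitRel_apply]
    exact Iff.rfl
  refine ⟨hD2.toFinset.image (fun d => (q d).out), ?_, ?_⟩
  · intro v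
    obtain ⟨n, hn⟩ := hD2' v trivial
    have : q (q (n • v)).out = q v := by
      rw [show q (q (n • v)).out = q (n • v) from Quotient.out_eq _]
      exact (hq _ _).2 ⟨n, rfl⟩
    obtain ⟨m, hm⟩ := (hq _ _).1 this
    refine ⟨m, m.2, ?_⟩
    rw [Finset.mem_image]
    exact ⟨n • v, by simpa using hn, hm.symm⟩
  · intro v hv w hw n hn e
    rw [Finset.mem_image] at hv hw
    obtain ⟨d, _, rfl⟩ := hv
    obtain ⟨d', _, rfl⟩ := hw
    have : q (q d').out = q (q d).out := (hq _ _).2 ⟨⟨n, hn⟩, e⟩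
    rw [show q (q d').out = q d' from Quotient.out_eq _, show q (q d).out = q d from Quotient.out_eq _] at this
    rw [this]

/-- the finite set of neighbours -/
noncomputable def nb (h : GT G Γ) (v : V) : Finset V := (h.fin_nbr v).toFinset

theorem mem_nb (h : GT G Γ) {v w : V} : w ∈ nb h v ↔ Γ.Adj v w := by simp [nb]

theorem card_nb_smul (h : GT G Γ) (g : G) (v : V) : (nb h (g • v)).card = (nb h v).card := by
  classical
  have : nb h (g • v) = (nb h v).image (fun w => g • w) := by
    ext w
    rw [mem_nb, Finset.mem_image]
    constructor
    · intro hw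
      refine ⟨g⁻¹ • w, ?_, by simp⟩
      rw [mem_nb, ← adj_smul_iff h.adj_smul g]
      simpa using hw
    · rintro ⟨x, hx, rfl⟩
      exact h.adj_smul g _ _ ((mem_nb h).1 hx)
  rw [this, Finset.card_image_of_injective _ (MulAction.injective g)]

/-- unoriented edge orbit -/
def eo (N : Subgroup G) (x y : V) : Set (V × V) :=
  {p | ∃ n ∈ N, p = (n • x, n • y) ∨ p = (n • y, n • x)}

theorem eo_symm (N : Subgroup G) (x y : V) : eo N x y = eo N y x := by
  ext p; simp only [eo, Set.mem_ofPred_eq]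
  exact ⟨fun ⟨n, hn, h⟩ => ⟨n, hn, h.symm⟩, fun ⟨n, hn, h⟩ => ⟨n, hn, h.symm⟩⟩

theorem eo_smul (N : Subgroup G) {n : G} (hn : n ∈ N) (x y : V) : eo N (n • x) (n • y) = eo N x y := by
  ext p; simp only [eo, Set.mem_ofPred_eq]
  constructor
  · rintro ⟨m, hm, h⟩
    exact ⟨m * n, N.mul_mem hm hn, by simpa only [mul_smul] using h⟩
  · rintro ⟨m, hm, h⟩
    exact ⟨m * n⁻¹, N.mul_mem hm (N.inv_mem hn), by simpa only [mul_smul, inv_smul_smul] using h⟩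

theorem euler (h : GT G Γ) {N : Subgroup G} (hfree : ∀ n ∈ N, ∀ v : V, n • v = v → n = 1)
    {V0 : Finset V} (hV1 : ∀ v, ∃ n ∈ N, n • v ∈ V0)
    (hV2 : ∀ v ∈ V0, ∀ w ∈ V0, ∀ n ∈ N, n • v = w → v = w)
    {S : Finset G} (hS : Subgroup.closure (S : Set G) = N) :
    (V0.sigma (fun v => nb h v)).card ≤ 2 * (V0.card + S.card) := by
  classical
  set D0 := V0.sigma (fun v => nb h v) with hD0
  let q : (Σ _ : V, V) → Set (V × V) := fun d => eo N d.1 d.2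
  have h1 : D0.card ≤ 2 * (D0.image q).card := by
    apply Finset.card_le_mul_card_image
    intro b hb
    obtain ⟨d, hd, rfl⟩ := Finset.mem_image.1 hb
    obtain ⟨n0, hn0, hn0'⟩ := hV1 d.2
    refine (Finset.card_le_card (t := {d, ⟨n0 • d.2, n0 • d.1⟩}) ?_).trans Finset.card_le_two
    intro a ha
    obtain ⟨ha, hqa⟩ := Finset.mem_filter.1 ha
    have ha1 : a.1 ∈ V0 := (Finset.mem_sigma.1 ha).1
    have hd1 : d.1 ∈ V0 := (Finset.mem_sigma.1 hd).1
    have hmem : (a.1, a.2) ∈ eo N d.1 d.2 := by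
      rw [← show eo N a.1 a.2 = eo N d.1 d.2 from hqa]
      exact ⟨1, N.one_mem, by simp⟩
    obtain ⟨n, hn, e | e⟩ := hmem
    · rw [Prod.mk.injEq] at e
      have e1 := hV2 _ hd1 _ ha1 n hn e.1.symm
      have e2 := hfree n hn d.1 (by rw [← e.1, e1])
      rw [e2, one_smul, one_smul] at e
      rw [Finset.mem_insert]
      left
      exact Sigma.ext e.1 (heq_of_eq e.2)
    · rw [Prod.mk.injEq] at e
      have e0 : (n * n0⁻¹) • (n0 • d.2) = a.1 := by rw [mul_smul, inv_smul_smul, e.1]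
      have hnn := N.mul_mem hn (N.inv_mem hn0)
      have e1 := hV2 _ hn0' _ ha1 _ hnn e0
      have e2 := hfree _ hnn (n0 • d.2) (by rw [e0, e1])
      rw [mul_inv_eq_one] at e2
      rw [Finset.mem_insert, Finset.mem_singleton]
      right
      rw [e2] at e
      exact Sigma.ext e.1 (heq_of_eq e.2)
  obtain ⟨v0⟩ := h.tree.1.nonempty
  set E := D0.image q with hE
  have hintg : ∀ T : Finset (Set (V × V)), ∃ p : V → ℤˣ, p v0 = 1 ∧
      ∀ v w, Γ.Adj v w → p w = p v * (if eo N v w ∈ T then -1 else 1) := by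
    intro T
    apply integrate h.tree v0 (fun v w => if eo N v w ∈ T then -1 else 1)
    intro v w _
    rw [eo_symm N w v]
    split_ifs <;> simp
  choose p hp0 hp using hintg
  have hch : ∀ T, ∀ n ∈ N, ∀ v, p T (n • v) = p T (n • v0) * p T v := by
    intro T n hn v
    have := const_of_adj h.tree.1 (fun v => p T (n • v) * (p T v)⁻¹) (by
      intro v w hvw
      rw [hp T v w hvw, hp T (n • v) (n • w) (h.adj_smul n _ _ hvw), eo_smul N hn, mul_inv,
        mul_mul_mul_comm, mul_inv_cancel, mul_one]) v v0
    simp only [hp0, inv_one, mul_one] at this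
    rw [← this, inv_mul_cancel_right]
  let Φ : Finset (Set (V × V)) → ((S → ℤˣ) × (V0 → ℤˣ)) :=
    fun T => (fun s => p T (s.1 • v0), fun v => p T v.1)
  have hinj : Set.InjOn Φ (E.powerset : Set (Finset (Set (V × V)))) := by
    intro T hT T' hT' hΦ
    rw [Finset.mem_coe, Finset.mem_powerset] at hT hT'
    have hΦ1 : ∀ s ∈ S, p T (s • v0) = p T' (s • v0) := fun s hs =>
      congrFun (congrArg Prod.fst hΦ) ⟨s, hs⟩
    have hΦ2 : ∀ v ∈ V0, p T v = p T' v := fun v hv => congrFun (congrArg Prod.snd hΦ) ⟨v, hv⟩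
    have hN : ∀ n ∈ N, p T (n • v0) = p T' (n • v0) := by
      intro n hn
      have hn' : n ∈ Subgroup.closure (S : Set G) := by rw [hS]; exact hn
      induction hn' using Subgroup.closure_induction with
      | mem x hx => exact hΦ1 x hx
      | one => rw [one_smul, hp0, hp0]
      | mul x y hx hy ihx ihy =>
        rw [hS] at hx hy
        rw [mul_smul, hch T x hx, hch T' x hx, ihx hx, ihy hy]
      | inv x hx ih =>
        rw [hS] at hx
        have a1 := hch T x hx (x⁻¹ • v0)
        have a2 := hch T' x hx (x⁻¹ • v0)
        rw [smul_inv_smul, hp0] at a1 a2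
        rw [← ih hx] at a2
        exact mul_left_cancel (a1.symm.trans a2)
    have hall : ∀ v, p T v = p T' v := by
      intro v
      obtain ⟨n, hn, hnv⟩ := hV1 v
      have a1 := hch T n hn v
      have a2 := hch T' n hn v
      rw [hΦ2 _ hnv, hN n hn] at a1
      exact mul_left_cancel (a1.symm.trans a2)
    have hmem : ∀ b ∈ E, (b ∈ T ↔ b ∈ T') := by
      intro b hb
      obtain ⟨d, hd, rfl⟩ := Finset.mem_image.1 hb
      have hadj : Γ.Adj d.1 d.2 := (mem_nb h).1 (Finset.mem_sigma.1 hd).2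
      have a1 := hp T _ _ hadj
      have a2 := hp T' _ _ hadj
      rw [hall d.1, hall d.2, a2] at a1
      have a3 := mul_left_cancel a1
      change eo N d.1 d.2 ∈ T ↔ eo N d.1 d.2 ∈ T'
      have hne : (1 : ℤˣ) ≠ -1 := by decide
      by_cases c1 : eo N d.1 d.2 ∈ T <;> by_cases c2 : eo N d.1 d.2 ∈ T'
      · exact iff_of_true c1 c2
      · rw [if_pos c1, if_neg c2] at a3
        exact absurd a3 hne
      · rw [if_neg c1, if_pos c2] at a3
        exact absurd a3.symm hne
      · exact iff_of_false c1 c2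
    ext b
    exact ⟨fun hb => (hmem b (hT hb)).1 hb, fun hb => (hmem b (hT' hb)).2 hb⟩
  have hcard := Finset.card_le_card_of_injOn (s := E.powerset) (t := Finset.univ) Φ
    (fun _ _ => Finset.mem_coe.2 (Finset.mem_univ _)) hinj
  rw [Finset.card_powerset, Finset.card_univ, Fintype.card_prod, Fintype.card_fun, Fintype.card_fun,
    Fintype.card_units_int, Fintype.card_coe, Fintype.card_coe, ← pow_add,
    Nat.pow_le_pow_iff_right (by norm_num)] at hcard
  omega

/-- two orbits case -/
theorem card_two {N : Subgroup G} [N.FiniteIndex] {V0 : Finset V}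
    (hV2 : ∀ v ∈ V0, ∀ w ∈ V0, ∀ n ∈ N, n • v = w → v = w) (v1 v2 : V)
    (hall : ∀ w, (∃ g : G, g • v1 = w) ∨ ∃ g : G, g • v2 = w) : V0.card ≤ 2 * N.index := by
  classical
  have : Fintype (G ⧸ N) := Fintype.ofFinite _
  have h1 : ∀ w, ∃ (b : Bool) (g : G), g • (if b then v1 else v2) = w := by
    intro w
    rcases hall w with ⟨g, hg⟩ | ⟨g, hg⟩
    · exact ⟨true, g, by simpa using hg⟩
    · exact ⟨false, g, by simpa using hg⟩
  choose b g hg using h1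
  have hcard := Finset.card_le_card_of_injOn (s := V0) (t := (Finset.univ : Finset (Bool × (G ⧸ N))))
    (fun w => (b w, (((g w)⁻¹ : G) : G ⧸ N))) (fun _ _ => Finset.mem_coe.2 (Finset.mem_univ _)) (by
      intro v hv w hw e
      simp only [Prod.mk.injEq] at e
      obtain ⟨e1, e2⟩ := e
      rw [eq_comm, QuotientGroup.eq, inv_inv] at e2
      refine hV2 v hv w hw _ e2 ?_
      have e3 : (g v)⁻¹ • v = if b v then v1 else v2 := by rw [inv_smul_eq_iff, hg v]
      rw [mul_smul, e3, e1, hg w])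
  rw [Finset.card_univ, Fintype.card_prod, Fintype.card_bool, ← Nat.card_eq_fintype_card] at hcard
  exact hcard

theorem vert_bound (h : GT G Γ) (hr : Reduced G Γ) {N : Subgroup G} [N.FiniteIndex]
    (hfree : ∀ n ∈ N, ∀ v : V, n • v = v → n = 1)
    {V0 : Finset V} (hV1 : ∀ v, ∃ n ∈ N, n • v ∈ V0)
    (hV2 : ∀ v ∈ V0, ∀ w ∈ V0, ∀ n ∈ N, n • v = w → v = w)
    {S : Finset G} (hS : Subgroup.closure (S : Set G) = N) :
    V0.card ≤ 8 * S.card + 2 * N.index := by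
  classical
  by_cases hcase : ∃ v1 v2 : V, ∀ w, (∃ g : G, g • v1 = w) ∨ ∃ g : G, g • v2 = w
  · obtain ⟨v1, v2, hall⟩ := hcase
    have := card_two hV2 v1 v2 hall
    omega
  push Not at hcase
  have c1 : ∀ v : V, ∃ a, Γ.Adj v a ∧ ∀ g : G, g • v ≠ a := by
    intro v
    by_contra hcon
    push Not at hcon
    obtain ⟨w, hw, -⟩ := hcase v v
    obtain ⟨g, hg⟩ := closed_of_adj h.tree.1 (fun x => ∃ g : G, g • v = x) (by
      rintro x y hxy ⟨g, rfl⟩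
      obtain ⟨k, hk⟩ := hcon (g⁻¹ • y) (by
        rw [← adj_smul_iff h.adj_smul g]; simpa using hxy)
      exact ⟨g * k, by rw [mul_smul, hk, smul_inv_smul]⟩) v ⟨1, one_smul _ _⟩ w
    exact hw g hg
  have c2 : ∀ v a : V, Γ.Adj v a → (∀ g : G, g • v ≠ a) →
      2 ≤ (nb h v).card ∧ ((nb h v).card = 2 → ∀ b, Γ.Adj v b → ∃ g : G, g • a = b) := by
    intro v a hva hne
    obtain ⟨g, hg1, hg2⟩ := hr v a hva hne
    have hva' : Γ.Adj v (g • a) := by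
      have := h.adj_smul g _ _ hva
      rwa [hg1] at this
    have hsub : ({a, g • a} : Finset V) ⊆ nb h v := by
      intro x hx
      rw [Finset.mem_insert, Finset.mem_singleton] at hx
      rw [mem_nb]
      rcases hx with rfl | rfl
      · exact hva
      · exact hva'
    have hc : ({a, g • a} : Finset V).card = 2 := Finset.card_pair hg2.symm
    refine ⟨hc ▸ Finset.card_le_card hsub, fun h2 b hb => ?_⟩
    have := Finset.eq_of_subset_of_card_le hsub (by rw [h2, hc])
    have hb' : b ∈ nb h v := (mem_nb h).2 hb
    rw [← this, Finset.mem_insert, Finset.mem_singleton] at hb'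
    rcases hb' with rfl | rfl
    · exact ⟨1, one_smul _ _⟩
    · exact ⟨g, rfl⟩
  have c3 : ∀ v : V, 2 ≤ (nb h v).card := fun v => by
    obtain ⟨a, h1, h2⟩ := c1 v
    exact (c2 v a h1 h2).1
  have c4 : ∀ v : V, (nb h v).card = 2 → ∃ b, Γ.Adj v b ∧ (nb h b).card ≠ 2 := by
    intro v hv
    obtain ⟨a, h1, h2⟩ := c1 v
    refine ⟨a, h1, fun ha => ?_⟩
    have e1 := (c2 v a h1 h2).2 hv
    have h2' : ∀ g : G, g • a ≠ v := fun g hg => h2 g⁻¹ (by rw [← hg, inv_smul_smul])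
    have e2 := (c2 a v h1.symm h2').2 ha
    obtain ⟨w, hw1, hw2⟩ := hcase v a
    have := closed_of_adj h.tree.1 (fun x => (∃ g : G, g • v = x) ∨ ∃ g : G, g • a = x) (by
      rintro x y hxy (⟨g, rfl⟩ | ⟨g, rfl⟩)
      · obtain ⟨k, hk⟩ := e1 (g⁻¹ • y) (by
          rw [← adj_smul_iff h.adj_smul g]; simpa using hxy)
        exact Or.inr ⟨g * k, by rw [mul_smul, hk, smul_inv_smul]⟩
      · obtain ⟨k, hk⟩ := e2 (g⁻¹ • y) (by
          rw [← adj_smul_iff h.adj_smul g]; simpa using hxy)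
        exact Or.inl ⟨g * k, by rw [mul_smul, hk, smul_inv_smul]⟩) v (Or.inl ⟨1, one_smul _ _⟩) w
    rcases this with ⟨g, hg⟩ | ⟨g, hg⟩
    · exact hw1 g hg
    · exact hw2 g hg
  have heul := euler h hfree hV1 hV2 hS
  rw [Finset.card_sigma] at heul
  set A := V0.filter (fun v => (nb h v).card = 2) with hA
  set B := V0.filter (fun v => ¬ (nb h v).card = 2) with hB
  have hAB : A.card + B.card = V0.card := Finset.card_filter_add_card_filter_not _
  have hsum : ∑ v ∈ A, (nb h v).card + ∑ v ∈ B, (nb h v).card = ∑ v ∈ V0, (nb h v).card :=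
    Finset.sum_filter_add_sum_filter_not _ _ _
  have hsA : ∑ v ∈ A, (nb h v).card = 2 * A.card := by
    rw [Finset.sum_congr rfl (fun v hv => (Finset.mem_filter.1 hv).2), Finset.sum_const, smul_eq_mul,
      mul_comm]
  have hsB : 3 * B.card ≤ ∑ v ∈ B, (nb h v).card := by
    rw [mul_comm, ← smul_eq_mul]
    refine Finset.card_nsmul_le_sum _ _ _ (fun v hv => ?_)
    have := (Finset.mem_filter.1 hv).2
    have := c3 v
    omega
  have hAle : A.card ≤ ∑ v ∈ B, (nb h v).card := by
    rw [← Finset.card_sigma]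
    have : ∀ v : V, ∃ d : (Σ _ : V, V), v ∈ A → (d ∈ B.sigma (fun v => nb h v) ∧ ∃ n ∈ N, d.2 = n • v) := by
      intro v
      by_cases hv : v ∈ A
      · obtain ⟨b, hb1, hb2⟩ := c4 v (Finset.mem_filter.1 hv).2
        obtain ⟨n, hn, hnb⟩ := hV1 b
        refine ⟨⟨n • b, n • v⟩, fun _ => ⟨?_, n, hn, rfl⟩⟩
        rw [Finset.mem_sigma, mem_nb, hB, Finset.mem_filter, card_nb_smul]
        exact ⟨⟨hnb, hb2⟩, h.adj_smul n _ _ hb1.symm⟩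
      · exact ⟨⟨v, v⟩, fun hv' => absurd hv' hv⟩
    choose d hd using this
    refine Finset.card_le_card_of_injOn d (fun v hv => (hd v hv).1) ?_
    intro v hv w hw e
    obtain ⟨-, n, hn, e1⟩ := hd v hv
    obtain ⟨-, m, hm, e2⟩ := hd w hw
    refine hV2 v (Finset.mem_filter.1 hv).1 w (Finset.mem_filter.1 hw).1 (m⁻¹ * n)
      (N.mul_mem (N.inv_mem hm) hn) ?_
    rw [mul_smul, ← e1, e, e2, inv_smul_smul]
  omega

theorem win_dist (h : GT G Γ) {N : Subgroup G} {V0 : Finset V} (hV1 : ∀ v, ∃ n ∈ N, n • v ∈ V0)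
    {n : G} (hw : Win N Γ n) :
    ∃ x : V, Γ.dist x (n • x) ≤ (V0.sigma (fun v => nb h v)).card := by
  classical
  obtain ⟨k, x, h1, h2, h3⟩ := hw
  refine ⟨x 0, ?_⟩
  rw [← h1]
  have hd : ∀ j ≤ k, Γ.dist (x 0) (x j) ≤ ((Finset.range j).filter (fun i => x i ≠ x (i + 1))).card := by
    intro j
    induction j with
    | zero => simp
    | succ j ih =>
      intro hj
      have ih := ih (by omega)
      rw [Finset.range_add_one, Finset.filter_insert]
      split_ifs with hne
      · rw [Finset.card_insert_of_notMem (by simp)]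
        have ha := (h2 j (by omega)).resolve_left hne
        have := h.tree.1.dist_triangle (u := x 0) (v := x j) (w := x (j + 1))
        rw [dist_eq_one_iff_adj.2 ha] at this
        omega
      · push Not at hne
        rw [← hne]; exact ih
  refine (hd k le_rfl).trans ?_
  choose a haN ha using hV1
  refine Finset.card_le_card_of_injOn (fun i => (⟨a (x i) • x i, a (x i) • x (i + 1)⟩ : Σ _ : V, V)) ?_ ?_
  · intro i hi
    have hi := Finset.mem_filter.1 hi
    rw [Finset.mem_coe, Finset.mem_sigma, mem_nb]
    exact ⟨ha _, h.adj_smul _ _ _ ((h2 i (Finset.mem_range.1 hi.1)).resolve_left hi.2)⟩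
  · have key : ∀ i j, i < j → j < k → x i ≠ x (i + 1) →
        a (x i) • x i = a (x j) • x j → a (x i) • x (i + 1) = a (x j) • x (j + 1) → False := by
      intro i j hij hj hne e1 e2
      refine h3 i j hij hj hne ((a (x j))⁻¹ * a (x i)) (N.mul_mem (N.inv_mem (haN _)) (haN _)) ⟨?_, ?_⟩
      · rw [mul_smul, e1, inv_smul_smul]
      · rw [mul_smul, e2, inv_smul_smul]
    intro i hi j hj e
    have hi := Finset.mem_filter.1 hi
    have hj := Finset.mem_filter.1 hj
    simp only [Sigma.mk.injEq, heq_eq_eq] at e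
    rcases lt_trichotomy i j with hlt | rfl | hlt
    · exact (key i j hlt (Finset.mem_range.1 hj.1) hi.2 e.1 e.2).elim
    · rfl
    · exact (key j i hlt (Finset.mem_range.1 hi.1) hj.2 e.1.symm e.2.symm).elim

end euler
end VF

namespace VF
open SimpleGraph

universe u
section present
variable {G : Type u} [Group G]

/-- A tuple generating the group, whose multiplication table presents the group. -/
def Good {m : ℕ} (e : Fin m → G) : Prop :=
  Subgroup.closure (Set.range e) = ⊤ ∧
    ∀ s : Fin m → G, (∀ i j k, e i * e j = e k → s i * s j = s k) → ∃ ψ : G →* G, ∀ i, ψ (e i) = s i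

/-- the multiplication table -/
def table {m : ℕ} (e : Fin m → G) : Set (Fin m × Fin m × Fin m) := {p | e p.1 * e p.2.1 = e p.2.2}

theorem good_aut {m : ℕ} {e e' : Fin m → G} (h : Good e) (h' : Good e') (ht : table e = table e') :
    ∃ σ : G ≃* G, ∀ i, σ (e i) = e' i := by
  have ht' : ∀ i j k, e i * e j = e k ↔ e' i * e' j = e' k := by
    intro i j k
    have : (i, j, k) ∈ table e ↔ (i, j, k) ∈ table e' := by rw [ht]
    exact this
  obtain ⟨ψ, hψ⟩ := h.2 e' (fun i j k hh => (ht' i j k).1 hh)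
  obtain ⟨ψ', hψ'⟩ := h'.2 e (fun i j k hh => (ht' i j k).2 hh)
  refine ⟨MonoidHom.toMulEquiv ψ ψ' ?_ ?_, hψ⟩
  · apply MonoidHom.eq_of_eqOn_dense h.1
    rintro _ ⟨i, rfl⟩
    simp [hψ, hψ']
  · apply MonoidHom.eq_of_eqOn_dense h'.1
    rintro _ ⟨i, rfl⟩
    simp [hψ, hψ']

theorem types (G : Type u) [Group G] (m : ℕ) : ∃ F : Finset G, (1 : G) ∉ F ∧ ∀ e : Fin m → G, Good e → ∀ i, e i ≠ 1 →
    ∃ σ : G ≃* G, ∃ f ∈ F, σ f = e i := by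
  classical
  have hch : ∀ t : Set (Fin m × Fin m × Fin m), ∃ e : Fin m → G,
      (∃ e' : Fin m → G, Good e' ∧ table e' = t) → Good e ∧ table e = t := by
    intro t
    by_cases h : ∃ e' : Fin m → G, Good e' ∧ table e' = t
    · obtain ⟨e, he⟩ := h
      exact ⟨e, fun _ => he⟩
    · exact ⟨fun _ => 1, fun h' => absurd h' h⟩
  choose r hr using hch
  refine ⟨(Finset.univ.biUnion (fun t => Finset.univ.image (r t))).filter (fun x => x ≠ 1), by simp, ?_⟩
  intro e he i hi
  obtain ⟨h1, h2⟩ := hr (table e) ⟨e, he, rfl⟩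
  obtain ⟨σ, hσ⟩ := good_aut h1 he h2
  refine ⟨σ, r (table e) i, ?_, hσ i⟩
  rw [Finset.mem_filter, Finset.mem_biUnion]
  refine ⟨⟨table e, Finset.mem_univ _, Finset.mem_image.2 ⟨i, Finset.mem_univ _, rfl⟩⟩, ?_⟩
  intro h3
  apply hi
  rw [← hσ i, h3, map_one]

variable {V : Type u} [MulAction G V] {Γ : SimpleGraph V}

theorem closure_ball (h : GT G Γ) (v0 : V) {K R : ℕ} (hKR : K + 1 ≤ R)
    (hK : ∀ v, ∃ g : G, Γ.dist v (g • v0) ≤ K) :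
    Subgroup.closure {g : G | Γ.dist v0 (g • v0) ≤ 2 * R} = ⊤ := by
  have key : ∀ (n : ℕ) (v : V), Γ.dist v v0 = n → ∀ g : G, Γ.dist v (g • v0) ≤ K →
      g ∈ Subgroup.closure {g : G | Γ.dist v0 (g • v0) ≤ 2 * R} := by
    intro n
    induction n with
    | zero =>
      intro v hv g hg
      have : v = v0 := (h.tree.1.dist_eq_zero_iff).1 hv
      subst this
      exact Subgroup.subset_closure (show Γ.dist v (g • v) ≤ 2 * R by omega)
    | succ n ih =>
      intro v hv g hg
      have hne : v ≠ v0 := by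
        rintro rfl
        simp at hv
      have h1 := step_adj h.tree.1 hne
      have h2 := step_dist h.tree.1 hne
      obtain ⟨g', hg'⟩ := hK (step Γ v v0)
      have h3 := ih _ (by omega) g' hg'
      have h4 : g'⁻¹ * g ∈ {g : G | Γ.dist v0 (g • v0) ≤ 2 * R} := by
        change Γ.dist v0 ((g'⁻¹ * g) • v0) ≤ 2 * R
        rw [← dist_smul h.tree.1 h.adj_smul g', ← mul_smul, mul_inv_cancel_left]
        have t1 := h.tree.1.dist_triangle (u := g' • v0) (v := step Γ v v0) (w := g • v0)
        have t2 := h.tree.1.dist_triangle (u := step Γ v v0) (v := v) (w := g • v0)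
        have t3 := dist_eq_one_iff_adj.2 h1.symm
        rw [Γ.dist_comm] at hg'
        omega
      have := Subgroup.mul_mem _ h3 (Subgroup.subset_closure h4)
      rwa [mul_inv_cancel_left] at this
  rw [eq_top_iff]
  intro g _
  exact key _ (g • v0) rfl g (by simp)

theorem midpoint {V : Type*} {Γ : SimpleGraph V} (hc : Γ.Connected) (R : ℕ) (x y : V)
    (h : Γ.dist x y ≤ 2 * R) : ∃ z, Γ.dist z x ≤ R ∧ Γ.dist z y ≤ R := by
  have key : ∀ j ≤ R, ∃ z, Γ.dist z x ≤ j ∧ Γ.dist z y ≤ 2 * R - j := by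
    intro j
    induction j with
    | zero => exact fun _ => ⟨x, by simp, by simpa using h⟩
    | succ j ih =>
      intro hj
      obtain ⟨z, h1, h2⟩ := ih (by omega)
      by_cases e : z = y
      · exact ⟨z, by omega, by rw [e]; simp⟩
      · refine ⟨step Γ z y, ?_, ?_⟩
        · have t := hc.dist_triangle (u := step Γ z y) (v := z) (w := x)
          have t3 := dist_eq_one_iff_adj.2 (step_adj hc e).symm
          omega
        · have := step_dist hc e
          omega
  obtain ⟨z, h1, h2⟩ := key R le_rfl
  exact ⟨z, h1, by omega⟩

theorem extend_ball {H : Type*} [Group H] (h : GT G Γ) (v0 : V) {K R : ℕ} (hKR : K + 1 ≤ R)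
    (hK : ∀ v, ∃ g : G, Γ.dist v (g • v0) ≤ K) (s : G → H)
    (hs : ∀ a b : G, Γ.dist v0 (a • v0) ≤ 2 * R → Γ.dist v0 (b • v0) ≤ 2 * R →
      Γ.dist v0 ((a * b) • v0) ≤ 2 * R → s (a * b) = s a * s b) :
    ∃ ψ : G →* H, ∀ a : G, Γ.dist v0 (a • v0) ≤ 2 * R → ψ a = s a := by
  have hc := h.tree.1
  choose b hb using hK
  have hd : ∀ (v : V) (x y : G), Γ.dist v (x • v0) ≤ R → Γ.dist v (y • v0) ≤ R →
      Γ.dist v0 ((x⁻¹ * y) • v0) ≤ 2 * R := by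
    intro v x y hx hy
    rw [← dist_smul hc h.adj_smul x, ← mul_smul, mul_inv_cancel_left]
    have t1 := hc.dist_triangle (u := x • v0) (v := v) (w := y • v0)
    rw [Γ.dist_comm] at hx
    omega
  have hs3 : ∀ (v : V) (x y z : G), Γ.dist v (x • v0) ≤ R → Γ.dist v (y • v0) ≤ R →
      Γ.dist v (z • v0) ≤ R → s (x⁻¹ * y) * s (y⁻¹ * z) = s (x⁻¹ * z) := by
    intro v x y z hx hy hz
    rw [← hs _ _ (hd v x y hx hy) (hd v y z hy hz)]
    · congr 1; group
    · rw [show x⁻¹ * y * (y⁻¹ * z) = x⁻¹ * z by group]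
      exact hd v x z hx hz
  have hs1 : s 1 = 1 := by
    have := hs 1 1 (by simp) (by simp) (by simp)
    rw [mul_one] at this
    exact (mul_eq_left.1 this.symm)
  have hbR : ∀ v, Γ.dist v (b v • v0) ≤ R := fun v => by have := hb v; omega
  have hbR' : ∀ v w, Γ.Adj v w → Γ.dist v (b w • v0) ≤ R := fun v w hvw => by
    have := hb w
    have t := hc.dist_triangle (u := v) (v := w) (w := b w • v0)
    have t3 := dist_eq_one_iff_adj.2 hvw
    omega
  obtain ⟨p, -, hp⟩ := integrate h.tree v0 (fun v w => s ((b v)⁻¹ * b w)) (by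
    intro v w hvw
    rw [hs3 v (b v) (b w) (b v) (hbR v) (hbR' v w hvw) (hbR v), inv_mul_cancel, hs1])
  have hstep : ∀ v w, Γ.Adj v w → ∀ x : G, Γ.dist v (x • v0) ≤ R → Γ.dist w (x • v0) ≤ R →
      p w * s ((b w)⁻¹ * x) = p v * s ((b v)⁻¹ * x) := by
    intro v w hvw x hx hx'
    rw [hp v w hvw, mul_assoc, hs3 v (b v) (b w) x (hbR v) (hbR' v w hvw) hx]
  let c : G → H := fun x => p (x • v0) * s ((b (x • v0))⁻¹ * x)
  have hcv : ∀ (n : ℕ) (x : G) (v : V), Γ.dist v (x • v0) = n → n ≤ R →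
      p v * s ((b v)⁻¹ * x) = c x := by
    intro n
    induction n with
    | zero =>
      intro x v hv _
      have : v = x • v0 := (hc.dist_eq_zero_iff).1 hv
      subst this
      rfl
    | succ n ih =>
      intro x v hv hn
      have hne : v ≠ x • v0 := by
        rintro rfl
        simp at hv
      have h1 := step_adj hc hne
      have h2 := step_dist hc hne
      rw [← ih x (step Γ v (x • v0)) (by omega) (by omega)]
      exact hstep _ _ h1.symm x (by omega) (by omega)
  have hcs : ∀ x a : G, Γ.dist v0 (a • v0) ≤ 2 * R → c (x * a) = c x * s a := by
    intro x a ha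
    obtain ⟨z, hz1, hz2⟩ := midpoint hc R (x • v0) ((x * a) • v0) (by
      rw [mul_smul, dist_smul hc h.adj_smul]; exact ha)
    rw [← hcv _ x z rfl hz1, ← hcv _ (x * a) z rfl hz2, mul_assoc, ← hs]
    · rw [mul_assoc]
    · exact hd z _ _ (hbR z) hz1
    · exact ha
    · rw [mul_assoc]
      exact hd z _ _ (hbR z) hz2
  have hcg : ∀ g x : G, c (x * g) = c x * ((c 1)⁻¹ * c g) := by
    intro g
    have hg : g ∈ Subgroup.closure {g : G | Γ.dist v0 (g • v0) ≤ 2 * R} := by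
      rw [closure_ball h v0 hKR (fun v => ⟨b v, hb v⟩)]; trivial
    induction hg using Subgroup.closure_induction with
    | mem a ha =>
      intro x
      have h2 := hcs 1 a ha
      rw [one_mul] at h2
      rw [h2, hcs x a ha, inv_mul_cancel_left]
    | one => simp
    | mul a d _ _ iha ihd =>
      intro x
      rw [← mul_assoc, ihd, iha, ihd a]
      group
    | inv a _ iha =>
      have h2 : ∀ x, c (x * a⁻¹) = c x * ((c 1)⁻¹ * c a)⁻¹ := by
        intro x
        have := iha (x * a⁻¹)
        rw [inv_mul_cancel_right] at this
        rw [this]; group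
      intro x
      have h3 := h2 1
      rw [one_mul] at h3
      rw [h2, h3]; group
  refine ⟨MonoidHom.mk' (fun g => (c 1)⁻¹ * c g) ?_, ?_⟩
  · intro a d
    rw [hcg d a]; group
  · intro a ha
    have h2 := hcs 1 a ha
    rw [one_mul] at h2
    change (c 1)⁻¹ * c a = s a
    rw [h2, inv_mul_cancel_left]

theorem good_ball (h : GT G Γ) (v0 : V) {K R : ℕ} (hKR : K + 1 ≤ R)
    (hK : ∀ v, ∃ g : G, Γ.dist v (g • v0) ≤ K) {m : ℕ} (e : Fin m → G)
    (he : Set.range e = {g : G | Γ.dist v0 (g • v0) ≤ 2 * R}) : Good e := by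
  classical
  refine ⟨by rw [he]; exact closure_ball h v0 hKR hK, fun s hs => ?_⟩
  have hmem : ∀ i, Γ.dist v0 (e i • v0) ≤ 2 * R := by
    intro i
    have : e i ∈ Set.range e := ⟨i, rfl⟩
    rw [he] at this
    exact this
  have hsurj : ∀ g : G, Γ.dist v0 (g • v0) ≤ 2 * R → ∃ i, e i = g := by
    intro g hg
    have : g ∈ Set.range e := by rw [he]; exact hg
    exact this
  obtain ⟨u, hu⟩ := hsurj 1 (by simp)
  have hwd : ∀ i j, e i = e j → s i = s j := by
    intro i j hij
    have h1 := hs u i j (by rw [hu, one_mul, hij])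
    have h2 := hs u j j (by rw [hu, one_mul])
    exact mul_left_cancel (h1.trans h2.symm)
  let s' : G → G := fun g => if hg : ∃ i, e i = g then s hg.choose else 1
  have hs' : ∀ i, s' (e i) = s i := by
    intro i
    have hg : ∃ j, e j = e i := ⟨i, rfl⟩
    simp only [s', dif_pos hg]
    exact hwd _ _ hg.choose_spec
  obtain ⟨ψ, hψ⟩ := extend_ball h v0 hKR hK s' (by
    intro a b ha hb hab
    obtain ⟨i, rfl⟩ := hsurj a ha
    obtain ⟨j, rfl⟩ := hsurj b hb
    obtain ⟨k, hk⟩ := hsurj _ hab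
    rw [← hk, hs', hs', hs', hs i j k hk.symm])
  exact ⟨ψ, fun i => (hψ _ (hmem i)).trans (hs' i)⟩

/-- every vertex is close to the orbit of the base point -/
theorem near_orbit (h : GT G Γ) {N : Subgroup G} {V0 : Finset V} (hV1 : ∀ v, ∃ n ∈ N, n • v ∈ V0)
    (v0 v : V) : ∃ g : G, Γ.dist v (g • v0) ≤ V0.card := by
  classical
  have hc := h.tree.1
  let d : V → ℕ := fun v => sInf (Set.range (fun g : G => Γ.dist v (g • v0)))
  have hd1 : ∀ v, ∃ g : G, Γ.dist v (g • v0) = d v := fun v =>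
    Nat.sInf_mem (s := Set.range (fun g : G => Γ.dist v (g • v0))) ⟨_, 1, rfl⟩
  have hd2 : ∀ v (g : G), d v ≤ Γ.dist v (g • v0) := fun v g =>
    Nat.sInf_le (s := Set.range (fun g : G => Γ.dist v (g • v0))) ⟨g, rfl⟩
  have hdi : ∀ (g : G) v, d (g • v) ≤ d v := by
    intro g v
    obtain ⟨k, hk⟩ := hd1 v
    have := hd2 (g • v) (g * k)
    rw [mul_smul, dist_smul hc h.adj_smul, hk] at this
    exact this
  have hdi' : ∀ (g : G) v, d (g • v) = d v := fun g v =>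
    le_antisymm (hdi g v) (by have := hdi g⁻¹ (g • v); rwa [inv_smul_smul] at this)
  have hall : ∀ (n : ℕ) v, d v = n → ∀ j ≤ n, ∃ w, d w = j := by
    intro n
    induction n with
    | zero => intro v hv j hj; exact ⟨v, by omega⟩
    | succ n ih =>
      intro v hv j hj
      by_cases e : j = n + 1
      · exact ⟨v, by omega⟩
      obtain ⟨g, hg⟩ := hd1 v
      have hne : v ≠ g • v0 := by
        intro e2
        rw [← e2, SimpleGraph.dist_self] at hg
        omega
      have h2 := step_dist hc hne
      have h3 := hd2 (step Γ v (g • v0)) g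
      obtain ⟨g', hg'⟩ := hd1 (step Γ v (g • v0))
      have h4 := hd2 v g'
      have t := hc.dist_triangle (u := v) (v := step Γ v (g • v0)) (w := g' • v0)
      have t3 := dist_eq_one_iff_adj.2 (step_adj hc hne)
      exact ih (step Γ v (g • v0)) (by omega) j (by omega)
  obtain ⟨g, hg⟩ := hd1 v
  refine ⟨g, ?_⟩
  rw [hg]
  have hsub : Finset.range (d v + 1) ⊆ V0.image d := by
    intro j hj
    obtain ⟨w, hw⟩ := hall _ v rfl j (by simpa [Nat.lt_succ_iff] using hj)
    obtain ⟨n, -, hn⟩ := hV1 w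
    exact Finset.mem_image.2 ⟨_, hn, by rw [hdi', hw]⟩
  have h1 := (Finset.card_le_card hsub).trans Finset.card_image_le
  rw [Finset.card_range] at h1
  omega

theorem ball_card (h : GT G Γ) {L : ℕ} (hL : ∀ v, (nb h v).card ≤ L) (v0 : V) (r : ℕ) :
    ∃ B : Finset V, B.card ≤ (L + 1) ^ r ∧ ∀ v, Γ.dist v0 v ≤ r → v ∈ B := by
  classical
  induction r with
  | zero =>
    refine ⟨{v0}, by simp, fun v hv => ?_⟩
    have : v0 = v := (h.tree.1.dist_eq_zero_iff).1 (by omega)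
    simp [this]
  | succ r ih =>
    obtain ⟨B, hB, hB'⟩ := ih
    refine ⟨B.biUnion (fun v => insert v (nb h v)), ?_, ?_⟩
    · refine (Finset.card_biUnion_le_card_mul _ _ (L + 1) (fun v _ => ?_)).trans ?_
      · exact (Finset.card_insert_le _ _).trans (by have := hL v; omega)
      · rw [pow_succ]
        exact Nat.mul_le_mul_right _ hB
    · intro v hv
      rw [Finset.mem_biUnion]
      by_cases e : v = v0
      · subst e
        exact ⟨v, hB' v (by simp), Finset.mem_insert_self _ _⟩
      · have h2 := step_dist h.tree.1 e
        refine ⟨step Γ v v0, hB' _ ?_, ?_⟩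
        · rw [Γ.dist_comm] at hv ⊢
          omega
        · rw [Finset.mem_insert, mem_nb]
          exact Or.inr (step_adj h.tree.1 e).symm

theorem sigma_card (h : GT G Γ) {N : Subgroup G} [N.FiniteIndex]
    (hfree : ∀ n ∈ N, ∀ v : V, n • v = v → n = 1) {L : ℕ} (hL : ∀ v, (nb h v).card ≤ L) (v0 : V)
    (r : ℕ) : ∃ e : Fin ((L + 1) ^ r * N.index) → G, Set.range e = {g : G | Γ.dist v0 (g • v0) ≤ r} := by
  classical
  have : Fintype (G ⧸ N) := Fintype.ofFinite _
  obtain ⟨B, hB, hB'⟩ := ball_card h hL v0 r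
  let f : G → V × (G ⧸ N) := fun g => (g • v0, ((g⁻¹ : G) : G ⧸ N))
  have hinj : Function.Injective f := by
    intro g g' hgg
    simp only [f, Prod.mk.injEq] at hgg
    obtain ⟨e1, e2⟩ := hgg
    rw [QuotientGroup.eq, inv_inv] at e2
    have := hfree _ e2 (g' • v0) (by rw [mul_smul, inv_smul_smul, e1])
    exact mul_inv_eq_one.1 this
  let S : Set G := {g : G | Γ.dist v0 (g • v0) ≤ r}
  have hmaps : ∀ g ∈ S, f g ∈ (B ×ˢ (Finset.univ : Finset (G ⧸ N))) := fun g hg =>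
    Finset.mem_product.2 ⟨hB' _ hg, Finset.mem_univ _⟩
  have hSfin : S.Finite := Set.Finite.of_finite_image
    ((B ×ˢ (Finset.univ : Finset (G ⧸ N))).finite_toSet.subset (by
      rintro _ ⟨g, hg, rfl⟩
      exact hmaps g hg)) hinj.injOn
  have hcard : hSfin.toFinset.card ≤ (L + 1) ^ r * N.index := by
    refine (Finset.card_le_card_of_injOn (t := B ×ˢ (Finset.univ : Finset (G ⧸ N))) f
      (fun g hg => hmaps g (by simpa using hg)) hinj.injOn).trans ?_
    rw [Finset.card_product, Finset.card_univ, ← Nat.card_eq_fintype_card]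
    exact Nat.mul_le_mul_right _ hB
  have : Nonempty hSfin.toFinset := ⟨⟨1, by simp [S]⟩⟩
  obtain ⟨ι⟩ := Function.Embedding.nonempty_of_card_le (α := hSfin.toFinset)
    (β := Fin ((L + 1) ^ r * N.index)) (by simpa using hcard)
  refine ⟨fun i => (Function.invFun ι i).1, ?_⟩
  ext g
  constructor
  · rintro ⟨i, rfl⟩
    have := (Function.invFun ι i).2
    rw [Set.Finite.mem_toFinset] at this
    exact this
  · intro hg
    refine ⟨ι ⟨g, hSfin.mem_toFinset.2 hg⟩, ?_⟩
    simp only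
    rw [Function.leftInverse_invFun ι.injective]

end present
end VF

namespace VF
open SimpleGraph

universe u
section final

theorem tf_of_free {G : Type*} [Group G] (N : Subgroup G) [IsFreeGroup N] :
    ∀ n ∈ N, n ≠ 1 → ¬ IsOfFinOrder n := by
  intro n hn hne hfin
  have h1 : IsOfFinOrder (⟨n, hn⟩ : N) := by
    rw [isOfFinOrder_iff_pow_eq_one] at hfin ⊢
    obtain ⟨k, hk, e⟩ := hfin
    exact ⟨k, hk, Subtype.ext (by simpa using e)⟩
  rw [isOfFinOrder_iff_pow_eq_one] at h1
  obtain ⟨k, hk, e⟩ := h1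
  let f := IsFreeGroup.toFreeGroup N
  have h2 : f ⟨n, hn⟩ ^ k = 1 := by rw [← map_pow, e, map_one]
  have h3 : f ⟨n, hn⟩ = 1 := by
    exact (pow_eq_one_iff_left hk.ne').1 h2
  have h4 : (⟨n, hn⟩ : N) = 1 := f.injective (by rw [h3, map_one])
  exact hne (congrArg Subtype.val h4)

variable {G G' : Type u} [Group G] [Group G']

theorem dist_pow {V : Type u} [MulAction G V] {Γ : SimpleGraph V} (h : GT G Γ) (n : G) (x : V) (M : ℕ) :
    Γ.dist x (n ^ M • x) ≤ M * Γ.dist x (n • x) := by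
  induction M with
  | zero => simp
  | succ M ih =>
    have t := h.tree.1.dist_triangle (u := x) (v := n ^ M • x) (w := n ^ (M + 1) • x)
    rw [pow_succ, mul_smul, dist_smul h.tree.1 h.adj_smul] at t
    rw [pow_succ, mul_smul, add_mul, one_mul]
    omega

/-- the uniform statement on trees -/
theorem win_types (N : Subgroup G) [N.FiniteIndex] (htf : ∀ n ∈ N, n ≠ 1 → ¬ IsOfFinOrder n)
    {S : Finset G} (hS : Subgroup.closure (S : Set G) = N) {M : ℕ} (hM : 0 < M) :
    ∃ F : Finset G, (1 : G) ∉ F ∧ ∀ (V : Type u) (_ : MulAction G V) (Γ : SimpleGraph V), GT G Γ →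
      ∀ n ∈ N, n ≠ 1 → Win N Γ n → ∃ (g : G) (σ : G ≃* G), ∃ f ∈ F, σ f = g⁻¹ * n ^ M * g := by
  set K := 8 * S.card + 2 * N.index with hKdef
  set L := 2 * (K + S.card) with hLdef
  set R := K + 1 + M * L with hRdef
  obtain ⟨F, hF1, hF⟩ := types G ((L + 1) ^ (2 * R) * N.index)
  refine ⟨F, hF1, ?_⟩
  intro V0' act0 Γ0 h0 n hn hne hw0
  obtain ⟨V, act, Γ, h, hw, hr⟩ := reduce h0 hw0
  have hfree : ∀ n ∈ N, ∀ v : V, n • v = v → n = 1 := fun n hn v hv => free_act h htf hn hv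
  obtain ⟨V0, hV1, hV2⟩ := transversal h N
  have hVc := vert_bound h hr hfree hV1 hV2 hS
  have heul := euler h hfree hV1 hV2 hS
  obtain ⟨x, hx⟩ := win_dist h hV1 hw
  have hxL : Γ.dist x (n • x) ≤ L := by omega
  have hL : ∀ v, (nb h v).card ≤ L := by
    intro v
    obtain ⟨m, -, hm⟩ := hV1 v
    have h1 : (nb h (m • v)).card ≤ ∑ v ∈ V0, (nb h v).card :=
      Finset.single_le_sum (f := fun v => (nb h v).card) (fun _ _ => Nat.zero_le _) hm
    rw [card_nb_smul] at h1
    rw [Finset.card_sigma] at heul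
    omega
  have hK : ∀ v, ∃ g : G, Γ.dist v (g • x) ≤ K := by
    intro v
    obtain ⟨g, hg⟩ := near_orbit h hV1 x v
    exact ⟨g, by omega⟩
  obtain ⟨e, he⟩ := sigma_card h hfree hL x (2 * R)
  have hgood : Good e := good_ball h x (by omega) hK e he
  have hmem : n ^ M ∈ Set.range e := by
    rw [he]
    change Γ.dist x (n ^ M • x) ≤ 2 * R
    have h1 := dist_pow h n x M
    have h2 := Nat.mul_le_mul_left M hxL
    omega
  obtain ⟨i, hi⟩ := hmem
  obtain ⟨σ, f, hf, hσ⟩ := hF e hgood i (by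
    rw [hi]
    intro h1
    exact htf n hn hne (isOfFinOrder_iff_pow_eq_one.2 ⟨M, hM, h1⟩))
  exact ⟨1, σ, f, hf, by rw [hσ, hi]; simp⟩

theorem main_same (hfg : Group.FG G) (hfg' : Group.FG G') (N : Subgroup G) [N.FiniteIndex]
    [IsFreeGroup N] (H : Subgroup G') [H.FiniteIndex] [IsFreeGroup H] :
    ∃ F : Finset G, (1 : G) ∉ F ∧
      ∀ φ : G →* G', ¬ Function.Injective φ → ∃ σ : G ≃* G, ∃ f ∈ F, φ (σ f) = 1 := by
  classical
  have htf := tf_of_free N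
  have htf' := tf_of_free H
  obtain ⟨V1, a1, Γ1, hΓ1⟩ := exists_tree hfg N
  obtain ⟨V, aV, Γ, c, hΓ, hcol⟩ := bary hΓ1
  obtain ⟨T1, b1, Θ1, hΘ1⟩ := exists_tree hfg' H
  obtain ⟨T, bT, Θ, c', hΘ, hcol'⟩ := bary hΘ1
  obtain ⟨S, hS⟩ : N.FG := by
    have : Group.FG N := Subgroup.fg_of_index_ne_zero N
    exact (Group.fg_iff_subgroup_fg N).1 this
  have hMpos : 0 < H.index.factorial := Nat.factorial_pos _
  obtain ⟨F1, hF1, hF1'⟩ := win_types N htf hS hMpos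
  obtain ⟨D, hD, hD'⟩ := hΓ.fin_vert
  have hFFfin : (⋃ v ∈ D, {g : G | g • v = v}).Finite := hD.biUnion (fun v _ => hΓ.fin_stab v)
  refine ⟨F1 ∪ hFFfin.toFinset.filter (fun g => g ≠ 1), by simp [hF1], ?_⟩
  intro φ hφ
  rcases minimize (φ := φ) htf hΘ hcol' hΓ with hker | ⟨W, aW, Δ, hΔ, n, hn, hne, hw, t, ht⟩
  · -- finite kernel
    have hkfin : (φ.ker : Set G).Finite := by
      have : Set.InjOn (fun g : G => (g : G ⧸ N)) (φ.ker : Set G) := by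
        intro a ha b hb hab
        have hab : a⁻¹ * b ∈ N := QuotientGroup.eq.1 hab
        have := hker _ hab (by
          rw [map_mul, map_inv, (MonoidHom.mem_ker).1 ha, (MonoidHom.mem_ker).1 hb]; simp)
        exact inv_mul_eq_one.1 this
      exact Set.Finite.of_finite_image (Set.toFinite _) this
    obtain ⟨x, hx⟩ := exists_fixed hΓ.tree hΓ.adj_smul hcol φ.ker hkfin
    obtain ⟨k, hk⟩ := hD' x
    have hnt : ∃ g ∈ φ.ker, g ≠ 1 := by
      by_contra hcon
      push Not at hcon
      apply hφ
      rw [injective_iff_map_eq_one]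
      exact fun a ha => hcon a ha
    obtain ⟨g, hg, hg1⟩ := hnt
    refine ⟨MulEquiv.refl G, g, ?_, hg⟩
    rw [Finset.mem_union, Finset.mem_filter, Set.Finite.mem_toFinset]
    refine Or.inr ⟨Set.mem_biUnion hk ?_, hg1⟩
    change g • k • x = k • x
    have h1 : k⁻¹ * g * k⁻¹⁻¹ ∈ φ.ker := φ.normal_ker.conj_mem g hg k⁻¹
    have h2 := hx _ h1
    rw [inv_inv, mul_smul, mul_smul, inv_smul_eq_iff] at h2
    exact h2
  · obtain ⟨g, σ, f, hf, hσ⟩ := hF1' W aW Δ hΔ n hn hne hw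
    refine ⟨σ, f, Finset.mem_union_left _ hf, ?_⟩
    have hfin : IsOfFinOrder (φ n) := by
      have h1 : Set.Finite (Set.range fun k : ℕ => (φ n) ^ k) := by
        refine (hΘ.fin_stab t).subset ?_
        rintro _ ⟨k, rfl⟩
        change (φ n) ^ k • t = t
        induction k with
        | zero => simp
        | succ k ih => rw [pow_succ, mul_smul, ht, ih]
      by_contra hinf
      exact (Set.infinite_range_of_injective (injective_pow_iff_not_isOfFinOrder.2 hinf)) h1
    have hH : (φ n) ^ H.index.factorial ∈ H :=
      H.pow_mem_of_index_ne_zero_of_dvd Subgroup.FiniteIndex.index_ne_zero _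
        (fun m hm hm' => Nat.dvd_factorial hm hm')
    have h1 : (φ n) ^ H.index.factorial = 1 := by
      by_contra hcon
      exact htf' _ hH hcon hfin.pow
    rw [hσ, map_mul, map_mul, map_pow, h1]
    simp

theorem vf_equiv {G G' : Type*} [Group G] [Group G'] (e : G ≃* G') (N : Subgroup G)
    [hN : N.FiniteIndex] [hf : IsFreeGroup N] :
    ∃ N' : Subgroup G', N'.FiniteIndex ∧ Nonempty (IsFreeGroup N') := by
  refine ⟨N.map (e : G →* G'), ⟨?_⟩, ⟨?_⟩⟩
  · rw [Subgroup.index_map_equiv]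
    exact hN.index_ne_zero
  · exact IsFreeGroup.ofMulEquiv (e.subgroupMap N)

end final
end VF

namespace VF
universe u v
theorem main {G : Type u} {G' : Type v} [Group G] [Group G']
    (hfg : Group.FG G) (hfg' : Group.FG G')
    (hvf : ∃ H : Subgroup G, H.FiniteIndex ∧ Nonempty (IsFreeGroup H))
    (hvf' : ∃ H : Subgroup G', H.FiniteIndex ∧ Nonempty (IsFreeGroup H)) :
    ∃ F : Finset G, (1 : G) ∉ F ∧
      ∀ φ : G →* G', ¬ Function.Injective φ →
        ∃ σ : G ≃* G, ∃ f ∈ F, φ (σ f) = 1 := by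
  classical
  obtain ⟨N, hN, ⟨hNf⟩⟩ := hvf
  obtain ⟨H, hH, ⟨hHf⟩⟩ := hvf'
  let e : ULift.{v} G ≃* G := MulEquiv.ulift
  let e' : ULift.{u} G' ≃* G' := MulEquiv.ulift
  obtain ⟨N1, hN1, ⟨hN1f⟩⟩ := VF.vf_equiv e.symm N
  obtain ⟨H1, hH1, ⟨hH1f⟩⟩ := VF.vf_equiv e'.symm H
  have hfg1 : Group.FG (ULift.{v} G) := Group.fg_of_surjective (f := e.symm.toMonoidHom) e.symm.surjective
  have hfg1' : Group.FG (ULift.{u} G') := Group.fg_of_surjective (f := e'.symm.toMonoidHom) e'.symm.surjective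
  obtain ⟨F, hF1, hF⟩ := VF.main_same hfg1 hfg1' N1 H1
  refine ⟨F.image e, ?_, ?_⟩
  · intro h
    obtain ⟨x, hx, hx1⟩ := Finset.mem_image.1 h
    have : x = 1 := e.injective (by rw [hx1, map_one])
    exact hF1 (this ▸ hx)
  · intro φ hφ
    obtain ⟨σ, f, hf, hσ⟩ := hF ((e'.symm.toMonoidHom.comp φ).comp e.toMonoidHom) (by
      intro hinj
      apply hφ
      intro a b hab
      have := hinj (a₁ := e.symm a) (a₂ := e.symm b) (by simp [hab])
      exact e.symm.injective this)
    refine ⟨(e.symm.trans σ).trans e, e f, Finset.mem_image_of_mem _ hf, ?_⟩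
    have hσ' : e'.symm (φ (e (σ f))) = 1 := hσ
    have : φ (e (σ f)) = 1 := e'.symm.injective (by rw [hσ', map_one])
    simpa using this

end VF

/-- For finitely generated virtually free groups `G`, `G'`, there is a finite subset
`F` of `G \ {1}` such that every non-injective homomorphism `φ : G → G'` kills an
element of `σ(F)` for some automorphism `σ` of `G`. -/
theorem exists_finite_test_set_for_noninjective
    (G : Type*) (G' : Type*) [Group G] [Group G']
    (hfg : Group.FG G) (hfg' : Group.FG G')
    (hvf : VirtuallyFree G) (hvf' : VirtuallyFree G') :
    ∃ F : Finset G, (1 : G) ∉ F ∧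
      ∀ φ : G →* G', ¬ Function.Injective φ →
        ∃ σ : G ≃* G, ∃ f ∈ F, φ (σ f) = 1 := by
  exact VF.main hfg hfg' hvf hvf'
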